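/- Suppose σ_n → ∞. Then for every 1 ≤ p < ∞ we have W_p(dF_n, dΦ) = O(σ_n^{−1}), where dF_n is the law of (S_n − E[S_n])/σ_n and dΦ is the standard normal law; that is, there is a constant C_p with W_p(dF_n, dΦ) ≤ C_p σ_n^{−1} for all n. -/

import Mathlib

open MeasureTheory ProbabilityTheory Filter
open scoped ENNReal NNReal

noncomputable section

variable {Ω : Type*} [MeasurableSpace Ω] {𝒳 : ℕ → Type*} [∀ j, MeasurableSpace (𝒳 j)]

/-- The σ-algebra generated by `X_0, …, X_j`. -/
def pastSigma (X : ∀ j, Ω → 𝒳 j) (j : ℕ) : MeasurableSpace Ω :=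
  ⨆ i ∈ Finset.range (j + 1), MeasurableSpace.comap (X i) inferInstance

/-- `X` is an inhomogeneous Markov chain (on the probability space `(Ω, μ)`) whose `n`-step
transition probabilities from time `j` are given by the Markov kernels `κ j n`: for every
measurable `Γ`, `ℙ(X_{j+n} ∈ Γ | X_0, …, X_j) = (κ j n) (X j) Γ` a.s. -/
structure IsInhomMarkov (μ : Measure Ω) (X : ∀ j, Ω → 𝒳 j)
    (κ : ∀ j n, Kernel (𝒳 j) (𝒳 (j + n))) : Prop where
  meas : ∀ j, Measurable (X j)
  isMarkovKernel : ∀ j n, IsMarkovKernel (κ j n)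
  cond : ∀ j n (Γ : Set (𝒳 (j + n))), MeasurableSet Γ →
    (μ[(fun ω => Γ.indicator (fun _ => (1 : ℝ)) (X (j + n) ω)) | pastSigma X j])
      =ᵐ[μ] fun ω => (κ j n (X j ω) Γ).toReal

/-- The standard normal distribution function `Φ`. -/
def stdNormalCDF (t : ℝ) : ℝ := (gaussianReal 0 1 (Set.Iic t)).toReal

/-- The `p`-th Wasserstein distance between two measures on `ℝ`, defined through couplings
(equivalently, through pairs of random variables with the prescribed marginals). -/
def wassersteinDist (p : ℝ) (μ ν : Measure ℝ) : ℝ≥0∞ :=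
  ⨅ (ρ : Measure (ℝ × ℝ)) (_ : ρ.map Prod.fst = μ) (_ : ρ.map Prod.snd = ν),
    (∫⁻ z, ENNReal.ofReal (|z.1 - z.2| ^ p) ∂ρ) ^ (1 / p)


section
namespace WCLT

lemma dslope_step (f : ℂ → ℂ) (R r M : ℝ) (E : ℂ → ℝ) (hr : 0 < r) (hrR : r < R)
    (hf : DifferentiableOn ℂ f (Metric.ball 0 R)) (hE : ∀ z, 1 ≤ E z)
    (h1 : ∀ z, ‖z‖ ≤ r → ‖f z‖ ≤ M) (h2 : ∀ z, ‖z‖ < R → ‖f z‖ ≤ M * E z) :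
    ∃ g : ℂ → ℂ, DifferentiableOn ℂ g (Metric.ball 0 R) ∧ (∀ z, f z = f 0 + z * g z) ∧
      (∀ z, ‖z‖ ≤ r → ‖g z‖ ≤ 2 / r * M) ∧ (∀ z, ‖z‖ < R → ‖g z‖ ≤ 2 / r * M * E z) := by
  have hM : 0 ≤ M := (norm_nonneg _).trans (h1 0 (by simpa using hr.le))
  have hd : DifferentiableOn ℂ (dslope f 0) (Metric.ball 0 R) :=
    (Complex.differentiableOn_dslope (Metric.ball_mem_nhds _ (hr.trans hrR))).2 hf
  have hid : ∀ z, f z = f 0 + z * dslope f 0 z := by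
    intro z
    have := sub_smul_dslope f 0 z
    simp only [sub_zero, smul_eq_mul] at this
    rw [this]; ring
  have hbd : ∀ z, z ≠ 0 → ‖dslope f 0 z‖ = ‖f z - f 0‖ / ‖z‖ := by
    intro z hz
    have : f z - f 0 = z * dslope f 0 z := by rw [hid z]; ring
    rw [this, norm_mul]
    field_simp [norm_ne_zero_iff.2 hz]
  have hbig : ∀ z, r ≤ ‖z‖ → ∀ N, ‖f z‖ ≤ M * N → 1 ≤ N → ‖dslope f 0 z‖ ≤ 2 / r * M * N := by
    intro z hz N hN hN1
    have hz0 : z ≠ 0 := by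
      rintro rfl
      simp at hz; linarith
    rw [hbd z hz0, div_le_iff₀ (by positivity)]
    have e1 : ‖f z - f 0‖ ≤ 2 * M * N := by
      have := norm_sub_le (f z) (f 0)
      have h0 := h1 0 (by simpa using hr.le)
      nlinarith
    have e2 : 2 / r * M * N * r = 2 * M * N := by field_simp
    have e3 : 2 / r * M * N * r ≤ 2 / r * M * N * ‖z‖ := by gcongr
    linarith
  have hsmall : ∀ z, ‖z‖ ≤ r → ‖dslope f 0 z‖ ≤ 2 / r * M := by
    intro z hz
    refine Complex.norm_le_of_forall_mem_frontier_norm_le (U := Metric.ball 0 r) Metric.isBounded_ball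
      ?_ ?_ (z := z) ?_
    · refine DifferentiableOn.diffContOnCl_ball (U := Metric.ball 0 R) hd ?_
      exact Metric.closedBall_subset_ball hrR
    · intro w hw
      rw [frontier_ball _ hr.ne'] at hw
      have hw' : ‖w‖ = r := by simpa using hw
      have := hbig w hw'.ge 1 (by simpa using h1 w hw'.le) le_rfl
      simpa using this
    · rw [closure_ball _ hr.ne']
      simpa using hz
  refine ⟨dslope f 0, hd, hid, hsmall, ?_⟩
  intro z hz
  rcases le_total ‖z‖ r with h | h
  · refine (hsmall z h).trans ?_
    have := hE z
    have h3 : 0 ≤ 2 / r * M := by positivity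
    nlinarith
  · exact hbig z h _ (h2 z hz) (hE z)

lemma expand (J : ℕ) : ∀ (f : ℂ → ℂ) (R r M : ℝ) (E : ℂ → ℝ), 0 < r → r < R →
    DifferentiableOn ℂ f (Metric.ball 0 R) → (∀ z, 1 ≤ E z) →
    (∀ z, ‖z‖ ≤ r → ‖f z‖ ≤ M) → (∀ z, ‖z‖ < R → ‖f z‖ ≤ M * E z) →
    ∃ (b : ℕ → ℂ) (g : ℂ → ℂ), DifferentiableOn ℂ g (Metric.ball 0 R) ∧
      (∀ z, f z = ∑ j ∈ Finset.range J, b j * z ^ j + z ^ J * g z) ∧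
      (∀ j, j < J → ‖b j‖ ≤ (2 / r) ^ j * M) ∧
      (∀ z, ‖z‖ < R → ‖g z‖ ≤ (2 / r) ^ J * M * E z) := by
  induction J with
  | zero =>
    intro f R r M E hr hrR hf hE h1 h2
    exact ⟨fun _ => 0, f, hf, by simp, by simp, by simpa using h2⟩
  | succ J ih =>
    intro f R r M E hr hrR hf hE h1 h2
    obtain ⟨g, hg, hid, hg1, hg2⟩ := dslope_step f R r M E hr hrR hf hE h1 h2
    obtain ⟨b, h, hh, hid', hb, hh'⟩ := ih g R r (2 / r * M) E hr hrR hg hE hg1 hg2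
    refine ⟨fun j => Nat.casesOn j (f 0) b, h, hh, ?_, ?_, ?_⟩
    · intro z
      rw [hid z, hid' z, Finset.sum_range_succ']
      simp only [mul_add, Finset.mul_sum, pow_succ]
      have : ∀ x, z * (b x * z ^ x) = b x * (z ^ x * z) := fun x => by ring
      simp only [this]
      simp
      ring
    · intro j hj
      cases j with
      | zero => simpa using h1 0 (by simpa using hr.le)
      | succ j =>
        refine (hb j (by omega)).trans (le_of_eq ?_)
        ring
    · intro z hz
      refine (hh' z hz).trans (le_of_eq ?_)
      ring

end WCLT

end


section
namespace WCLT

lemma log_expand (K δ : ℝ) (hK : 0 < K) (hδ : 0 < δ) : ∃ C : ℝ, 0 < C ∧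
    ∀ (σ : ℝ) (φ : ℂ → ℂ), 1 ≤ σ → Differentiable ℂ φ → φ 0 = 1 → deriv φ 0 = 0 →
      HasDerivAt (deriv φ) ((σ : ℂ) ^ 2) 0 → (∀ z, ‖z‖ < δ → φ z ≠ 0) →
      (∀ z, ‖z‖ < δ → ‖φ z‖ ≤ Real.exp (K * σ ^ 2)) →
      ∃ g : ℂ → ℂ, DifferentiableOn ℂ g (Metric.ball 0 (δ / 2)) ∧
        (∀ z, ‖z‖ < δ / 2 → φ z = Complex.exp ((σ : ℂ) ^ 2 * z ^ 2 / 2 + z ^ 3 * g z)) ∧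
        (∀ z, ‖z‖ < δ / 2 → ‖g z‖ ≤ C * σ ^ 2) := by
  refine ⟨(2 / (δ / 4)) ^ 3 * (2 * K), by positivity, ?_⟩
  intro σ φ hσ hφ h0 h1 h2 hnv hb
  have hd : DifferentiableOn ℂ (fun z => deriv φ z / φ z) (Metric.ball 0 δ) := by
    intro z hz
    refine DifferentiableAt.differentiableWithinAt ?_
    refine DifferentiableAt.div ?_ (hφ z) (hnv z (by simpa using hz))
    exact (hφ.differentiableOn.deriv isOpen_univ).differentiableAt (by simp)
  obtain ⟨L, hL0, hL⟩ := hd.isExactOn_ball.with_val_at 0 0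
  have hexp : ∀ z, ‖z‖ < δ → φ z = Complex.exp (L z) := by
    have hc : ∀ z ∈ Metric.ball (0 : ℂ) δ,
        HasDerivAt (fun z => φ z * Complex.exp (- L z)) 0 z := by
      intro z hz
      have e1 := (hφ z).hasDerivAt.mul ((hL z hz).neg.cexp)
      refine e1.congr_deriv ?_
      have := hnv z (by simpa using hz)
      simp only [Pi.neg_apply]
      field_simp
      ring
    intro z hz
    have this := (convex_ball (0 : ℂ) δ).is_const_of_fderivWithin_eq_zero (𝕜 := ℂ)
      (f := fun z => φ z * Complex.exp (- L z))
      (fun z hz => (hc z hz).differentiableAt.differentiableWithinAt)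
      (fun z hz => by
        rw [fderivWithin_of_isOpen Metric.isOpen_ball hz]
        have := (hc z hz).hasFDerivAt.fderiv
        rw [this]; ext; simp) (x := z) (y := 0) (by simpa using hz) (by simpa using hδ)
    simp only [hL0, h0, neg_zero, Complex.exp_zero, mul_one] at this
    rw [Complex.exp_neg] at this
    have h3 := Complex.exp_ne_zero (L z)
    field_simp at this
    exact this
  have hre : ∀ z ∈ Metric.ball (0 : ℂ) δ, (L z).re ≤ K * σ ^ 2 := by
    intro z hz
    have hz' : ‖z‖ < δ := by simpa using hz
    have := hb z hz'
    rw [hexp z hz', Complex.norm_exp] at this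
    exact Real.exp_le_exp.1 this
  have hLd : DifferentiableOn ℂ L (Metric.ball 0 δ) :=
    fun z hz => (hL z hz).differentiableAt.differentiableWithinAt
  have hLb : ∀ z, ‖z‖ < δ / 2 → ‖L z‖ ≤ 2 * K * σ ^ 2 := by
    intro z hz
    have := Complex.borelCaratheodory_zero (M := K * σ ^ 2) (by positivity) hLd hre hδ
      (z := z) (by simp; linarith) hL0
    refine this.trans ?_
    rw [div_le_iff₀ (by linarith)]
    have h4 : 0 < K * σ ^ 2 := by positivity
    nlinarith [norm_nonneg z]
  obtain ⟨b, g, hg, hid, -, hgb⟩ := expand 3 L (δ / 2) (δ / 4) (2 * K * σ ^ 2) (fun _ => 1)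
    (by linarith) (by linarith) (hLd.mono (Metric.ball_subset_ball (by linarith)))
    (fun _ => le_rfl) (fun z hz => hLb z (by linarith)) (fun z hz => by simpa using hLb z hz)
  have hb0 : b 0 = 0 := by
    have := hid 0
    simpa [hL0, Finset.sum_range_succ] using this.symm
  have hball : Metric.ball (0 : ℂ) (δ / 2) ∈ nhds (0 : ℂ) := Metric.ball_mem_nhds _ (by linarith)
  have hLder : ∀ z ∈ Metric.ball (0 : ℂ) (δ / 2),
      HasDerivAt L (b 1 + 2 * b 2 * z + 3 * z ^ 2 * g z + z ^ 3 * deriv g z) z := by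
    intro z hz
    have hgz : HasDerivAt g (deriv g z) z :=
      (hg.differentiableAt (Metric.isOpen_ball.mem_nhds hz)).hasDerivAt
    have hfun : L = fun z => b 1 * z + b 2 * z ^ 2 + z ^ 3 * g z := by
      funext w
      rw [hid w]; simp [Finset.sum_range_succ, hb0]
    rw [hfun]
    have := (((hasDerivAt_id z).const_mul (b 1)).add ((hasDerivAt_pow 2 z).const_mul (b 2))).add
      ((hasDerivAt_pow 3 z).mul hgz)
    refine this.congr_deriv ?_
    simp
    ring
  have heq : ∀ z ∈ Metric.ball (0 : ℂ) (δ / 2),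
      b 1 + 2 * b 2 * z + 3 * z ^ 2 * g z + z ^ 3 * deriv g z = deriv φ z / φ z := by
    intro z hz
    exact (hLder z hz).unique (hL z (Metric.ball_subset_ball (by linarith) hz))
  have hb1 : b 1 = 0 := by
    have := heq 0 (by simp; linarith)
    simpa [h1] using this
  have hb2 : b 2 = (σ : ℂ) ^ 2 / 2 := by
    have e1 : HasDerivAt (fun z => deriv φ z / φ z) ((σ : ℂ) ^ 2) 0 := by
      have := h2.div (hφ 0).hasDerivAt (by simp [h0])
      refine this.congr_deriv ?_
      simp [h0, h1]
    have hg0 : HasDerivAt g (deriv g 0) 0 := (hg.differentiableAt hball).hasDerivAt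
    have hg1 : HasDerivAt (deriv g) (deriv (deriv g) 0) 0 :=
      ((hg.deriv Metric.isOpen_ball).differentiableAt hball).hasDerivAt
    have e2 : HasDerivAt (fun z => b 1 + 2 * b 2 * z + 3 * z ^ 2 * g z + z ^ 3 * deriv g z)
        (2 * b 2) 0 := by
      have := ((((hasDerivAt_id (0 : ℂ)).const_mul (2 * b 2)).const_add (b 1)).add
        (((hasDerivAt_pow 2 (0 : ℂ)).const_mul 3).mul hg0)).add ((hasDerivAt_pow 3 (0 : ℂ)).mul hg1)
      refine this.congr_deriv ?_
      simp
    have e3 := (e2.congr_of_eventuallyEq (f₁ := fun z => deriv φ z / φ z)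
      (by filter_upwards [hball] with z hz using (heq z hz).symm)).unique e1
    rw [← e3]; ring
  refine ⟨g, hg, ?_, ?_⟩
  · intro z hz
    rw [hexp z (by linarith), hid z]
    simp [Finset.sum_range_succ, hb0, hb1, hb2]
    congr 1; ring
  · intro z hz
    refine (hgb z hz).trans (le_of_eq ?_)
    ring

/-- the local expansion of the characteristic function. -/
lemma char_expand (K δ : ℝ) (hK : 0 < K) (hδ : 0 < δ) (m : ℕ) : ∃ c₀ C : ℝ, 0 < c₀ ∧ c₀ < δ ∧ 0 < C ∧
    ∀ (σ : ℝ) (φ : ℂ → ℂ), 1 ≤ σ → Differentiable ℂ φ → φ 0 = 1 → deriv φ 0 = 0 →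
      HasDerivAt (deriv φ) ((σ : ℂ) ^ 2) 0 → (∀ z, ‖z‖ < δ → φ z ≠ 0) →
      (∀ z, ‖z‖ < δ → ‖φ z‖ ≤ Real.exp (K * σ ^ 2)) →
      ∃ b : ℕ → ℂ, (∀ j, j < 3 * m → ‖b j‖ ≤ C / σ) ∧
        (∀ u : ℝ, |u| ≤ c₀ * σ → ‖φ (u / σ * Complex.I) - Complex.exp (-(u : ℂ) ^ 2 / 2) *
          (1 + ∑ j ∈ Finset.range (3 * m), b j * (u * Complex.I) ^ (j + 3))‖ ≤
          C * (1 / σ) ^ m * (|u| ^ (3 * m + 3) * Real.exp (- u ^ 2 / 4))) ∧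
        (∀ u : ℝ, |u| ≤ c₀ * σ → ‖φ (u / σ)‖ ≤ Real.exp (u ^ 2)) := by
  obtain ⟨C₃, hC₃, hL⟩ := log_expand K δ hK hδ
  set c₁ : ℝ := min (δ / 4) (1 / (4 * C₃)) with hc₁
  have hc₁0 : 0 < c₁ := by positivity
  have hc₁1 : C₃ * c₁ ≤ 1 / 4 := by
    have : c₁ ≤ 1 / (4 * C₃) := min_le_right _ _
    calc C₃ * c₁ ≤ C₃ * (1 / (4 * C₃)) := by gcongr
      _ = 1 / 4 := by field_simp
  have hc₁2 : c₁ ≤ δ / 4 := min_le_left _ _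
  set M₀ : ℝ := C₃ * Real.exp (C₃ * c₁ ^ 3) with hM₀
  have hM₀0 : 0 < M₀ := by positivity
  set A : ℝ := 1 + 4 / c₁ with hA
  have hA1 : 1 ≤ A := by rw [hA]; have : 0 < 4 / c₁ := by positivity
                         linarith
  have hAc : 2 / (c₁ / 2) ≤ A := by
    have : 2 / (c₁ / 2) = 4 / c₁ := by field_simp; norm_num
    rw [this, hA]; linarith
  refine ⟨c₁ / 2, A ^ (3 * m) * M₀, by positivity, by linarith, by positivity, ?_⟩
  intro σ φ hσ hφ h0 h1 h2 hnv hb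
  obtain ⟨g, hg, hgφ, hgb⟩ := hL σ φ hσ hφ h0 h1 h2 hnv hb
  have hσ0 : 0 < σ := by linarith
  -- the cube root of σ
  obtain ⟨s, hs1, hs⟩ : ∃ s : ℝ, 1 ≤ s ∧ s ^ 3 = σ := by
    refine ⟨σ ^ (1 / 3 : ℝ), Real.one_le_rpow hσ (by norm_num), ?_⟩
    rw [← Real.rpow_natCast, ← Real.rpow_mul hσ0.le]; norm_num
  have hs0 : 0 < s := by linarith
  set B : ℂ → ℂ := fun z => g z * dslope Complex.exp 0 (z ^ 3 * g z) with hB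
  have hexp1 : ∀ w : ℂ, ‖dslope Complex.exp 0 w‖ ≤ Real.exp ‖w‖ := by
    intro w
    rcases eq_or_ne w 0 with rfl | hw
    · simp [dslope_same]
    · rw [dslope_of_ne _ hw, slope_def_field]
      simp only [Complex.exp_zero, sub_zero, norm_div]
      rw [div_le_iff₀ (by positivity)]
      have h := Complex.norm_exp_sub_sum_le_norm_mul_exp w 1
      simpa [mul_comm] using h
  have hBd : DifferentiableOn ℂ B (Metric.ball 0 (c₁)) := by
    have hg' : DifferentiableOn ℂ g (Metric.ball 0 c₁) :=
      hg.mono (Metric.ball_subset_ball (by linarith))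
    have hds : Differentiable ℂ (dslope Complex.exp 0) := by
      rw [← differentiableOn_univ, Complex.differentiableOn_dslope univ_mem]
      exact Complex.differentiable_exp.differentiableOn
    refine hg'.mul ?_
    exact hds.comp_differentiableOn ((differentiableOn_id.pow 3).mul hg')
  have hBb : ∀ z, ‖z‖ < c₁ → ‖B z‖ ≤ C₃ * σ ^ 2 * Real.exp (C₃ * σ ^ 2 * ‖z‖ ^ 3) := by
    intro z hz
    rw [hB]; simp only [norm_mul]
    have h4 := hgb z (by linarith)
    refine mul_le_mul h4 ((hexp1 _).trans (Real.exp_le_exp.2 ?_)) (norm_nonneg _) (by positivity)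
    rw [norm_mul, norm_pow]
    calc ‖z‖ ^ 3 * ‖g z‖ ≤ ‖z‖ ^ 3 * (C₃ * σ ^ 2) := by gcongr
      _ = _ := by ring
  have hr1 : c₁ / 2 / s ^ 2 ≤ c₁ / 2 := div_le_self (by positivity) (one_le_pow₀ hs1)
  obtain ⟨b, h, -, hid, hbb, hhb⟩ := expand (3 * m) B c₁ (c₁ / 2 / s ^ 2) (M₀ * σ ^ 2)
    (fun z => Real.exp (C₃ * σ ^ 2 * ‖z‖ ^ 3)) (by positivity) (by linarith) hBd
    (fun z => Real.one_le_exp (by positivity))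
    (fun z hz => by
      refine (hBb z (by linarith)).trans ?_
      rw [hM₀]
      have : C₃ * σ ^ 2 * ‖z‖ ^ 3 ≤ C₃ * c₁ ^ 3 := by
        have h5 : ‖z‖ ^ 3 ≤ (c₁ / 2 / s ^ 2) ^ 3 := by gcongr
        calc C₃ * σ ^ 2 * ‖z‖ ^ 3 ≤ C₃ * σ ^ 2 * (c₁ / 2 / s ^ 2) ^ 3 := by gcongr
          _ = C₃ * c₁ ^ 3 / 8 := by rw [← hs]; field_simp; norm_num
          _ ≤ _ := by
            have : 0 < C₃ * c₁ ^ 3 := by positivity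
            linarith
      calc C₃ * σ ^ 2 * Real.exp (C₃ * σ ^ 2 * ‖z‖ ^ 3)
          ≤ C₃ * σ ^ 2 * Real.exp (C₃ * c₁ ^ 3) := by gcongr
        _ = _ := by ring)
    (fun z hz => by
      refine (hBb z hz).trans ?_
      gcongr
      rw [hM₀]
      have : 1 ≤ Real.exp (C₃ * c₁ ^ 3) := Real.one_le_exp (by positivity)
      nlinarith)
  have hq : 2 / (c₁ / 2 / s ^ 2) ≤ A * s ^ 2 := by
    have : 2 / (c₁ / 2 / s ^ 2) = 2 / (c₁ / 2) * s ^ 2 := by field_simp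
    rw [this]; gcongr
  have hq0 : 0 ≤ 2 / (c₁ / 2 / s ^ 2) := by positivity
  refine ⟨fun j => b j / (σ : ℂ) ^ (j + 3), ?_, ?_, ?_⟩
  · intro j hj
    rw [norm_div, norm_pow, Complex.norm_real, Real.norm_of_nonneg hσ0.le,
      div_le_iff₀ (by positivity)]
    refine (hbb j hj).trans ?_
    calc (2 / (c₁ / 2 / s ^ 2)) ^ j * (M₀ * σ ^ 2) ≤ (A * s ^ 2) ^ j * (M₀ * σ ^ 2) := by gcongr
      _ = A ^ j * M₀ * σ ^ 2 * s ^ (2 * j) := by rw [mul_pow, ← pow_mul]; ring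
      _ ≤ A ^ (3 * m) * M₀ * σ ^ 2 * s ^ (3 * j) := by
        have i1 : A ^ j ≤ A ^ (3 * m) := pow_le_pow_right₀ hA1 hj.le
        have i2 : s ^ (2 * j) ≤ s ^ (3 * j) := pow_le_pow_right₀ hs1 (by omega)
        gcongr
      _ = A ^ (3 * m) * M₀ / σ * σ ^ (j + 3) := by
        have : s ^ (3 * j) = σ ^ j := by rw [pow_mul, hs]
        rw [this]; field_simp; ring
  · intro u hu
    set z : ℂ := u / σ * Complex.I with hz
    have hzn : ‖z‖ = |u| / σ := by
      rw [hz]; simp [abs_of_pos hσ0]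
    have hzl : ‖z‖ ≤ c₁ / 2 := by
      rw [hzn, div_le_iff₀ hσ0]; exact hu
    have hzc : ‖z‖ < c₁ := by linarith
    have hz2 : (σ : ℂ) ^ 2 * z ^ 2 / 2 = -(u : ℂ) ^ 2 / 2 := by
      have : (σ : ℂ) ≠ 0 := by exact_mod_cast hσ0.ne'
      rw [hz, mul_pow, Complex.I_sq]; field_simp
    have e1 : φ z = Complex.exp (-(u : ℂ) ^ 2 / 2) * (1 + z ^ 3 * B z) := by
      rw [hgφ z (by linarith), Complex.exp_add, hz2]
      congr 1
      have := sub_smul_dslope Complex.exp 0 (z ^ 3 * g z)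
      simp only [sub_zero, smul_eq_mul, Complex.exp_zero] at this
      rw [hB]
      linear_combination (-1) * this
    have e2 : ∀ j, b j / (σ : ℂ) ^ (j + 3) * (u * Complex.I) ^ (j + 3) = b j * z ^ (j + 3) := by
      intro j
      have : (σ : ℂ) ≠ 0 := by exact_mod_cast hσ0.ne'
      rw [hz]
      simp only [mul_pow, div_pow]
      field_simp
    have e3 : φ z - Complex.exp (-(u : ℂ) ^ 2 / 2) *
          (1 + ∑ j ∈ Finset.range (3 * m), b j / (σ : ℂ) ^ (j + 3) * (u * Complex.I) ^ (j + 3))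
        = Complex.exp (-(u : ℂ) ^ 2 / 2) * (z ^ (3 * m + 3) * h z) := by
      simp only [e2]
      rw [e1, hid z]
      have : z ^ 3 * (∑ j ∈ Finset.range (3 * m), b j * z ^ j + z ^ (3 * m) * h z)
        = ∑ j ∈ Finset.range (3 * m), b j * z ^ (j + 3) + z ^ (3 * m + 3) * h z := by
        rw [mul_add, Finset.mul_sum]
        congr 1
        · refine Finset.sum_congr rfl fun j _ => by ring
        · ring
      rw [this]; ring
    rw [e3, norm_mul, norm_mul, norm_pow, hzn]
    have e4 : ‖Complex.exp (-(u : ℂ) ^ 2 / 2)‖ = Real.exp (- u ^ 2 / 2) := by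
      rw [Complex.norm_exp]
      congr 1
      have : (-(u : ℂ) ^ 2 / 2) = ((- u ^ 2 / 2 : ℝ) : ℂ) := by push_cast; ring
      rw [this, Complex.ofReal_re]
    rw [e4]
    have e5 := hhb z hzc
    have e6 : C₃ * σ ^ 2 * ‖z‖ ^ 3 ≤ u ^ 2 / 4 := by
      calc C₃ * σ ^ 2 * ‖z‖ ^ 3 = C₃ * ‖z‖ * (σ * ‖z‖) ^ 2 := by ring
        _ = C₃ * ‖z‖ * u ^ 2 := by
          rw [hzn, mul_div_cancel₀ _ hσ0.ne', sq_abs]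
        _ ≤ 1 / 4 * u ^ 2 := by
          gcongr
          calc C₃ * ‖z‖ ≤ C₃ * c₁ := by gcongr
            _ ≤ _ := hc₁1
        _ = _ := by ring
    have e7 : ‖h z‖ ≤ A ^ (3 * m) * M₀ * σ ^ 2 * σ ^ (2 * m) * Real.exp (u ^ 2 / 4) := by
      refine e5.trans ?_
      calc (2 / (c₁ / 2 / s ^ 2)) ^ (3 * m) * (M₀ * σ ^ 2) * Real.exp (C₃ * σ ^ 2 * ‖z‖ ^ 3)
          ≤ (A * s ^ 2) ^ (3 * m) * (M₀ * σ ^ 2) * Real.exp (u ^ 2 / 4) := by gcongr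
        _ = _ := by
          have : (A * s ^ 2) ^ (3 * m) = A ^ (3 * m) * σ ^ (2 * m) := by
            rw [mul_pow, ← pow_mul, ← hs, ← pow_mul]; congr 2; ring
          rw [this]; ring
    have e8 : Real.exp (- u ^ 2 / 2) * Real.exp (u ^ 2 / 4) = Real.exp (- u ^ 2 / 4) := by
      rw [← Real.exp_add]; congr 1; ring
    calc Real.exp (- u ^ 2 / 2) * ((|u| / σ) ^ (3 * m + 3) * ‖h z‖)
        ≤ Real.exp (- u ^ 2 / 2) * ((|u| / σ) ^ (3 * m + 3) *
          (A ^ (3 * m) * M₀ * σ ^ 2 * σ ^ (2 * m) * Real.exp (u ^ 2 / 4))) := by gcongr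
      _ = A ^ (3 * m) * M₀ * (σ ^ 2 * σ ^ (2 * m) / σ ^ (3 * m + 3)) * (|u| ^ (3 * m + 3) *
          (Real.exp (- u ^ 2 / 2) * Real.exp (u ^ 2 / 4))) := by
            rw [div_pow]; ring
      _ ≤ A ^ (3 * m) * M₀ * (1 / σ) ^ m * (|u| ^ (3 * m + 3) * Real.exp (- u ^ 2 / 4)) := by
        rw [e8]
        gcongr
        rw [div_pow, one_pow, div_le_div_iff₀ (by positivity) (by positivity), one_mul,
          ← pow_add, ← pow_add]
        exact pow_le_pow_right₀ hσ (by omega)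
  · intro u hu
    set z : ℂ := u / σ with hz
    have hzn : ‖z‖ = |u| / σ := by
      rw [hz]; simp [abs_of_pos hσ0]
    have hzl : ‖z‖ ≤ c₁ / 2 := by
      rw [hzn, div_le_iff₀ hσ0]; exact hu
    have hz2 : (σ : ℂ) ^ 2 * z ^ 2 / 2 = (u : ℂ) ^ 2 / 2 := by
      have : (σ : ℂ) ≠ 0 := by exact_mod_cast hσ0.ne'
      rw [hz]; field_simp
    rw [hgφ z (by linarith), Complex.norm_exp]
    refine Real.exp_le_exp.2 ((Complex.re_le_norm _).trans ?_)
    refine (norm_add_le _ _).trans ?_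
    rw [hz2]
    have e1 : ‖(u : ℂ) ^ 2 / 2‖ = u ^ 2 / 2 := by simp
    have e2 : ‖z ^ 3 * g z‖ ≤ u ^ 2 / 4 := by
      rw [norm_mul, norm_pow]
      calc ‖z‖ ^ 3 * ‖g z‖ ≤ ‖z‖ ^ 3 * (C₃ * σ ^ 2) := by
            gcongr; exact hgb z (by linarith)
        _ = C₃ * ‖z‖ * (σ * ‖z‖) ^ 2 := by ring
        _ = C₃ * ‖z‖ * u ^ 2 := by
          rw [hzn, mul_div_cancel₀ _ hσ0.ne', sq_abs]
        _ ≤ 1 / 4 * u ^ 2 := by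
          gcongr
          calc C₃ * ‖z‖ ≤ C₃ * c₁ := by gcongr; linarith
            _ ≤ _ := hc₁1
        _ = _ := by ring
    rw [e1]
    nlinarith [sq_nonneg u]

end WCLT

end


section
namespace WCLT

lemma wd_le (p : ℝ) (μ ν : Measure ℝ) (ρ : Measure (ℝ × ℝ)) (h1 : ρ.map Prod.fst = μ)
    (h2 : ρ.map Prod.snd = ν) :
    wassersteinDist p μ ν ≤ (∫⁻ z, ENNReal.ofReal (|z.1 - z.2| ^ p) ∂ρ) ^ (1 / p) := by
  unfold wassersteinDist
  exact iInf_le_of_le ρ (iInf_le_of_le h1 (iInf_le_of_le h2 le_rfl))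

lemma wd_map_le {Ω : Type*} [MeasurableSpace Ω] (P : Measure Ω) (p : ℝ) (X Y : Ω → ℝ)
    (hX : Measurable X) (hY : Measurable Y) :
    wassersteinDist p (P.map X) (P.map Y) ≤
      (∫⁻ ω, ENNReal.ofReal (|X ω - Y ω| ^ p) ∂P) ^ (1 / p) := by
  have := wd_le p (P.map X) (P.map Y) (P.map (fun ω => (X ω, Y ω)))
    (by rw [Measure.map_map measurable_fst (hX.prodMk hY)]; rfl)
    (by rw [Measure.map_map measurable_snd (hX.prodMk hY)]; rfl)
  rw [lintegral_map (by fun_prop) (hX.prodMk hY)] at this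
  exact this

lemma ofReal_rpow_p (p : ℝ) (hp : 1 ≤ p) (x : ℝ) :
    ENNReal.ofReal (|x| ^ p) = ENNReal.ofReal |x| ^ p := by
  rw [ENNReal.ofReal_rpow_of_nonneg (abs_nonneg _) (by linarith)]

lemma wd_triangle (p : ℝ) (hp : 1 ≤ p) (μ ν η : Measure ℝ) [IsProbabilityMeasure μ]
    [IsProbabilityMeasure ν] [IsProbabilityMeasure η] :
    wassersteinDist p μ η ≤ wassersteinDist p μ ν + wassersteinDist p ν η := by
  conv_rhs => unfold wassersteinDist
  simp only [ENNReal.iInf_add, ENNReal.add_iInf]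
  refine le_iInf fun ρ₂ => le_iInf fun h3 => le_iInf fun h4 => le_iInf fun ρ₁ => le_iInf fun h1 =>
    le_iInf fun h2 => ?_
  have : IsProbabilityMeasure ρ₁ := by
    constructor
    have : ρ₁.map Prod.fst Set.univ = 1 := by rw [h1]; simp
    rwa [Measure.map_apply measurable_fst MeasurableSet.univ, Set.preimage_univ] at this
  have : IsProbabilityMeasure ρ₂ := by
    constructor
    have : ρ₂.map Prod.fst Set.univ = 1 := by rw [h3]; simp
    rwa [Measure.map_apply measurable_fst MeasurableSet.univ, Set.preimage_univ] at this
  set ρ₁' : Measure (ℝ × ℝ) := ρ₁.map Prod.swap with hρ₁'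
  have hf1 : ρ₁'.fst = ν := by
    rw [Measure.fst, hρ₁', Measure.map_map measurable_fst measurable_swap, ← h2]; rfl
  have hf2 : ρ₂.fst = ν := h3
  have : IsProbabilityMeasure ρ₁' := Measure.isProbabilityMeasure_map measurable_swap.aemeasurable
  set κ := ρ₁'.condKernel ×ₖ ρ₂.condKernel with hκ
  set Θ : Measure (ℝ × (ℝ × ℝ)) := ν ⊗ₘ κ with hΘ
  have e1 : Θ.map (fun t => (t.1, t.2.1)) = ρ₁' := by
    conv_rhs => rw [← ρ₁'.disintegrate ρ₁'.condKernel, hf1]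
    have : (fun t : ℝ × (ℝ × ℝ) => (t.1, t.2.1)) = Prod.map id Prod.fst := rfl
    rw [this, hΘ, ← Measure.compProd_map measurable_fst, ← Kernel.fst_eq, hκ, Kernel.fst_prod]
  have e2 : Θ.map (fun t => (t.1, t.2.2)) = ρ₂ := by
    conv_rhs => rw [← ρ₂.disintegrate ρ₂.condKernel, hf2]
    have : (fun t : ℝ × (ℝ × ℝ) => (t.1, t.2.2)) = Prod.map id Prod.snd := rfl
    rw [this, hΘ, ← Measure.compProd_map measurable_snd, ← Kernel.snd_eq, hκ, Kernel.snd_prod]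
  have m1 : Θ.map (fun t => t.2.1) = μ := by
    have : (fun t : ℝ × (ℝ × ℝ) => t.2.1) = Prod.snd ∘ (fun t => (t.1, t.2.1)) := rfl
    rw [this, ← Measure.map_map measurable_snd (by fun_prop), e1, hρ₁',
      Measure.map_map measurable_snd measurable_swap, ← h1]; rfl
  have m2 : Θ.map (fun t => t.2.2) = η := by
    have : (fun t : ℝ × (ℝ × ℝ) => t.2.2) = Prod.snd ∘ (fun t => (t.1, t.2.2)) := rfl
    rw [this, ← Measure.map_map measurable_snd (by fun_prop), e2, ← h4]
  have key := wd_map_le Θ p (fun t => t.2.1) (fun t => t.2.2) (by fun_prop) (by fun_prop)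
  rw [m1, m2] at key
  refine key.trans ?_
  have r1 : ∫⁻ z, ENNReal.ofReal (|z.1 - z.2| ^ p) ∂ρ₁ =
      ∫⁻ t, (ENNReal.ofReal |t.2.1 - t.1|) ^ p ∂Θ := by
    have : ρ₁ = ρ₁'.map Prod.swap := by
      rw [hρ₁', Measure.map_map measurable_swap measurable_swap]; simp
    rw [this, lintegral_map (by fun_prop) measurable_swap, ← e1,
      lintegral_map (by fun_prop) (by fun_prop)]
    simp only [Prod.fst_swap, Prod.snd_swap, ofReal_rpow_p p hp]
  have r2 : ∫⁻ z, ENNReal.ofReal (|z.1 - z.2| ^ p) ∂ρ₂ =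
      ∫⁻ t, (ENNReal.ofReal |t.1 - t.2.2|) ^ p ∂Θ := by
    rw [← e2, lintegral_map (by fun_prop) (by fun_prop)]
    simp only [ofReal_rpow_p p hp]
  rw [r1, r2]
  refine le_trans ?_ (ENNReal.lintegral_Lp_add_le (by fun_prop) (by fun_prop) hp)
  refine ENNReal.rpow_le_rpow (lintegral_mono fun t => ?_) (by positivity)
  simp only [ofReal_rpow_p p hp]
  refine ENNReal.rpow_le_rpow ?_ (by linarith)
  simp only [Pi.add_apply]
  rw [← ENNReal.ofReal_add (abs_nonneg _) (abs_nonneg _)]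
  exact ENNReal.ofReal_le_ofReal ((abs_sub_le _ t.1 _).trans_eq (by ring))

lemma wd_noise (p : ℝ) (μ ν : Measure ℝ) [IsProbabilityMeasure μ]
    [IsProbabilityMeasure ν] :
    wassersteinDist p μ ((μ.prod ν).map (fun z => z.1 + z.2)) ≤
      (∫⁻ h, ENNReal.ofReal (|h| ^ p) ∂ν) ^ (1 / p) := by
  have key := wd_map_le (μ.prod ν) p Prod.fst (fun z => z.1 + z.2) (by fun_prop) (by fun_prop)
  have h1 : (μ.prod ν).map Prod.fst = μ := by simp
  have h2 : (μ.prod ν).map Prod.snd = ν := by simp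
  rw [h1] at key
  refine key.trans_eq ?_
  conv_rhs => rw [← h2, lintegral_map (by fun_prop) (by fun_prop)]
  simp

/-- standard normal density -/
def gphi : ℝ → ℝ := gaussianPDFReal 0 1

/-- standard normal cdf -/
def Phi : ℝ → ℝ := fun x => cdf (gaussianReal 0 1) x

lemma gphi_eq (x : ℝ) : gphi x = (Real.sqrt (2 * Real.pi))⁻¹ * Real.exp (- x ^ 2 / 2) := by
  simp [gphi, gaussianPDFReal]

lemma gphi_pos (x : ℝ) : 0 < gphi x := gaussianPDFReal_pos _ _ _ (by simp)

lemma gphi_cont : Continuous gphi := by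
  have : gphi = fun x => (Real.sqrt (2 * Real.pi))⁻¹ * Real.exp (- x ^ 2 / 2) := funext gphi_eq
  rw [this]; fun_prop

lemma gphi_integrable : Integrable gphi := integrable_gaussianPDFReal 0 1

lemma Phi_eq (x : ℝ) : Phi x = ∫ t in Set.Iic x, gphi t := by
  unfold Phi
  rw [cdf_eq_real, measureReal_def, gaussianReal_apply_eq_integral _ (by simp),
    ENNReal.toReal_ofReal (integral_nonneg fun t => gaussianPDFReal_nonneg _ _ _)]
  rfl

lemma Phi_sub (x y : ℝ) : Phi y - Phi x = ∫ t in x..y, gphi t := by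
  rw [Phi_eq, Phi_eq, intervalIntegral.integral_Iic_sub_Iic gphi_integrable.integrableOn
    gphi_integrable.integrableOn]

lemma hasDerivAt_Phi (x : ℝ) : HasDerivAt Phi (gphi x) x := by
  have h : Phi = fun y => Phi 0 + ∫ t in (0:ℝ)..y, gphi t := by
    funext y; rw [← Phi_sub]; ring
  rw [h]
  exact (gphi_cont.integral_hasStrictDerivAt 0 x).hasDerivAt.const_add _

/-- quantile coupling -/
lemma quantile (F : Measure ℝ) [IsProbabilityMeasure F] : ∃ τ : ℝ → ℝ, Measurable τ ∧
    (gaussianReal 0 1).map τ = F ∧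
    ∀ y x, τ y ≤ x ↔ Phi y ≤ cdf F x := by
  set G := Phi with hG
  have hGc : Continuous G := continuous_iff_continuousAt.2 fun x => (hasDerivAt_Phi x).continuousAt
  have hGm : StrictMono G := strictMono_of_hasDerivAt_pos hasDerivAt_Phi gphi_pos
  have hG0 : ∀ y, 0 < G y := fun y => (cdf_nonneg _ (y-1)).trans_lt (hGm (by linarith))
  have hG1 : ∀ y, G y < 1 := fun y => (hGm (show y < y + 1 by linarith)).trans_le (cdf_le_one _ _)
  have hex : ∀ y, ∃ t, ∀ x, t ≤ x ↔ G y ≤ cdf F x := by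
    intro y
    set A : Set ℝ := {x | G y ≤ cdf F x} with hA
    have hne : A.Nonempty := by
      have := (tendsto_order.1 (tendsto_cdf_atTop F)).1 _ (hG1 y)
      obtain ⟨x, hx⟩ := this.exists
      exact ⟨x, hx.le⟩
    have hbd : BddBelow A := by
      have := (tendsto_order.1 (tendsto_cdf_atBot F)).2 _ (hG0 y)
      obtain ⟨x, hx⟩ := this.exists
      refine ⟨x, fun z hz => ?_⟩
      by_contra h
      push Not at h
      exact absurd (hz.trans (monotone_cdf F h.le)) (not_le.2 hx)
    have hmem : sInf A ∈ A := by
      have hrc := (cdf F).right_continuous (sInf A)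
      have : Tendsto (cdf F) (nhdsWithin (sInf A) (Set.Ioi (sInf A))) (nhds (cdf F (sInf A))) :=
        hrc.tendsto.mono_left (nhdsWithin_mono _ Set.Ioi_subset_Ici_self)
      refine ge_of_tendsto this ?_
      filter_upwards [self_mem_nhdsWithin] with x hx
      obtain ⟨z, hz, hzx⟩ := exists_lt_of_csInf_lt hne hx
      exact le_trans hz (monotone_cdf F hzx.le)
    refine ⟨sInf A, fun x => ⟨fun h => le_trans hmem (monotone_cdf F h), fun h => csInf_le hbd h⟩⟩
  choose τ hτ using hex
  have hmono : Monotone τ := fun y z hyz => by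
    rw [hτ]; exact le_trans (hGm.monotone hyz) ((hτ z _).1 le_rfl)
  refine ⟨τ, hmono.measurable, ?_, hτ⟩
  have : IsProbabilityMeasure ((gaussianReal 0 1).map τ) :=
    Measure.isProbabilityMeasure_map hmono.measurable.aemeasurable
  refine Measure.eq_of_cdf _ _ ?_
  ext x
  rw [cdf_eq_real, measureReal_def, Measure.map_apply hmono.measurable measurableSet_Iic]
  have hset : τ ⁻¹' Set.Iic x = {y | G y ≤ cdf F x} := by ext y; exact hτ y x
  rw [hset]
  rcases (cdf_le_one F x).lt_or_eq with h1 | h1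
  · rcases (cdf_nonneg F x).lt_or_eq with h0 | h0
    · have : ∃ y, G y = cdf F x := by
        obtain ⟨a, ha⟩ := ((tendsto_order.1 (tendsto_cdf_atBot (gaussianReal 0 1))).2 _ h0).exists
        obtain ⟨b, hb⟩ := ((tendsto_order.1 (tendsto_cdf_atTop (gaussianReal 0 1))).1 _ h1).exists
        exact mem_range_of_exists_le_of_exists_ge hGc ⟨a, ha.le⟩ ⟨b, hb.le⟩
      obtain ⟨y, hy⟩ := this
      have : {z | G z ≤ cdf F x} = Set.Iic y := by
        ext z; simp only [Set.mem_ofPred_eq, ← hy, hGm.le_iff_le, Set.mem_Iic]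
      rw [this, ← measureReal_def, ← cdf_eq_real, ← hy]; rfl
    · have : {z | G z ≤ cdf F x} = ∅ := by
        ext z; simp only [Set.mem_ofPred_eq, ← h0, Set.mem_empty_iff_false, iff_false, not_le]
        exact hG0 z
      rw [this, ← h0]; simp
  · have : {z | G z ≤ cdf F x} = Set.univ := by
      ext z; simp only [Set.mem_ofPred_eq, h1, Set.mem_univ, iff_true]; exact (hG1 z).le
    rw [this, h1]; simp

end WCLT

end


section
namespace WCLT
open scoped FourierTransform SchwartzMap Convolution in
lemma kernel_exists (c : ℝ) (hc : 0 < c) : ∃ (w : ℝ → ℝ) (ψ : ℝ → ℂ) (B : ℝ),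
    (∀ y, 0 ≤ w y) ∧ Continuous w ∧ (∫ y, w y = 1) ∧ (∀ k : ℕ, Integrable (fun y => |y| ^ k * w y)) ∧
    Continuous ψ ∧ Integrable ψ ∧ (∀ t, ‖ψ t‖ ≤ B) ∧ (∀ t, c < |t| → ψ t = 0) ∧
    ∀ y : ℝ, (w y : ℂ) = ∫ t : ℝ, Complex.exp (t * y * Complex.I) * ψ t := by
  let bmp : ContDiffBump (0 : ℝ) := ⟨c / 4, c / 2, by positivity, by linarith⟩
  let g₀ : ℝ → ℂ := fun t => (bmp t : ℂ)
  have hg₀c : HasCompactSupport g₀ := bmp.hasCompactSupport.comp_left (g := fun x : ℝ => (x : ℂ)) (by simp)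
  have hg₀s : ContDiff ℝ ((⊤ : ℕ∞) : WithTop ℕ∞) g₀ := Complex.ofRealCLM.contDiff.comp bmp.contDiff
  let g : 𝓢(ℝ, ℂ) := hg₀c.toSchwartzMap hg₀s
  have hgg : (g : ℝ → ℂ) = g₀ := rfl
  let G : 𝓢(ℝ, ℂ) := 𝓕 g
  have hG : ∀ ξ, G ξ = 𝓕 g₀ ξ := fun ξ => rfl
  have hGint : ∀ ξ, G ξ = ∫ t, Complex.exp (↑(-2 * Real.pi * t * ξ) * Complex.I) • g₀ t := by
    intro ξ; rw [hG, Real.fourier_real_eq_integral_exp_smul]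
  have hconj : ∀ ξ, (starRingEnd ℂ) (G ξ) = G ξ := by
    intro ξ
    rw [hGint, ← integral_conj]
    rw [← integral_neg_eq_self]
    congr 1; funext t
    simp only [smul_eq_mul, map_mul, ← Complex.exp_conj, Complex.conj_ofReal, Complex.conj_I, g₀,
      bmp.neg]
    congr 2
    push_cast; ring
  have hsq : ∀ ξ, ((‖G ξ‖ ^ 2 : ℝ) : ℂ) = G ξ * G ξ := by
    intro ξ
    rw [Complex.ofReal_pow, ← Complex.conj_mul', hconj]
  let ψ₀ : ℝ → ℂ := g₀ ⋆[ContinuousLinearMap.mul ℂ ℂ] g₀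
  have hg₀i : Integrable g₀ := hg₀s.continuous.integrable_of_hasCompactSupport hg₀c
  have hψc : Continuous ψ₀ := hg₀c.continuous_convolution_right _ hg₀i.locallyIntegrable hg₀s.continuous
  have hψs : HasCompactSupport ψ₀ := hg₀c.convolution _ hg₀c
  have hF : ∀ ξ, 𝓕 ψ₀ ξ = G ξ * G ξ := fun ξ => Real.fourier_mul_convolution_eq hg₀i hg₀i ξ
  obtain ⟨B, hB⟩ := hψc.bounded_above_of_compact_support hψs
  have hψ0 : ∀ t, c < |t| → ψ₀ t = 0 := by
    intro t ht
    change ∫ s, _ = _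
    refine integral_eq_zero_of_ae (Eventually.of_forall fun s => ?_)
    simp only [ContinuousLinearMap.mul_apply', Pi.zero_apply, g₀, mul_eq_zero,
      Complex.ofReal_eq_zero]
    by_cases hs : c / 2 ≤ |s|
    · left; exact bmp.zero_of_le_dist (by simpa [Real.dist_eq] using hs)
    · right; apply bmp.zero_of_le_dist
      have : |t| ≤ |t - s| + |s| := by simpa using abs_add_le (t - s) s
      simp only [Real.dist_eq, sub_zero]
      change c / 2 ≤ _
      linarith
  -- moments
  obtain ⟨M, hM⟩ : ∃ M, ∀ ξ, ‖G ξ‖ ≤ M := by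
    obtain ⟨M, -, hM⟩ := G.decay 0 0
    exact ⟨M, fun ξ => by simpa using hM ξ⟩
  let w₀ : ℝ → ℝ := fun y => ‖G (-y / (2 * Real.pi))‖ ^ 2
  have hw₀c : Continuous w₀ := by
    have := G.continuous
    fun_prop
  have hmom : ∀ k : ℕ, Integrable (fun y => |y| ^ k * w₀ y) := by
    intro k
    have h1 : Integrable (fun ξ => |ξ| ^ k * ‖G ξ‖ ^ 2) := by
      have := (G.integrable_pow_mul volume k).const_mul M
      refine this.mono' (by have := G.continuous; fun_prop) (Eventually.of_forall fun ξ => ?_)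
      rw [Real.norm_of_nonneg (by positivity), Real.norm_eq_abs]
      nlinarith [hM ξ, mul_le_mul_of_nonneg_left (hM ξ)
        (show 0 ≤ |ξ| ^ k * ‖G ξ‖ by positivity)]
    have h2 := (h1.comp_div (R := -(2 * Real.pi)) (by simp [Real.pi_ne_zero])).const_mul ((2 * Real.pi) ^ k)
    refine h2.congr (Eventually.of_forall fun y => ?_)
    simp only [w₀, abs_div, abs_neg, abs_of_pos Real.two_pi_pos, div_neg, neg_div, div_pow]
    have : (2 * Real.pi) ^ k ≠ 0 := by positivity
    field_simp
  have hw₀i : Integrable w₀ := by simpa using hmom 0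
  have hpos : 0 < ∫ y, w₀ y := by
    refine integral_pos_of_integrable_nonneg_nonzero (x := 0) hw₀c hw₀i (fun y => by positivity) ?_
    simp only [w₀, neg_zero, zero_div]
    have : G 0 = ((∫ t, bmp t : ℝ) : ℂ) := by
      rw [hGint, ← integral_complex_ofReal]; simp [g₀]
    rw [this]
    have := bmp.integral_pos (μ := volume)
    simp only [Complex.norm_real, Real.norm_eq_abs]
    exact (pow_pos (abs_pos.2 this.ne') 2).ne'
  set A := ∫ y, w₀ y with hA
  refine ⟨fun y => A⁻¹ * w₀ y, fun t => (A⁻¹ : ℝ) • ψ₀ t, |A⁻¹| * B, fun y => by positivity,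
    by fun_prop, ?_, ?_, ?_, ?_, ?_, ?_, ?_⟩
  · rw [integral_const_mul, ← hA]; field_simp
  · intro k
    refine ((hmom k).const_mul A⁻¹).congr (Eventually.of_forall fun y => ?_)
    simp only; ring
  · fun_prop
  · exact (hψc.integrable_of_hasCompactSupport hψs).smul A⁻¹
  · intro t; rw [norm_smul, Real.norm_eq_abs]; exact mul_le_mul_of_nonneg_left (hB t) (abs_nonneg _)
  · intro t ht; simp [hψ0 t ht]
  · intro y
    have : ((w₀ y : ℝ) : ℂ) = ∫ t : ℝ, Complex.exp (t * y * Complex.I) * ψ₀ t := by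
      simp only [w₀]
      rw [hsq, ← hF, Real.fourier_real_eq_integral_exp_smul]
      congr 1; funext t
      rw [smul_eq_mul]; congr 2
      push_cast
      have : (Real.pi : ℂ) ≠ 0 := by simp [Real.pi_ne_zero]
      field_simp
    rw [Complex.ofReal_mul, this, ← integral_const_mul]
    congr 1; funext t
    simp only [Complex.real_smul]; ring

end WCLT

end


section
namespace WCLT

/-- Hermite polynomials -/
def He : ℕ → Polynomial ℝ
  | 0 => 1
  | j + 1 => Polynomial.X * He j - (He j).derivative

lemma hasDerivAt_gphi (s : ℝ) : HasDerivAt gphi (-s * gphi s) s := by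
  have : gphi = fun x => (Real.sqrt (2 * Real.pi))⁻¹ * Real.exp (- x ^ 2 / 2) := funext gphi_eq
  rw [this]
  have h : HasDerivAt (fun x : ℝ => - x ^ 2 / 2) (-s) s := by
    have := (((hasDerivAt_id s).pow 2).neg).div_const 2
    refine this.congr_deriv ?_
    simp
    ring
  refine (h.exp.const_mul _).congr_deriv ?_
  ring

lemma hasDerivAt_gphi_He (j : ℕ) (s : ℝ) :
    HasDerivAt (fun x => gphi x * (He j).eval x) (-(gphi s * (He (j + 1)).eval s)) s := by
  refine ((hasDerivAt_gphi s).mul ((He j).hasDerivAt s)).congr_deriv ?_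
  simp only [He, Polynomial.eval_sub, Polynomial.eval_mul, Polynomial.eval_X]; ring

lemma polyexp (k : ℕ) : ∃ C : ℝ, 0 < C ∧ ∀ s : ℝ, (1 + |s|) ^ k * Real.exp (- s ^ 2 / 4) ≤ C := by
  refine ⟨k.factorial * Real.exp 2, by positivity, fun s => ?_⟩
  have h1 : (1 + |s|) ^ k ≤ k.factorial * Real.exp (1 + |s|) := by
    have := Real.pow_div_factorial_le_exp (1 + |s|) (by positivity) k
    rwa [div_le_iff₀ (by positivity), mul_comm] at this
  calc _ ≤ k.factorial * Real.exp (1 + |s|) * Real.exp (- s ^ 2 / 4) := by gcongr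
    _ = k.factorial * Real.exp (1 + |s| - s ^ 2 / 4) := by
      rw [mul_assoc, ← Real.exp_add]; ring_nf
    _ ≤ _ := by
      gcongr
      nlinarith [sq_nonneg (|s| - 2), sq_abs s]

lemma gphi_le (s : ℝ) : gphi s ≤ Real.exp (- s ^ 2 / 4) * Real.exp (- s ^ 2 / 4) := by
  rw [gphi_eq, ← Real.exp_add, show - s ^ 2 / 4 + - s ^ 2 / 4 = - s ^ 2 / 2 by ring]
  have : (Real.sqrt (2 * Real.pi))⁻¹ ≤ 1 := by
    apply inv_le_one_of_one_le₀
    rw [Real.one_le_sqrt]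
    linarith [Real.pi_gt_three]
  nlinarith [Real.exp_pos (- s ^ 2 / 2)]

lemma exp4_integrable : Integrable (fun s : ℝ => Real.exp (- s ^ 2 / 4)) := by
  have := integrable_exp_neg_mul_sq (b := 1 / 4) (by norm_num)
  refine this.congr (Eventually.of_forall fun s => ?_)
  simp only; congr 1; ring

lemma polygphi (k : ℕ) : ∃ C : ℝ, 0 < C ∧ ∀ s : ℝ, (1 + |s|) ^ k * gphi s ≤ C * Real.exp (- s ^ 2 / 4) := by
  obtain ⟨C, hC, h⟩ := polyexp k
  refine ⟨C, hC, fun s => ?_⟩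
  calc _ ≤ (1 + |s|) ^ k * (Real.exp (- s ^ 2 / 4) * Real.exp (- s ^ 2 / 4)) := by
        gcongr; exact gphi_le s
    _ = ((1 + |s|) ^ k * Real.exp (- s ^ 2 / 4)) * Real.exp (- s ^ 2 / 4) := by ring
    _ ≤ _ := by gcongr; exact h s

lemma polygphi_integrable (k : ℕ) : Integrable (fun s : ℝ => (1 + |s|) ^ k * gphi s) := by
  obtain ⟨C, hC, h⟩ := polygphi k
  refine (exp4_integrable.const_mul C).mono' (by have := gphi_cont; fun_prop)
    (Eventually.of_forall fun s => ?_)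
  rw [Real.norm_of_nonneg (mul_nonneg (by positivity) (gphi_pos s).le)]
  exact h s

lemma poly_bound (P : Polynomial ℝ) : ∃ C : ℝ, 0 ≤ C ∧
    ∀ s, |P.eval s| ≤ C * (1 + |s|) ^ P.natDegree := by
  refine ⟨∑ i ∈ Finset.range (P.natDegree + 1), |P.coeff i|, by positivity, fun s => ?_⟩
  rw [Polynomial.eval_eq_sum_range, Finset.sum_mul]
  refine (Finset.abs_sum_le_sum_abs _ _).trans (Finset.sum_le_sum fun i hi => ?_)
  rw [abs_mul, abs_pow]
  refine mul_le_mul_of_nonneg_left ?_ (abs_nonneg _)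
  have hi' : i ≤ P.natDegree := by simp at hi; omega
  calc |s| ^ i ≤ (1 + |s|) ^ i := by gcongr; linarith
    _ ≤ _ := pow_le_pow_right₀ (by linarith [abs_nonneg s]) hi'

lemma He_bound (N : ℕ) : ∃ (C : ℝ) (k : ℕ), 0 < C ∧ ∀ j ≤ N, ∀ s, |(He j).eval s| ≤ C * (1 + |s|) ^ k := by
  induction N with
  | zero => exact ⟨1, 0, one_pos, fun j hj s => by simp [Nat.le_zero.1 hj, He]⟩
  | succ N ih =>
    obtain ⟨C, k, hC, h⟩ := ih
    obtain ⟨C', hC', h'⟩ := poly_bound (He (N + 1))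
    refine ⟨C + C', k + (He (N + 1)).natDegree, by positivity, fun j hj s => ?_⟩
    have h1 : (1:ℝ) ≤ 1 + |s| := by linarith [abs_nonneg s]
    rcases hj.lt_or_eq with hj | rfl
    · refine (h j (by omega) s).trans ?_
      gcongr
      · linarith
      · omega
    · refine (h' s).trans ?_
      gcongr
      · linarith
      · omega

lemma poly_gphi_integrable (P : Polynomial ℝ) : Integrable (fun s => gphi s * P.eval s) := by
  obtain ⟨C, hC, h⟩ := poly_bound P
  refine ((polygphi_integrable P.natDegree).const_mul C).mono'
    (by have := gphi_cont; have := P.continuous; fun_prop) (Eventually.of_forall fun s => ?_)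
  rw [norm_mul, Real.norm_eq_abs, Real.norm_eq_abs, abs_of_pos (gphi_pos s)]
  nlinarith [h s, gphi_pos s]

lemma gphi_He_cexp_integrable (P : Polynomial ℝ) (u : ℝ) : Integrable (fun s : ℝ =>
    ((gphi s * P.eval s : ℝ) : ℂ) * Complex.exp (-(u * s) * Complex.I)) := by
  refine (poly_gphi_integrable P).ofReal.mul_bdd (c := 1) (by fun_prop) (Eventually.of_forall fun s => ?_)
  rw [show (-(u * s) * Complex.I : ℂ) = ((-(u * s) : ℝ) : ℂ) * Complex.I by push_cast; ring,
    Complex.norm_exp_ofReal_mul_I]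

lemma He_fourier (j : ℕ) (u : ℝ) : ∫ s : ℝ, ((gphi s * (He j).eval s : ℝ) : ℂ) *
    Complex.exp (-(u * s) * Complex.I) = (-u * Complex.I) ^ j * Complex.exp (-(u:ℂ) ^ 2 / 2) := by
  induction j with
  | zero =>
    have h := charFun_gaussianReal (μ := 0) (v := 1) (-u)
    rw [charFun_apply_real, integral_gaussianReal_eq_integral_smul (by simp)] at h
    simp only [He, Polynomial.eval_one, mul_one, pow_zero, one_mul]
    convert h using 1
    · congr 1; funext s
      rw [Complex.real_smul]; unfold gphi; congr 2; push_cast; ring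
    · congr 1; push_cast; ring
  | succ j ih =>
    have hd : ∀ s : ℝ, HasDerivAt (fun s : ℝ => ((gphi s * (He j).eval s : ℝ) : ℂ) *
        Complex.exp (-(u * s) * Complex.I))
        ((-u * Complex.I) * (((gphi s * (He j).eval s : ℝ) : ℂ) * Complex.exp (-(u * s) * Complex.I)) -
        ((gphi s * (He (j+1)).eval s : ℝ) : ℂ) * Complex.exp (-(u * s) * Complex.I)) s := by
      intro s
      have h1 := (hasDerivAt_gphi_He j s).ofReal_comp
      have h2 : HasDerivAt (fun s : ℝ => Complex.exp (-(u * s) * Complex.I))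
          (Complex.exp (-(u * s) * Complex.I) * (-u * Complex.I)) s := by
        have h3 : HasDerivAt (fun s : ℝ => -((u:ℂ) * s) * Complex.I) (-u * Complex.I) s := by
          have := ((((hasDerivAt_id s).ofReal_comp).const_mul (u:ℂ)).neg).mul_const Complex.I
          refine this.congr_deriv ?_
          simp
        exact h3.cexp
      refine (h1.mul h2).congr_deriv ?_
      push_cast; ring
    have hi := gphi_He_cexp_integrable (He j) u
    have hi' := gphi_He_cexp_integrable (He (j+1)) u
    have := integral_eq_zero_of_hasDerivAt_of_integrable hd ((hi.const_mul _).sub hi') hi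
    rw [integral_sub (hi.const_mul _) hi', integral_const_mul, ih, sub_eq_zero] at this
    rw [← this]; ring

lemma smooth_fourier (w : ℝ → ℝ) (ψ : ℝ → ℂ) (hψi : Integrable ψ)
    (hw : ∀ y : ℝ, (w y : ℂ) = ∫ t : ℝ, Complex.exp (t * y * Complex.I) * ψ t)
    (σ : ℝ) (hσ : 0 < σ) (ν : Measure ℝ) [SFinite ν] (q : ℝ → ℂ) (hq : Integrable q ν) (y : ℝ) :
    ∫ s, q s * ((σ * w (σ * (y - s)) : ℝ) : ℂ) ∂ν =
      ∫ u : ℝ, Complex.exp (u * y * Complex.I) * ψ (u / σ) *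
        ∫ s : ℝ, q s * Complex.exp (-(u * s) * Complex.I) ∂ν := by
  have h1 : ∀ s : ℝ, ((σ * w (σ * (y - s)) : ℝ) : ℂ) =
      ∫ u : ℝ, Complex.exp (u * (y - s) * Complex.I) * ψ (u / σ) := by
    intro s
    have := Measure.integral_comp_div (fun t : ℝ => Complex.exp (t * (σ * (y - s)) * Complex.I) * ψ t) σ
    rw [Complex.ofReal_mul, hw, abs_of_pos hσ, Complex.real_smul] at *
    push_cast at *
    rw [← this]
    congr 1; funext u
    have : (σ : ℂ) ≠ 0 := by exact_mod_cast hσ.ne'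
    congr 2
    field_simp
  have hint : Integrable (fun p : ℝ × ℝ => q p.1 * ψ (p.2 / σ) *
      Complex.exp (p.2 * (y - p.1) * Complex.I)) (ν.prod volume) := by
    have := hq.mul_prod (hψi.comp_div hσ.ne')
    refine this.mul_bdd (c := 1) (by fun_prop) (Eventually.of_forall fun p => ?_)
    rw [show (p.2 * (y - p.1) * Complex.I : ℂ) = ((p.2 * (y - p.1) : ℝ) : ℂ) * Complex.I by push_cast; ring,
      Complex.norm_exp_ofReal_mul_I]
  have := integral_integral_swap (f := fun s u => q s * ψ (u / σ) * Complex.exp (u * (y - s) * Complex.I)) hint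
  calc _ = ∫ s, (∫ u : ℝ, q s * ψ (u / σ) * Complex.exp (u * (y - s) * Complex.I)) ∂ν := by
        congr 1; funext s
        rw [h1, ← integral_const_mul]
        congr 1; funext u; ring
    _ = _ := by
        rw [this]
        congr 1; funext u
        rw [← integral_const_mul]
        congr 1; funext s
        rw [show (u * (y - s) * Complex.I : ℂ) = u * y * Complex.I + -(u * s) * Complex.I by ring,
          Complex.exp_add]
        ring

end WCLT

end


section
namespace WCLT

structure Ker (c : ℝ) (w : ℝ → ℝ) (ψ : ℝ → ℂ) (B : ℝ) : Prop where
  nonneg : ∀ y, 0 ≤ w y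
  cont : Continuous w
  one : ∫ y, w y = 1
  mom : ∀ k : ℕ, Integrable (fun y => |y| ^ k * w y)
  pcont : Continuous ψ
  pint : Integrable ψ
  pbd : ∀ t, ‖ψ t‖ ≤ B
  supp : ∀ t, c < |t| → ψ t = 0
  ft : ∀ y : ℝ, (w y : ℂ) = ∫ t : ℝ, Complex.exp (t * y * Complex.I) * ψ t

def wS (w : ℝ → ℝ) (σ h : ℝ) : ℝ := σ * w (σ * h)
def nuS (w : ℝ → ℝ) (σ : ℝ) : Measure ℝ := volume.withDensity (fun h => ENNReal.ofReal (wS w σ h))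
def lawT (lam : Measure ℝ) (w : ℝ → ℝ) (σ : ℝ) : Measure ℝ :=
  (lam.prod (nuS w σ)).map (fun z => z.1 + z.2)
def Qf (N : ℕ) (b : ℕ → ℂ) (s : ℝ) : ℂ :=
  Phi s - ∑ j ∈ Finset.range N, b j * ((gphi s * (He (j + 2)).eval s : ℝ) : ℂ)
def qf (N : ℕ) (b : ℕ → ℂ) (s : ℝ) : ℂ :=
  gphi s + ∑ j ∈ Finset.range N, b j * ((gphi s * (He (j + 3)).eval s : ℝ) : ℂ)

lemma hasDerivAt_Qf (N : ℕ) (b : ℕ → ℂ) (s : ℝ) : HasDerivAt (Qf N b) (qf N b s) s := by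
  unfold Qf qf
  have h1 := (hasDerivAt_Phi s).ofReal_comp
  have h2 : HasDerivAt (fun s : ℝ => ∑ j ∈ Finset.range N, b j * ((gphi s * (He (j + 2)).eval s : ℝ) : ℂ))
      (∑ j ∈ Finset.range N, b j * ((-(gphi s * (He (j + 3)).eval s) : ℝ) : ℂ)) s := by
    refine HasDerivAt.fun_sum fun j _ => ?_
    exact ((hasDerivAt_gphi_He (j + 2) s).ofReal_comp).const_mul (b j)
  refine (h1.sub h2).congr_deriv ?_
  rw [sub_eq_add_neg, ← Finset.sum_neg_distrib]
  congr 1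
  refine Finset.sum_congr rfl fun j _ => ?_
  push_cast; ring

lemma Qf_cont (N : ℕ) (b : ℕ → ℂ) : Continuous (Qf N b) :=
  continuous_iff_continuousAt.2 fun s => (hasDerivAt_Qf N b s).continuousAt

lemma qf_cont (N : ℕ) (b : ℕ → ℂ) : Continuous (qf N b) := by
  unfold qf
  have := gphi_cont
  have h : ∀ j, Continuous fun s => (He (j + 3)).eval s := fun j => (He (j+3)).continuous
  fun_prop

lemma qf_integrable (N : ℕ) (b : ℕ → ℂ) : Integrable (qf N b) := by
  unfold qf
  exact gphi_integrable.ofReal.add (integrable_finsetSum _ fun j _ =>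
    (poly_gphi_integrable _).ofReal.const_mul _)

lemma qf_fourier (N : ℕ) (b : ℕ → ℂ) (u : ℝ) :
    ∫ s : ℝ, qf N b s * Complex.exp (-(u * s) * Complex.I) = Complex.exp (-(u:ℂ) ^ 2 / 2) *
      (1 + ∑ j ∈ Finset.range N, b j * (-u * Complex.I) ^ (j + 3)) := by
  have h0 := He_fourier 0 u
  have i0 := gphi_He_cexp_integrable (He 0) u
  simp only [He, Polynomial.eval_one, mul_one, pow_zero, one_mul] at h0 i0
  simp only [qf, add_mul, Finset.sum_mul]
  rw [integral_add i0, integral_finsetSum, h0, mul_add, mul_one, Finset.mul_sum]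
  · congr 1
    refine Finset.sum_congr rfl fun j _ => ?_
    simp only [mul_assoc (b j)]
    rw [integral_const_mul, He_fourier]; ring
  · intro j _
    simp only [mul_assoc (b j)]
    exact (gphi_He_cexp_integrable _ u).const_mul _
  · refine integrable_finsetSum _ fun j _ => ?_
    simp only [mul_assoc (b j)]
    exact (gphi_He_cexp_integrable _ u).const_mul _

section
variable {c : ℝ} {w : ℝ → ℝ} {ψ : ℝ → ℂ} {B : ℝ}

lemma Ker.int (hk : Ker c w ψ B) : Integrable w := by simpa using hk.mom 0

lemma Ker.bdd (hk : Ker c w ψ B) (y : ℝ) : w y ≤ ∫ t, ‖ψ t‖ := by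
  have h1 : ‖(w y : ℂ)‖ = w y := by simp [abs_of_nonneg (hk.nonneg y)]
  rw [← h1, hk.ft]
  refine (norm_integral_le_integral_norm _).trans_eq ?_
  congr 1; funext t
  rw [norm_mul, show (t * y * Complex.I : ℂ) = ((t * y : ℝ) : ℂ) * Complex.I by push_cast; ring,
    Complex.norm_exp_ofReal_mul_I, one_mul]

lemma Ker.wS_cont (hk : Ker c w ψ B) (σ : ℝ) : Continuous (wS w σ) := by
  unfold wS; have := hk.cont; fun_prop

lemma Ker.wS_nonneg (hk : Ker c w ψ B) {σ : ℝ} (hσ : 0 < σ) (h : ℝ) : 0 ≤ wS w σ h :=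
  mul_nonneg hσ.le (hk.nonneg _)

lemma Ker.wS_mom (hk : Ker c w ψ B) {σ : ℝ} (hσ : 0 < σ) (k : ℕ) :
    Integrable (fun h => |h| ^ k * wS w σ h) ∧
    ∫ h, |h| ^ k * wS w σ h = (∫ y, |y| ^ k * w y) * (1 / σ) ^ k := by
  have e : ∀ h, |h| ^ k * wS w σ h = σ * (1 / σ) ^ k * (|σ * h| ^ k * w (σ * h)) := by
    intro h
    rw [wS, abs_mul, abs_of_pos hσ, mul_pow, div_pow, one_pow]
    field_simp
  constructor
  · refine (((hk.mom k).comp_mul_left' hσ.ne').const_mul (σ * (1 / σ) ^ k)).congr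
      (Eventually.of_forall fun h => ?_)
    simp only [e]
  · simp only [e]
    rw [integral_const_mul, Measure.integral_comp_mul_left (fun y => |y| ^ k * w y) σ,
      abs_of_pos (by positivity), smul_eq_mul]
    field_simp

lemma Ker.wS_int (hk : Ker c w ψ B) {σ : ℝ} (hσ : 0 < σ) : Integrable (wS w σ) := by
  simpa using (hk.wS_mom hσ 0).1

lemma Ker.wS_one (hk : Ker c w ψ B) {σ : ℝ} (hσ : 0 < σ) : ∫ h, wS w σ h = 1 := by
  simpa [hk.one] using (hk.wS_mom hσ 0).2

lemma Ker.nuS_prob (hk : Ker c w ψ B) {σ : ℝ} (hσ : 0 < σ) : IsProbabilityMeasure (nuS w σ) := by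
  constructor
  rw [nuS, withDensity_apply _ MeasurableSet.univ, Measure.restrict_univ,
    ← ofReal_integral_eq_lintegral_ofReal (hk.wS_int hσ) (Eventually.of_forall (hk.wS_nonneg hσ)),
    hk.wS_one hσ, ENNReal.ofReal_one]

lemma Ker.integral_nuS (hk : Ker c w ψ B) {σ : ℝ} (hσ : 0 < σ) {E : Type*} [NormedAddCommGroup E]
    [NormedSpace ℝ E] (f : ℝ → E) : ∫ h, f h ∂(nuS w σ) = ∫ h, wS w σ h • f h := by
  rw [nuS, integral_withDensity_eq_integral_toReal_smul
    (by have := hk.wS_cont σ; fun_prop) (Eventually.of_forall fun _ => ENNReal.ofReal_lt_top)]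
  congr 1; funext h
  rw [ENNReal.toReal_ofReal (hk.wS_nonneg hσ h)]

lemma Ker.integrable_nuS (hk : Ker c w ψ B) {σ : ℝ} (hσ : 0 < σ) {E : Type*} [NormedAddCommGroup E]
    [NormedSpace ℝ E] (f : ℝ → E) : Integrable f (nuS w σ) ↔ Integrable (fun h => wS w σ h • f h) := by
  rw [nuS, integrable_withDensity_iff_integrable_smul'
    (by have := hk.wS_cont σ; fun_prop) (Eventually.of_forall fun _ => ENNReal.ofReal_lt_top)]
  have : ∀ h, (ENNReal.ofReal (wS w σ h)).toReal = wS w σ h :=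
    fun h => ENNReal.toReal_ofReal (hk.wS_nonneg hσ h)
  simp only [this]

lemma Ker.density_diff (hk : Ker c w ψ B) (C₀ : ℝ) (hC₀ : 0 < C₀) (m : ℕ) :
    ∃ C : ℝ, 0 < C ∧ ∀ (σ : ℝ) (lam : Measure ℝ) (b : ℕ → ℂ), 1 ≤ σ → IsProbabilityMeasure lam →
      (∀ u : ℝ, |u| ≤ c * σ → ‖(∫ s : ℝ, Complex.exp (-(u * s) * Complex.I) ∂lam) -
        Complex.exp (-(u : ℂ) ^ 2 / 2) *
          (1 + ∑ j ∈ Finset.range (3 * m), b j * (-u * Complex.I) ^ (j + 3))‖ ≤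
          C₀ * (1 / σ) ^ m * (|u| ^ (3 * m + 3) * Real.exp (- u ^ 2 / 4))) →
      ∀ y, ‖((∫ s, wS w σ (y - s) ∂lam : ℝ) : ℂ) - ∫ h, qf (3 * m) b (y - h) * (wS w σ h : ℂ)‖ ≤
        C * (1 / σ) ^ m := by
  have hint : Integrable (fun u : ℝ => |u| ^ (3 * m + 3) * Real.exp (- u ^ 2 / 4)) := by
    have := integrable_rpow_mul_exp_neg_mul_sq (b := 1/4) (by norm_num) (s := (3 * m + 3 : ℕ))
      (by have : (0:ℝ) ≤ ((3 * m + 3 : ℕ) : ℝ) := by positivity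
          linarith)
    refine this.norm.congr (Eventually.of_forall fun u => ?_)
    simp only [norm_mul, Real.norm_eq_abs, Real.rpow_natCast, abs_pow, Real.abs_exp]
    congr 2; ring
  set J := ∫ u : ℝ, |u| ^ (3 * m + 3) * Real.exp (- u ^ 2 / 4) with hJ
  have hJ0 : 0 ≤ J := integral_nonneg fun u => by positivity
  have hB : 0 ≤ B := (norm_nonneg _).trans (hk.pbd 0)
  refine ⟨B * C₀ * J + 1, by positivity, fun σ lam b hσ hlam hexp y => ?_⟩
  have hσ0 : 0 < σ := by linarith
  have e1 : ((∫ s, wS w σ (y - s) ∂lam : ℝ) : ℂ) = ∫ u : ℝ, Complex.exp (u * y * Complex.I) * ψ (u / σ) *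
        ∫ s : ℝ, Complex.exp (-(u * s) * Complex.I) ∂lam := by
    have := smooth_fourier w ψ hk.pint hk.ft σ hσ0 lam (fun _ => 1) (integrable_const _) y
    simp only [one_mul] at this
    rw [← this, ← integral_complex_ofReal]; rfl
  have e2 : ∫ h, qf (3 * m) b (y - h) * (wS w σ h : ℂ) =
      ∫ u : ℝ, Complex.exp (u * y * Complex.I) * ψ (u / σ) *
        (Complex.exp (-(u:ℂ) ^ 2 / 2) *
      (1 + ∑ j ∈ Finset.range (3 * m), b j * (-u * Complex.I) ^ (j + 3))) := by
    have := smooth_fourier w ψ hk.pint hk.ft σ hσ0 volume (qf (3 * m) b) (qf_integrable _ _) y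
    simp only [qf_fourier] at this
    rw [← this, ← integral_sub_left_eq_self _ volume y]
    simp only [sub_sub_cancel]; rfl
  have nrm : ∀ t s : ℝ, ‖Complex.exp (t * s * Complex.I)‖ = 1 := fun t s => by
    rw [show (t * s * Complex.I : ℂ) = ((t * s : ℝ) : ℂ) * Complex.I by push_cast; ring,
      Complex.norm_exp_ofReal_mul_I]
  have hpi : Integrable (fun u : ℝ => Complex.exp (u * y * Complex.I) * ψ (u / σ)) := by
    refine (hk.pint.comp_div hσ0.ne').bdd_mul (c := 1) (by fun_prop)
      (Eventually.of_forall fun u => (nrm u y).le)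
  have i1 : Integrable (fun u : ℝ => Complex.exp (u * y * Complex.I) * ψ (u / σ) *
        ∫ s : ℝ, Complex.exp (-(u * s) * Complex.I) ∂lam) := by
    refine hpi.mul_bdd (c := 1) ?_ (Eventually.of_forall fun u => ?_)
    · have : (fun u : ℝ => ∫ s : ℝ, Complex.exp (-(u * s) * Complex.I) ∂lam) =
        fun u : ℝ => charFun lam (-u) := by
        funext u; rw [charFun_apply_real]; congr 1; funext s; congr 1; push_cast; ring
      rw [this]
      exact (measurable_charFun.comp measurable_neg).aestronglyMeasurable
    · refine (norm_integral_le_integral_norm _).trans ?_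
      have : ∀ s : ℝ, ‖Complex.exp (-(u * s) * Complex.I)‖ = 1 := fun s => by
        have := nrm (-u) s
        push_cast at this
        rwa [neg_mul] at this
      simp only [this]; simp
  have i2 : Integrable (fun u : ℝ => Complex.exp (u * y * Complex.I) * ψ (u / σ) *
        (Complex.exp (-(u:ℂ) ^ 2 / 2) *
      (1 + ∑ j ∈ Finset.range (3 * m), b j * (-u * Complex.I) ^ (j + 3)))) := by
    simp only [← qf_fourier]
    refine hpi.mul_bdd (c := ∫ s, ‖qf (3*m) b s‖) ?_ (Eventually.of_forall fun u => ?_)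
    · simp only [qf_fourier]
      exact Continuous.aestronglyMeasurable (by fun_prop)
    · refine (norm_integral_le_integral_norm _).trans_eq ?_
      congr 1; funext s
      have := nrm (-u) s
      push_cast at this
      rw [neg_mul] at this
      rw [norm_mul, this, mul_one]
  rw [e1, e2, ← integral_sub i1 i2]
  calc _ ≤ ∫ u : ℝ, B * C₀ * (1 / σ) ^ m * (|u| ^ (3 * m + 3) * Real.exp (- u ^ 2 / 4)) := by
        refine norm_integral_le_of_norm_le (hint.const_mul _) (Eventually.of_forall fun u => ?_)
        rw [← mul_sub, norm_mul, norm_mul, nrm, one_mul]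
        by_cases hu : |u| ≤ c * σ
        · calc _ ≤ B * (C₀ * (1 / σ) ^ m * (|u| ^ (3 * m + 3) * Real.exp (- u ^ 2 / 4))) :=
                mul_le_mul (hk.pbd _) (hexp u hu) (norm_nonneg _) hB
            _ = _ := by ring
        · rw [hk.supp, norm_zero, zero_mul]
          · positivity
          · rw [abs_div, abs_of_pos hσ0, lt_div_iff₀ hσ0]; linarith
    _ = B * C₀ * J * (1 / σ) ^ m := by rw [integral_const_mul]; ring
    _ ≤ _ := by gcongr; linarith

end
end WCLT

end


section
namespace WCLT
variable {c : ℝ} {w : ℝ → ℝ} {ψ : ℝ → ℂ} {B : ℝ}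

lemma Ker.lawT_prob (hk : Ker c w ψ B) {σ : ℝ} (hσ : 0 < σ) (lam : Measure ℝ) [IsProbabilityMeasure lam] :
    IsProbabilityMeasure (lawT lam w σ) := by
  have := hk.nuS_prob hσ
  exact Measure.isProbabilityMeasure_map (by fun_prop)

lemma Ker.wS_trans_int (hk : Ker c w ψ B) {σ : ℝ} (hσ : 0 < σ) (lam : Measure ℝ)
    [IsProbabilityMeasure lam] (a x : ℝ) :
    Integrable (fun p : ℝ × ℝ => wS w σ (p.2 - p.1)) (lam.prod (volume.restrict (Set.Ioc a x))) := by
  refine Integrable.of_bound (C := σ * ∫ t, ‖ψ t‖)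
    (by have := hk.wS_cont σ; fun_prop) (Eventually.of_forall fun p => ?_)
  rw [Real.norm_of_nonneg (hk.wS_nonneg hσ _)]
  exact mul_le_mul_of_nonneg_left (hk.bdd _) hσ.le

lemma Ker.cdf_sub (hk : Ker c w ψ B) {σ : ℝ} (hσ : 0 < σ) (lam : Measure ℝ) [IsProbabilityMeasure lam]
    (a x : ℝ) (hax : a ≤ x) :
    cdf (lawT lam w σ) x - cdf (lawT lam w σ) a = ∫ y in a..x, ∫ s, wS w σ (y - s) ∂lam := by
  have := hk.nuS_prob hσ
  have := hk.lawT_prob hσ lam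
  have h1 : cdf (lawT lam w σ) x - cdf (lawT lam w σ) a = (lawT lam w σ).real (Set.Ioc a x) := by
    have hset : Set.Ioc a x = Set.Iic x \ Set.Iic a := by ext y; simp [and_comm]
    rw [cdf_eq_real, cdf_eq_real, hset, measureReal_sdiff (Set.Iic_subset_Iic.2 hax)
      measurableSet_Iic]
  have h2 : ∀ s, (nuS w σ) ((fun h => s + h) ⁻¹' Set.Ioc a x) =
      ENNReal.ofReal (∫ y in a..x, wS w σ (y - s)) := by
    intro s
    have : (fun h => s + h) ⁻¹' Set.Ioc a x = Set.Ioc (a - s) (x - s) := by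
      ext h; simp [sub_lt_iff_lt_add', le_sub_iff_add_le']
    rw [this, nuS, withDensity_apply _ measurableSet_Ioc,
      ← ofReal_integral_eq_lintegral_ofReal (hk.wS_int hσ).integrableOn
        (Eventually.of_forall (hk.wS_nonneg hσ)), ← intervalIntegral.integral_of_le (by linarith)]
    rw [intervalIntegral.integral_comp_sub_right]
  have h3 : (lawT lam w σ) (Set.Ioc a x) = ∫⁻ s, ENNReal.ofReal (∫ y in a..x, wS w σ (y - s)) ∂lam := by
    rw [lawT, Measure.map_apply (by fun_prop) measurableSet_Ioc,
      Measure.prod_apply ((by fun_prop : Measurable (fun z : ℝ × ℝ => z.1 + z.2)) measurableSet_Ioc)]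
    refine lintegral_congr fun s => ?_
    rw [← h2]; rfl
  have hint := hk.wS_trans_int hσ lam a x
  rw [h1, measureReal_def, h3, ← integral_eq_lintegral_of_nonneg_ae]
  · simp only [intervalIntegral.integral_of_le hax]
    exact integral_integral_swap (f := fun s y => wS w σ (y - s)) hint
  · exact Eventually.of_forall fun s =>
      intervalIntegral.integral_nonneg hax fun y _ => hk.wS_nonneg hσ _
  · simp only [intervalIntegral.integral_of_le hax]
    exact hint.integral_prod_left.aestronglyMeasurable

lemma gphi_le_one (s : ℝ) : gphi s ≤ 1 := by
  refine (gphi_le s).trans ?_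
  rw [← Real.exp_add]
  refine Real.exp_le_one_iff.2 ?_
  nlinarith [sq_nonneg s]

lemma qf_bdd (N : ℕ) (b : ℕ → ℂ) : ∃ C, ∀ s, ‖qf N b s‖ ≤ C := by
  have h : ∀ j, ∃ C, ∀ s, ‖((gphi s * (He (j + 3)).eval s : ℝ) : ℂ)‖ ≤ C := by
    intro j
    obtain ⟨C, hC, h⟩ := poly_bound (He (j+3))
    obtain ⟨C', hC', h'⟩ := polygphi (He (j+3)).natDegree
    refine ⟨C * C', fun s => ?_⟩
    rw [Complex.norm_real, Real.norm_eq_abs, abs_mul, abs_of_pos (gphi_pos s)]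
    have h2 : Real.exp (- s ^ 2 / 4) ≤ 1 := Real.exp_le_one_iff.2 (by nlinarith [sq_nonneg s])
    have := gphi_pos s
    calc _ ≤ gphi s * (C * (1 + |s|) ^ (He (j+3)).natDegree) := by gcongr; exact h s
      _ = C * ((1 + |s|) ^ (He (j+3)).natDegree * gphi s) := by ring
      _ ≤ C * C' := by
        gcongr; refine (h' s).trans ?_; nlinarith
  choose D hD using h
  refine ⟨1 + ∑ j ∈ Finset.range N, ‖b j‖ * D j, fun s => ?_⟩
  unfold qf
  refine (norm_add_le _ _).trans (add_le_add ?_ ((norm_sum_le _ _).trans (Finset.sum_le_sum fun j _ => ?_)))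
  · rw [Complex.norm_real, Real.norm_of_nonneg (gphi_pos s).le]; exact gphi_le_one s
  · rw [norm_mul]; exact mul_le_mul_of_nonneg_left (hD j s) (norm_nonneg _)

lemma Ker.Q_sub (hk : Ker c w ψ B) {σ : ℝ} (hσ : 0 < σ) (N : ℕ) (b : ℕ → ℂ) (a x : ℝ) (hax : a ≤ x) :
    ∫ h, (Qf N b (x - h) - Qf N b (a - h)) * (wS w σ h : ℂ) =
      ∫ y in a..x, ∫ h, qf N b (y - h) * (wS w σ h : ℂ) := by
  obtain ⟨C, hC⟩ := qf_bdd N b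
  have hint : Integrable (fun p : ℝ × ℝ => qf N b (p.2 - p.1) * (wS w σ p.1 : ℂ))
      (volume.prod (volume.restrict (Set.Ioc a x))) := by
    have h0 : Integrable (fun p : ℝ × ℝ => (wS w σ p.1 : ℂ) * 1)
      (volume.prod (volume.restrict (Set.Ioc a x))) :=
      (hk.wS_int hσ).ofReal.mul_prod (integrable_const (1:ℂ))
    simp only [mul_one] at h0
    refine h0.bdd_mul (c := C) (by have := qf_cont N b; fun_prop) (Eventually.of_forall fun p => hC _)
  simp only [intervalIntegral.integral_of_le hax]
  rw [← integral_integral_swap (f := fun h y => qf N b (y - h) * (wS w σ h : ℂ)) hint]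
  congr 1; funext h
  rw [integral_mul_const]
  congr 1
  rw [← intervalIntegral.integral_of_le hax]
  have hd : ∀ y ∈ Set.uIcc a x, HasDerivAt (fun y => Qf N b (y - h)) (qf N b (y - h)) y := by
    intro y _
    exact (hasDerivAt_Qf N b (y - h)).comp_sub_const y h
  rw [intervalIntegral.integral_eq_sub_of_hasDerivAt hd
    ((Continuous.intervalIntegrable (by have := qf_cont N b; fun_prop)) _ _)]

lemma Ker.cdf_diff (hk : Ker c w ψ B) (C₀ : ℝ) (hC₀ : 0 < C₀) (m : ℕ) :
    ∃ C : ℝ, 0 < C ∧ ∀ (σ : ℝ) (lam : Measure ℝ) (b : ℕ → ℂ), 1 ≤ σ → IsProbabilityMeasure lam →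
      (∀ u : ℝ, |u| ≤ c * σ → ‖(∫ s : ℝ, Complex.exp (-(u * s) * Complex.I) ∂lam) -
        Complex.exp (-(u : ℂ) ^ 2 / 2) *
          (1 + ∑ j ∈ Finset.range (3 * m), b j * (-u * Complex.I) ^ (j + 3))‖ ≤
          C₀ * (1 / σ) ^ m * (|u| ^ (3 * m + 3) * Real.exp (- u ^ 2 / 4))) →
      ∀ a x, a ≤ x → ‖((cdf (lawT lam w σ) x - cdf (lawT lam w σ) a : ℝ) : ℂ) -
        ∫ h, (Qf (3 * m) b (x - h) - Qf (3 * m) b (a - h)) * (wS w σ h : ℂ)‖ ≤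
        C * (1 / σ) ^ m * (x - a) := by
  obtain ⟨C, hC, h⟩ := hk.density_diff C₀ hC₀ m
  refine ⟨C, hC, fun σ lam b hσ hlam hexp a x hax => ?_⟩
  have hσ0 : 0 < σ := by linarith
  have hd := h σ lam b hσ hlam hexp
  have hcont1 : Continuous (fun y => ∫ s, wS w σ (y - s) ∂lam) := by
    refine continuous_of_dominated (bound := fun _ => σ * ∫ t, ‖ψ t‖)
      (fun y => by have := hk.wS_cont σ; exact Continuous.aestronglyMeasurable (by fun_prop))
      (fun y => Eventually.of_forall fun s => ?_) (integrable_const _)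
      (Eventually.of_forall fun s => by have := hk.wS_cont σ; fun_prop)
    rw [Real.norm_of_nonneg (hk.wS_nonneg hσ0 _)]
    exact mul_le_mul_of_nonneg_left (hk.bdd _) hσ0.le
  have hcont2 : Continuous (fun y => ∫ h, qf (3 * m) b (y - h) * (wS w σ h : ℂ)) := by
    obtain ⟨C, hC⟩ := qf_bdd (3 * m) b
    refine continuous_of_dominated (bound := fun h => C * wS w σ h)
      (fun y => by
        have := hk.wS_cont σ; have := qf_cont (3 * m) b
        exact Continuous.aestronglyMeasurable (by fun_prop))
      (fun y => Eventually.of_forall fun s => ?_) ((hk.wS_int hσ0).const_mul _)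
      (Eventually.of_forall fun s => by have := qf_cont (3 * m) b; fun_prop)
    rw [norm_mul, Complex.norm_real, Real.norm_of_nonneg (hk.wS_nonneg hσ0 _)]
    exact mul_le_mul_of_nonneg_right (hC _) (hk.wS_nonneg hσ0 _)
  have hc1 : Continuous (fun y => ((∫ s, wS w σ (y - s) ∂lam : ℝ) : ℂ)) :=
    Complex.continuous_ofReal.comp hcont1
  rw [hk.cdf_sub hσ0 lam a x hax, hk.Q_sub hσ0 _ b a x hax, ← intervalIntegral.integral_ofReal,
    ← intervalIntegral.integral_sub (hc1.intervalIntegrable _ _)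
      (hcont2.intervalIntegrable _ _)]
  refine (intervalIntegral.norm_integral_le_of_norm_le_const fun y _ => hd y).trans_eq ?_
  rw [abs_of_nonneg (by linarith)]

end WCLT

end


section
namespace WCLT
variable {c : ℝ} {w : ℝ → ℝ} {ψ : ℝ → ℂ} {B : ℝ}

lemma Phi_nonneg (s : ℝ) : 0 ≤ Phi s := cdf_nonneg _ _
lemma Phi_le_one (s : ℝ) : Phi s ≤ 1 := cdf_le_one _ _

lemma Phi_decay (M : ℕ) : ∃ C : ℝ, 0 < C ∧ ∀ s ≤ 0, (1 + |s|) ^ M * Phi s ≤ C := by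
  have hi := polygphi_integrable M
  have hn : 0 ≤ ∫ t, (1 + |t|) ^ M * gphi t := integral_nonneg fun t =>
    mul_nonneg (by positivity) (gphi_pos t).le
  refine ⟨(∫ t, (1 + |t|) ^ M * gphi t) + 1, by positivity, fun s hs => ?_⟩
  rw [Phi_eq, ← integral_const_mul]
  have h1 : ∫ t in Set.Iic s, (1 + |s|) ^ M * gphi t ≤ ∫ t in Set.Iic s, (1 + |t|) ^ M * gphi t := by
    refine setIntegral_mono_on (gphi_integrable.const_mul _).integrableOn hi.integrableOn
      measurableSet_Iic fun t ht => ?_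
    have : |s| ≤ |t| := by
      rw [abs_of_nonpos hs, abs_of_nonpos (le_trans ht hs)]; linarith [Set.mem_Iic.1 ht]
    have := gphi_pos t
    gcongr
  have h2 : ∫ t in Set.Iic s, (1 + |t|) ^ M * gphi t ≤ ∫ t, (1 + |t|) ^ M * gphi t :=
    setIntegral_le_integral hi (Eventually.of_forall fun t => mul_nonneg (by positivity) (gphi_pos t).le)
  linarith

lemma Qf_bound (N : ℕ) (C₀ : ℝ) (hC₀ : 0 < C₀) : ∃ (C : ℝ) (k : ℕ), 0 < C ∧
    ∀ (σ : ℝ) (b : ℕ → ℂ), 1 ≤ σ → (∀ j < N, ‖b j‖ ≤ C₀ / σ) →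
      ∀ s, ‖Qf N b s - Phi s‖ ≤ C / σ * ((1 + |s|) ^ k * gphi s) := by
  obtain ⟨C, k, hC, h⟩ := He_bound (N + 2)
  refine ⟨N * C₀ * C + 1, k, by positivity, fun σ b hσ hb s => ?_⟩
  have hg := gphi_pos s
  have : Qf N b s - Phi s = - ∑ j ∈ Finset.range N, b j * ((gphi s * (He (j + 2)).eval s : ℝ) : ℂ) := by
    unfold Qf; ring
  rw [this, norm_neg]
  calc _ ≤ ∑ j ∈ Finset.range N, C₀ / σ * (gphi s * (C * (1 + |s|) ^ k)) := by
        refine (norm_sum_le _ _).trans (Finset.sum_le_sum fun j hj => ?_)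
        rw [norm_mul, Complex.norm_real, Real.norm_eq_abs, abs_mul, abs_of_pos hg]
        have hj' := Finset.mem_range.1 hj
        gcongr
        · exact hb j hj'
        · exact h (j + 2) (by omega) s
    _ = N * C₀ * C / σ * ((1 + |s|) ^ k * gphi s) := by
        rw [Finset.sum_const, Finset.card_range, nsmul_eq_mul]; ring
    _ ≤ _ := by gcongr; linarith

lemma gphi_shift (x h : ℝ) (hxh : |x| * |h| ≤ 1) : gphi (x - h) ≤ Real.exp 1 * gphi x := by
  rw [gphi_eq, gphi_eq, mul_left_comm, ← Real.exp_add]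
  gcongr
  have : x * h ≤ 1 := (le_abs_self _).trans (by rwa [abs_mul])
  nlinarith [sq_nonneg h]

lemma Phi_shift (x h : ℝ) (hxh : |x| * |h| ≤ 1) : |Phi (x - h) - Phi x| ≤ Real.exp 1 * gphi x * |h| := by
  rw [Phi_sub, ← Real.norm_eq_abs]
  have := intervalIntegral.norm_integral_le_of_norm_le_const (a := x) (b := x - h) (f := gphi)
    (C := Real.exp 1 * gphi x) (fun t ht => ?_)
  · refine this.trans_eq ?_
    rw [show x - h - x = - h by ring, abs_neg]
  · rw [Real.norm_of_nonneg (gphi_pos t).le]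
    have h1 : |x - t| ≤ |h| := by
      have := Set.abs_sub_left_of_mem_uIcc (Set.uIoc_subset_uIcc ht)
      rw [abs_sub_comm]
      simpa [abs_neg] using this
    have := gphi_shift x (x - t) (le_trans (by gcongr) hxh)
    simpa using this

lemma Ker.T_mom (hk : Ker c w ψ B) {σ : ℝ} (hσ : 1 ≤ σ) (lam : Measure ℝ) [IsProbabilityMeasure lam]
    (k : ℕ) (hX : Integrable (fun x => |x| ^ k) lam) :
    Integrable (fun t => |t| ^ k) (lawT lam w σ) ∧
    ∫ t, |t| ^ k ∂(lawT lam w σ) ≤ 2 ^ k * (∫ x, |x| ^ k ∂lam + (∫ y, |y| ^ k * w y)) := by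
  have hσ0 : 0 < σ := by linarith
  have := hk.nuS_prob hσ0
  have hh : Integrable (fun h => |h| ^ k) (nuS w σ) := by
    rw [hk.integrable_nuS hσ0]
    refine (hk.wS_mom hσ0 k).1.congr (Eventually.of_forall fun h => ?_)
    simp [mul_comm]
  have hhe : ∫ h, |h| ^ k ∂(nuS w σ) ≤ ∫ y, |y| ^ k * w y := by
    rw [hk.integral_nuS hσ0]
    have := (hk.wS_mom hσ0 k).2
    simp only [smul_eq_mul, mul_comm (wS w σ _)]
    rw [this]
    have h0 : 0 ≤ ∫ y, |y| ^ k * w y := integral_nonneg fun y => mul_nonneg (by positivity) (hk.nonneg y)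
    refine mul_le_of_le_one_right h0 (pow_le_one₀ (by positivity) ?_)
    rw [div_le_one hσ0]; exact hσ
  have hle : ∀ z : ℝ × ℝ, |z.1 + z.2| ^ k ≤ 2 ^ k * (|z.1| ^ k + |z.2| ^ k) := by
    intro z
    have h1 : |z.1 + z.2| ≤ 2 * max |z.1| |z.2| := by
      have := abs_add_le z.1 z.2
      linarith [le_max_left |z.1| |z.2|, le_max_right |z.1| |z.2|]
    calc _ ≤ (2 * max |z.1| |z.2|) ^ k := by gcongr
      _ = 2 ^ k * (max |z.1| |z.2|) ^ k := mul_pow _ _ _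
      _ ≤ _ := by
        gcongr
        rcases max_cases |z.1| |z.2| with ⟨h, _⟩ | ⟨h, _⟩ <;> rw [h] <;>
          linarith [pow_nonneg (abs_nonneg z.1) k, pow_nonneg (abs_nonneg z.2) k]
  have hi : Integrable (fun z : ℝ × ℝ => 2 ^ k * (|z.1| ^ k + |z.2| ^ k)) (lam.prod (nuS w σ)) :=
    ((hX.comp_fst _).add (hh.comp_snd _)).const_mul _
  have hi2 : Integrable (fun z : ℝ × ℝ => |z.1 + z.2| ^ k) (lam.prod (nuS w σ)) :=
    hi.mono' (by fun_prop) (Eventually.of_forall fun z => by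
      rw [Real.norm_of_nonneg (by positivity)]; exact hle z)
  constructor
  · rw [lawT, integrable_map_measure (by fun_prop) (by fun_prop)]
    exact hi2
  · rw [lawT, integral_map (by fun_prop) (by fun_prop)]
    refine (integral_mono hi2 hi hle).trans ?_
    rw [integral_const_mul, integral_add (hX.comp_fst _) (hh.comp_snd _), integral_fun_fst (fun x => |x| ^ k),
      integral_fun_snd (fun x => |x| ^ k)]
    simp only [probReal_univ, one_smul]
    gcongr

lemma Ker.avg_bound (hk : Ker c w ψ B) {σ : ℝ} (hσ : 0 < σ) (F : ℝ → ℂ) (α β κ : ℝ) (i j : ℕ)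
    (hF : ∀ h, ‖F h‖ ≤ α + β * |h| ^ i + κ * |h| ^ j) :
    ‖∫ h, F h * (wS w σ h : ℂ)‖ ≤ α + β * ((∫ y, |y| ^ i * w y) * (1 / σ) ^ i) +
      κ * ((∫ y, |y| ^ j * w y) * (1 / σ) ^ j) := by
  rw [← (hk.wS_mom hσ i).2, ← (hk.wS_mom hσ j).2, ← integral_const_mul, ← integral_const_mul]
  have e : α = ∫ h, α * wS w σ h := by rw [integral_const_mul, hk.wS_one hσ, mul_one]
  conv_rhs => rw [e]
  have i1 : Integrable (fun h => α * wS w σ h + β * (|h| ^ i * wS w σ h)) :=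
    ((hk.wS_int hσ).const_mul _).add ((hk.wS_mom hσ i).1.const_mul _)
  have i2 := (hk.wS_mom hσ j).1.const_mul κ
  rw [← integral_add ((hk.wS_int hσ).const_mul _) ((hk.wS_mom hσ i).1.const_mul _),
    ← integral_add i1 i2]
  refine norm_integral_le_of_norm_le (i1.add i2)
    (Eventually.of_forall fun h => ?_)
  rw [norm_mul, Complex.norm_real, Real.norm_of_nonneg (hk.wS_nonneg hσ h)]
  refine (mul_le_mul_of_nonneg_right (hF h) (hk.wS_nonneg hσ h)).trans_eq ?_
  ring

end WCLT

end


section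
namespace WCLT
variable {c : ℝ} {w : ℝ → ℝ} {ψ : ℝ → ℂ} {B : ℝ}

set_option maxHeartbeats 1000000 in
lemma Ker.D_bound (hk : Ker c w ψ B) (C₀ A : ℝ) (hC₀ : 0 < C₀) (m : ℕ) :
    ∃ (C : ℝ) (k : ℕ), 0 < C ∧ ∀ (σ L : ℝ) (lam : Measure ℝ) (b : ℕ → ℂ), 1 ≤ σ → 0 ≤ L →
      (3 + L) ^ 2 ≤ σ → IsProbabilityMeasure lam →
      Integrable (fun x => |x| ^ m) lam → ∫ x, |x| ^ m ∂lam ≤ A →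
      (∀ j < 3 * (m + 1), ‖b j‖ ≤ C₀ / σ) →
      (∀ u : ℝ, |u| ≤ c * σ → ‖(∫ s : ℝ, Complex.exp (-(u * s) * Complex.I) ∂lam) -
        Complex.exp (-(u : ℂ) ^ 2 / 2) *
          (1 + ∑ j ∈ Finset.range (3 * (m + 1)), b j * (-u * Complex.I) ^ (j + 3))‖ ≤
          C₀ * (1 / σ) ^ (m + 1) * (|u| ^ (3 * (m + 1) + 3) * Real.exp (- u ^ 2 / 4))) →
      ∀ x, |x| ≤ L + 1 → |cdf (lawT lam w σ) x - Phi x| ≤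
        C * (1 / σ) * (2 + |x|) ^ k * gphi x + C * (1 / σ) ^ m := by
  obtain ⟨C1, hC1, h1⟩ := hk.cdf_diff C₀ hC₀ (m + 1)
  obtain ⟨C2, k, hC2, h2⟩ := Qf_bound (3 * (m + 1)) C₀ hC₀
  obtain ⟨C3, hC3, h3⟩ := Phi_decay m
  obtain ⟨C4, hC4, h4⟩ := polygphi (k + m)
  obtain ⟨C5, hC5, h5⟩ := polygphi k
  set I1 := ∫ y, |y| ^ 1 * w y with hI1
  set Im := ∫ y, |y| ^ m * w y with hIm
  set I2 := ∫ y, |y| ^ (2 * m) * w y with hI2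
  have hpos : ∀ k : ℕ, 0 ≤ ∫ y, |y| ^ k * w y := fun k =>
    integral_nonneg fun y => mul_nonneg (by positivity) (hk.nonneg y)
  have hI1p : 0 ≤ I1 := hpos 1
  have hImp : 0 ≤ Im := hpos m
  have hI2p : 0 ≤ I2 := hpos (2 * m)
  set CQ := 1 + C2 * C5 with hCQ
  set E := Real.exp 1 with hE
  have hEp : 0 < E := Real.exp_pos 1
  set K4 := (CQ + 1) * I2
  set K3 := 2 ^ m * (C3 + C2 * C4) + 2 ^ m * CQ * Im
  set K2 := 2 ^ m * (|A| + Im)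
  refine ⟨(C2 * E + E * I1) + (2 * C1 + K2 + K3 + K4), k, by positivity,
    fun σ L lam b hσ hL hLσ hlam hXi hXA hb hexp x hx => ?_⟩
  have hσ0 : 0 < σ := by linarith
  have hT := hk.lawT_prob hσ0 lam
  have hQ := h2 σ b hσ hb
  have hexp4 : ∀ s : ℝ, Real.exp (- s ^ 2 / 4) ≤ 1 := fun s =>
    Real.exp_le_one_iff.2 (by nlinarith [sq_nonneg s])
  have hiσ : 1 / σ ≤ 1 := by rw [div_le_one hσ0]; exact hσ
  have hQb : ∀ s, ‖Qf (3 * (m + 1)) b s‖ ≤ CQ := by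
    intro s
    have e : Qf (3 * (m + 1)) b s = Phi s + (Qf (3 * (m + 1)) b s - Phi s) := by ring
    rw [e]
    refine (norm_add_le _ _).trans (add_le_add ?_ ((hQ s).trans ?_))
    · rw [Complex.norm_real, Real.norm_of_nonneg (Phi_nonneg s)]; exact Phi_le_one s
    · have := h5 s
      have h6 : (1 + |s|) ^ k * gphi s ≤ C5 := this.trans (mul_le_of_le_one_right hC5.le (hexp4 s))
      have h7 : C2 / σ ≤ C2 := div_le_self hC2.le hσ
      have := gphi_pos s
      gcongr
  -- piece 1
  have hL1 : L + 1 ≤ σ := by nlinarith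
  have hax : -σ ≤ x := by have := abs_le.1 (hx.trans hL1); linarith
  have hxσ : x ≤ σ := by have := abs_le.1 (hx.trans hL1); linarith
  have P1 := h1 σ lam b hσ hlam hexp (-σ) x hax
  have P1' : C1 * (1 / σ) ^ (m + 1) * (x - -σ) ≤ 2 * C1 * (1 / σ) ^ m := by
    calc _ ≤ C1 * (1 / σ) ^ (m + 1) * (2 * σ) := by gcongr; linarith
      _ = _ := by rw [pow_succ]; field_simp
  -- piece 2
  have P2 : cdf (lawT lam w σ) (-σ) ≤ K2 * (1 / σ) ^ m := by
    obtain ⟨i1, i2⟩ := hk.T_mom hσ lam m hXi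
    have hmk : σ ^ m * cdf (lawT lam w σ) (-σ) ≤ ∫ t, |t| ^ m ∂(lawT lam w σ) := by
      rw [cdf_eq_real]
      refine le_trans ?_ (mul_meas_ge_le_integral_of_nonneg (Eventually.of_forall fun t => by positivity) i1 (σ ^ m))
      gcongr
      · exact measure_ne_top _ _
      · intro t ht
        simp only [Set.mem_Iic] at ht
        simp only [Set.mem_ofPred_eq]
        gcongr
        rw [abs_of_nonpos (by linarith)]; linarith
    have : σ ^ m * cdf (lawT lam w σ) (-σ) ≤ K2 := by
      refine hmk.trans (i2.trans ?_)
      exact mul_le_mul_of_nonneg_left (add_le_add_left (hXA.trans (le_abs_self A)) _) (by positivity)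
    rw [one_div, inv_pow, ← div_eq_mul_inv, le_div_iff₀ (by positivity)]
    linarith
  -- piece 3
  have P3 : ‖∫ h, Qf (3 * (m + 1)) b (-σ - h) * (wS w σ h : ℂ)‖ ≤ K3 * (1 / σ) ^ m := by
    have := hk.avg_bound hσ0 (fun h => Qf (3 * (m + 1)) b (-σ - h)) (2 ^ m * (C3 + C2 * C4) * (1 / σ) ^ m)
      (2 ^ m * CQ) 0 m 0 (fun h => ?_)
    · refine this.trans_eq ?_
      simp only [K3]; ring
    · simp only [pow_zero, mul_one, add_zero]
      by_cases hh : |h| ≤ σ / 2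
      · have hs : -σ - h ≤ 0 := by have := abs_le.1 hh; linarith
        have hs' : σ / 2 ≤ 1 + |-σ - h| := by
          rw [abs_of_nonpos hs]; have := abs_le.1 hh; linarith
        set s := -σ - h
        have g1 : ‖Qf (3 * (m + 1)) b s‖ ≤ Phi s + C2 * ((1 + |s|) ^ k * gphi s) := by
          have e : Qf (3 * (m + 1)) b s = Phi s + (Qf (3 * (m + 1)) b s - Phi s) := by ring
          rw [e]
          refine (norm_add_le _ _).trans (add_le_add ?_ ((hQ s).trans ?_))
          · rw [Complex.norm_real, Real.norm_of_nonneg (Phi_nonneg s)]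
          · have h7 : C2 / σ ≤ C2 := div_le_self hC2.le hσ
            have := gphi_pos s
            gcongr
        have g2 : (1 + |s|) ^ m * ‖Qf (3 * (m + 1)) b s‖ ≤ C3 + C2 * C4 := by
          calc _ ≤ (1 + |s|) ^ m * (Phi s + C2 * ((1 + |s|) ^ k * gphi s)) := by gcongr
            _ = (1 + |s|) ^ m * Phi s + C2 * ((1 + |s|) ^ (k + m) * gphi s) := by rw [pow_add]; ring
            _ ≤ _ := by
              gcongr
              · exact h3 s hs
              · exact (h4 s).trans (mul_le_of_le_one_right hC4.le (hexp4 s))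
        have g3 : (σ / 2) ^ m * ‖Qf (3 * (m + 1)) b s‖ ≤ C3 + C2 * C4 := by
          refine le_trans ?_ g2; gcongr
        have g4 : ‖Qf (3 * (m + 1)) b s‖ ≤ 2 ^ m * (C3 + C2 * C4) * (1 / σ) ^ m := by
          rw [one_div, inv_pow, ← div_eq_mul_inv, le_div_iff₀ (by positivity)]
          rw [div_pow, div_mul_eq_mul_div, div_le_iff₀ (by positivity)] at g3
          linarith
        refine g4.trans (le_add_of_nonneg_right (by positivity))
      · push Not at hh
        refine (hQb _).trans ?_
        have : 1 ≤ (2 * |h|) ^ m := one_le_pow₀ (by linarith)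
        rw [mul_pow] at this
        have h8 : CQ ≤ 2 ^ m * CQ * |h| ^ m := by
          have hc : 0 ≤ CQ := by positivity
          nlinarith
        refine h8.trans (le_add_of_nonneg_left (by positivity))
  -- piece 4
  have P4 : ‖∫ h, (Qf (3 * (m + 1)) b (x - h) - Phi x) * (wS w σ h : ℂ)‖ ≤
      C2 * (1 / σ) * (2 + |x|) ^ k * (E * gphi x) + E * gphi x * (I1 * (1 / σ)) + K4 * (1 / σ) ^ m := by
    have hgx := gphi_pos x
    have := hk.avg_bound hσ0 (fun h => Qf (3 * (m + 1)) b (x - h) - Phi x)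
      (C2 * (1 / σ) * (2 + |x|) ^ k * (E * gphi x)) (E * gphi x) ((CQ + 1) * (3 + L) ^ (2 * m)) 1 (2 * m)
      (fun h => ?_)
    · refine this.trans ?_
      rw [pow_one (1 / σ)]
      refine add_le_add le_rfl ?_
      calc (CQ + 1) * (3 + L) ^ (2 * m) * (I2 * (1 / σ) ^ (2 * m))
          = (CQ + 1) * I2 * (((3 + L) ^ 2 * (1 / σ)) ^ m * (1 / σ) ^ m) := by
            rw [mul_pow, pow_mul, pow_mul]; ring
        _ ≤ (CQ + 1) * I2 * (1 * (1 / σ) ^ m) := by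
            have : ((3 + L) ^ 2 * (1 / σ)) ^ m ≤ 1 := by
              refine pow_le_one₀ (by positivity) ?_
              rw [mul_one_div, div_le_one hσ0]; exact hLσ
            gcongr
        _ = K4 * (1 / σ) ^ m := by rw [one_mul]
    · by_cases hh : (3 + L) * |h| ≤ 1
      · have hxh : |x| * |h| ≤ 1 := le_trans (by gcongr; linarith) hh
        have hh1 : |h| ≤ 1 := by nlinarith [abs_nonneg h]
        have e : Qf (3 * (m + 1)) b (x - h) - Phi x =
          (Qf (3 * (m + 1)) b (x - h) - Phi (x - h)) + ((Phi (x - h) - Phi x : ℝ) : ℂ) := by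
          push_cast; ring
        rw [e, pow_one]
        refine (norm_add_le _ _).trans ?_
        have q1 : ‖Qf (3 * (m + 1)) b (x - h) - Phi (x - h)‖ ≤ C2 * (1 / σ) * (2 + |x|) ^ k * (E * gphi x) := by
          refine (hQ _).trans ?_
          rw [mul_one_div, mul_assoc]
          have h9 := gphi_shift x h hxh
          have h10 : |x - h| ≤ |x| + |h| := abs_sub _ _
          have := gphi_pos (x - h)
          have h11 : 1 + |x - h| ≤ 2 + |x| := by linarith
          have h12 : (1 + |x - h|) ^ k ≤ (2 + |x|) ^ k := pow_le_pow_left₀ (by positivity) h11 k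
          exact mul_le_mul_of_nonneg_left (mul_le_mul h12 h9 this.le (by positivity)) (by positivity)
        have q2 : ‖((Phi (x - h) - Phi x : ℝ) : ℂ)‖ ≤ E * gphi x * |h| := by
          rw [Complex.norm_real]; exact Phi_shift x h hxh
        have : 0 ≤ (CQ + 1) * (3 + L) ^ (2 * m) * |h| ^ (2 * m) := by positivity
        linarith
      · push Not at hh
        have q1 : ‖Qf (3 * (m + 1)) b (x - h) - Phi x‖ ≤ CQ + 1 := by
          refine (norm_sub_le _ _).trans (add_le_add (hQb _) ?_)
          rw [Complex.norm_real, Real.norm_of_nonneg (Phi_nonneg x)]; exact Phi_le_one x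
        have q2 : 1 ≤ ((3 + L) * |h|) ^ (2 * m) := one_le_pow₀ hh.le
        rw [mul_pow] at q2
        have hc : 0 ≤ CQ + 1 := by positivity
        have q3 : CQ + 1 ≤ (CQ + 1) * (3 + L) ^ (2 * m) * |h| ^ (2 * m) := by
          rw [mul_assoc]; exact le_mul_of_one_le_right hc q2
        refine q1.trans (q3.trans (le_add_of_nonneg_left ?_))
        positivity
  -- assemble
  have hQc := Qf_cont (3 * (m + 1)) b
  have hwc := hk.wS_cont σ
  have hi : ∀ a : ℝ, Integrable (fun h => Qf (3 * (m + 1)) b (a - h) * (wS w σ h : ℂ)) := fun a =>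
    (hk.wS_int hσ0).ofReal.bdd_mul (c := CQ) (by fun_prop) (Eventually.of_forall fun h => hQb _)
  have hc : Integrable (fun h => (Phi x : ℂ) * (wS w σ h : ℂ)) := (hk.wS_int hσ0).ofReal.const_mul _
  have hphi : ∫ h, (Phi x : ℂ) * (wS w σ h : ℂ) = Phi x := by
    rw [integral_const_mul, integral_complex_ofReal, hk.wS_one hσ0]; simp
  simp only [sub_mul] at P1 P4
  rw [integral_sub (hi x) (hi _)] at P1
  rw [integral_sub (hi x) hc, hphi] at P4
  set Ix := ∫ h, Qf (3 * (m + 1)) b (x - h) * (wS w σ h : ℂ)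
  set Ia := ∫ h, Qf (3 * (m + 1)) b (-σ - h) * (wS w σ h : ℂ)
  set F := cdf (lawT lam w σ) with hF
  have hFa : 0 ≤ F (-σ) := cdf_nonneg _ _
  have key : ((F x - Phi x : ℝ) : ℂ) = (((F x - F (-σ) : ℝ) : ℂ) - (Ix - Ia)) + (F (-σ) : ℝ) - Ia + (Ix - Phi x) := by
    push_cast; ring
  have : |F x - Phi x| ≤ 2 * C1 * (1 / σ) ^ m + K2 * (1 / σ) ^ m + K3 * (1 / σ) ^ m +
      (C2 * (1 / σ) * (2 + |x|) ^ k * (E * gphi x) + E * gphi x * (I1 * (1 / σ)) + K4 * (1 / σ) ^ m) := by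
    rw [← Real.norm_eq_abs, ← Complex.norm_real, key]
    refine (norm_add_le _ _).trans (add_le_add ((norm_sub_le _ _).trans (add_le_add ((norm_add_le _ _).trans
      (add_le_add (P1.trans P1') ?_)) P3)) P4)
    rw [Complex.norm_real, Real.norm_of_nonneg hFa]; exact P2
  refine this.trans ?_
  have hgx := gphi_pos x
  have hone : 1 ≤ (2 + |x|) ^ k := one_le_pow₀ (by linarith [abs_nonneg x])
  have t1 : E * gphi x * (I1 * (1 / σ)) ≤ E * I1 * (1 / σ) * (2 + |x|) ^ k * gphi x := by
    calc _ = E * I1 * (1 / σ) * 1 * gphi x := by ring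
      _ ≤ _ := by gcongr
  have t2 : 0 ≤ (2 * C1 + K2 + K3 + K4) * ((1 / σ) * (2 + |x|) ^ k * gphi x) := by positivity
  have t3 : 0 ≤ (C2 * E + E * I1) * (1 / σ) ^ m := by positivity
  have t4 : (C2 * E + E * I1 + (2 * C1 + K2 + K3 + K4)) * (1 / σ) * (2 + |x|) ^ k * gphi x =
    C2 * (1 / σ) * (2 + |x|) ^ k * (E * gphi x) + E * I1 * (1 / σ) * (2 + |x|) ^ k * gphi x +
    (2 * C1 + K2 + K3 + K4) * ((1 / σ) * (2 + |x|) ^ k * gphi x) := by ring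
  have t5 : (C2 * E + E * I1 + (2 * C1 + K2 + K3 + K4)) * (1 / σ) ^ m = (C2 * E + E * I1) * (1 / σ) ^ m +
    (2 * C1 * (1 / σ) ^ m + K2 * (1 / σ) ^ m + K3 * (1 / σ) ^ m + K4 * (1 / σ) ^ m) := by ring
  rw [t4, t5]
  linarith

end WCLT

end


section
namespace WCLT

lemma Phi_incr (a b g : ℝ) (hab : a ≤ b) (h : ∀ t ∈ Set.Icc a b, g ≤ gphi t) :
    (b - a) * g ≤ Phi b - Phi a := by
  rw [Phi_sub]
  have := intervalIntegral.integral_mono_on hab (μ := volume) (f := fun _ => g) (g := gphi)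
    (by simp) (gphi_cont.intervalIntegrable _ _) h
  simpa using this

lemma couple_pt (F : Measure ℝ) (C σ L : ℝ) (k : ℕ) (hC : 0 < C) (hσ : 0 < σ)
    (hD : ∀ x, |x| ≤ L + 1 → |cdf F x - Phi x| ≤ C * (1 / σ) * (2 + |x|) ^ k * gphi x)
    (τ : ℝ → ℝ) (hτ : ∀ y x, τ y ≤ x ↔ Phi y ≤ cdf F x)
    (hL : 2 * C * Real.exp 1 ^ 2 * (4 + L) ^ (k + 1) ≤ σ) (y : ℝ) (hy : |y| ≤ L) :
    |τ y - y| ≤ 2 * C * Real.exp 1 ^ 2 * (3 + |y|) ^ k * (1 / σ) := by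
  set E := Real.exp 1 with hE
  have hE0 : 0 < E := Real.exp_pos 1
  set d := 2 * C * E ^ 2 * (3 + |y|) ^ k * (1 / σ) with hd
  have hd0 : 0 < d := by positivity
  have hya := abs_nonneg y
  have hd1 : (1 + |y|) * d ≤ 1 := by
    have : 2 * C * E ^ 2 * ((3 + |y|) ^ k * (1 + |y|)) ≤ σ := by
      refine le_trans ?_ hL
      rw [pow_succ (4 + L) k]
      have h1 : 3 + |y| ≤ 4 + L := by linarith
      have h2 : 1 + |y| ≤ 4 + L := by linarith
      gcongr
      exact pow_nonneg (by linarith) k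
    calc (1 + |y|) * d = 2 * C * E ^ 2 * ((3 + |y|) ^ k * (1 + |y|)) / σ := by rw [hd]; ring
      _ ≤ 1 := by rw [div_le_one hσ]; exact this
  have hd2 : d ≤ 1 := by nlinarith
  have gl : ∀ h, |h| ≤ d → gphi y ≤ E * gphi (y + h) ∧ gphi (y + h) ≤ E * gphi y := by
    intro h hh
    have a1 : |y + h| ≤ |y| + |h| := abs_add_le _ _
    have a0 := abs_nonneg h
    constructor
    · have := gphi_shift (y + h) h (by
        calc |y + h| * |h| ≤ (1 + |y|) * d := by
              apply mul_le_mul _ hh a0 (by positivity); linarith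
          _ ≤ 1 := hd1)
      simpa using this
    · have := gphi_shift y (-h) (by
        rw [abs_neg]
        calc |y| * |h| ≤ (1 + |y|) * d := by
              apply mul_le_mul _ hh a0 (by positivity); linarith
          _ ≤ 1 := hd1)
      simpa using this
  have hgy := gphi_pos y
  have main : ∀ h, |h| = d → |cdf F (y + h) - Phi (y + h)| < d * (gphi y / E) := by
    intro h hh
    have a1 : |y + h| ≤ |y| + |h| := abs_add_le _ _
    have h1 := hD (y + h) (by linarith)
    have h2 := (gl h hh.le).2
    have h3 : (2 + |y + h|) ^ k ≤ (3 + |y|) ^ k := pow_le_pow_left₀ (by positivity) (by linarith) k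
    have hg := gphi_pos (y + h)
    calc _ ≤ C * (1 / σ) * (2 + |y + h|) ^ k * gphi (y + h) := h1
      _ ≤ C * (1 / σ) * (3 + |y|) ^ k * (E * gphi y) := by gcongr
      _ < 2 * (C * (1 / σ) * (3 + |y|) ^ k * (E * gphi y)) := by
          have : 0 < C * (1 / σ) * (3 + |y|) ^ k * (E * gphi y) := by positivity
          linarith
      _ = d * (gphi y / E) := by rw [hd]; field_simp
  have low : ∀ t, |t - y| ≤ d → gphi y / E ≤ gphi t := by
    intro t ht
    have := (gl (t - y) ht).1
    rw [div_le_iff₀ hE0]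
    rw [add_sub_cancel] at this; linarith
  rw [abs_le]
  constructor
  · by_contra hc
    push Not at hc
    have h1 : τ y ≤ y + -d := by linarith
    rw [hτ] at h1
    have h2 := Phi_incr (y + -d) y (gphi y / E) (by linarith) (fun t ht => low t (by
      rw [abs_le]; constructor <;> linarith [ht.1, ht.2]))
    have h3 := (abs_lt.1 (main (-d) (by rw [abs_neg, abs_of_pos hd0]))).2
    have : (y - (y + -d)) * (gphi y / E) = d * (gphi y / E) := by ring
    linarith
  · have : τ y ≤ y + d := by
      rw [hτ]
      have h2 := Phi_incr y (y + d) (gphi y / E) (by linarith) (fun t ht => low t (by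
        rw [abs_le]; constructor <;> linarith [ht.1, ht.2]))
      have h3 := (abs_lt.1 (main d (abs_of_pos hd0))).1
      have : ((y + d) - y) * (gphi y / E) = d * (gphi y / E) := by ring
      linarith
    linarith

lemma exp4_gauss : Integrable (fun y : ℝ => Real.exp (y ^ 2 / 4)) (gaussianReal 0 1) := by
  rw [gaussianReal_of_var_ne_zero _ (by simp), integrable_withDensity_iff_integrable_smul'
    (by fun_prop) (Eventually.of_forall fun _ => by simp [gaussianPDF])]
  have := exp4_integrable.const_mul (Real.sqrt (2 * Real.pi))⁻¹
  refine this.congr (Eventually.of_forall fun s => ?_)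
  have e : (gaussianPDF 0 1 s).toReal = gphi s := by
    rw [gaussianPDF, ENNReal.toReal_ofReal (gaussianPDFReal_nonneg _ _ _)]; rfl
  simp only [e, smul_eq_mul, gphi_eq]
  rw [mul_assoc, ← Real.exp_add]
  congr 2; ring

lemma couple_Lp (p : ℝ) (hp : 1 ≤ p) (M : ℕ) (hM : 2 * p ≤ M) (D A : ℝ) (hD : 0 ≤ D) (k : ℕ) :
    ∃ Cst : ℝ, 0 < Cst ∧ ∀ (σ L : ℝ) (τ : ℝ → ℝ), 1 ≤ σ → 0 ≤ L → L ^ 2 = 8 * p * Real.log σ → Measurable τ →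
      (∀ y, |y| ≤ L → |τ y - y| ≤ D * (3 + |y|) ^ k * (1 / σ)) →
      Integrable (fun y => |τ y| ^ M) (gaussianReal 0 1) →
      ∫ y, |τ y| ^ M ∂(gaussianReal 0 1) ≤ A →
      ∫⁻ y, ENNReal.ofReal (|τ y - y| ^ p) ∂(gaussianReal 0 1) ≤ ENNReal.ofReal (Cst * (1 / σ) ^ p) := by
  obtain ⟨C1, hC1, h1⟩ := polyexp (k * M)
  obtain ⟨C2, hC2, h2⟩ := polyexp M
  set I := ∫ y, Real.exp (y ^ 2 / 4) ∂(gaussianReal 0 1)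
  have hI : 0 ≤ I := integral_nonneg fun y => (Real.exp_pos _).le
  set a := D ^ M * 3 ^ (k * M) * C1 + 3 + 2 ^ M * C2 with ha
  have ha0 : 0 ≤ a := by positivity
  refine ⟨a * I + 2 ^ M * |A| + 1, by positivity, fun σ L τ hσ hLp hL hτ hτ1 hτi hτA => ?_⟩
  have hσ0 : 0 < σ := by linarith
  have ec : ∀ (j : ℕ) (C : ℝ) (y : ℝ), (1 + |y|) ^ j * Real.exp (- y ^ 2 / 4) ≤ C →
      (1 + |y|) ^ j ≤ C * Real.exp (y ^ 2 / 4) := by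
    intro j C y h
    have e : Real.exp (- y ^ 2 / 4) * Real.exp (y ^ 2 / 4) = 1 := by
      rw [← Real.exp_add]; simp [neg_div]
    calc (1 + |y|) ^ j = (1 + |y|) ^ j * Real.exp (- y ^ 2 / 4) * Real.exp (y ^ 2 / 4) := by
          rw [mul_assoc, e, mul_one]
      _ ≤ _ := by gcongr
  have rp : ∀ (x q : ℝ), 0 ≤ x → 0 ≤ q → q ≤ M → x ^ q ≤ 1 + x ^ M := by
    intro x q hx hq hqM
    rcases le_total x 1 with h | h
    · have := Real.rpow_le_one hx h hq
      have : 0 ≤ x ^ M := by positivity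
      linarith
    · have := Real.rpow_le_rpow_of_exponent_le h hqM
      rw [Real.rpow_natCast] at this
      linarith
  have e1 : ∀ y : ℝ, 1 ≤ Real.exp (y ^ 2 / 4) := fun y => Real.one_le_exp (by positivity)
  have pt : ∀ y, |τ y - y| ^ p ≤ (a * Real.exp (y ^ 2 / 4) + 2 ^ M * |τ y| ^ M) * (1 / σ) ^ p := by
    intro y
    have hsp : 0 < (1 / σ) ^ p := by positivity
    have hC1e := ec _ _ y (h1 y)
    have hC2e := ec _ _ y (h2 y)
    have hee := e1 y
    rcases le_or_gt |y| L with hy | hy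
    · have b1 : |τ y - y| ^ p ≤ (D * (3 + |y|) ^ k) ^ p * (1 / σ) ^ p := by
        rw [← Real.mul_rpow (by positivity) (by positivity)]
        exact Real.rpow_le_rpow (abs_nonneg _) (hτ1 y hy) (by linarith)
      refine b1.trans (mul_le_mul_of_nonneg_right ?_ hsp.le)
      refine (rp _ p (by positivity) (by linarith) (by linarith)).trans ?_
      have b2 : (D * (3 + |y|) ^ k) ^ M ≤ D ^ M * 3 ^ (k * M) * (C1 * Real.exp (y ^ 2 / 4)) := by
        rw [mul_pow, ← pow_mul]
        calc D ^ M * (3 + |y|) ^ (k * M) ≤ D ^ M * (3 * (1 + |y|)) ^ (k * M) := by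
              gcongr; linarith [abs_nonneg y]
          _ = D ^ M * 3 ^ (k * M) * (1 + |y|) ^ (k * M) := by rw [mul_pow]; ring
          _ ≤ _ := by gcongr
      have b3 : 0 ≤ 2 ^ M * |τ y| ^ M := by positivity
      have b4 : 0 ≤ 2 ^ M * C2 * Real.exp (y ^ 2 / 4) := by positivity
      rw [ha]
      nlinarith
    · have hL0 : Real.exp (L ^ 2 / 4) = σ ^ (2 * p) := by
        rw [hL, Real.rpow_def_of_pos hσ0]; congr 1; ring
      have hLy : L ^ 2 ≤ y ^ 2 := by
        rw [← sq_abs y]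
        exact pow_le_pow_left₀ hLp hy.le 2
      set x := |τ y - y| with hx
      have hx0 : 0 ≤ x := abs_nonneg _
      have amgm : x ^ p ≤ (x ^ (2 * p) + σ ^ (2 * p)) * (1 / σ) ^ p := by
        have s1 : x ^ (2 * p) = (x ^ p) ^ 2 := by rw [mul_comm, Real.rpow_mul hx0]; norm_cast
        have s2 : σ ^ (2 * p) = (σ ^ p) ^ 2 := by rw [mul_comm, Real.rpow_mul hσ0.le]; norm_cast
        have s3 : (1 / σ) ^ p = 1 / σ ^ p := by rw [Real.div_rpow (by norm_num) hσ0.le, Real.one_rpow]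
        rw [s1, s2, s3, mul_one_div, le_div_iff₀ (by positivity)]
        nlinarith [sq_nonneg (x ^ p - σ ^ p), sq_nonneg (x ^ p), sq_nonneg (σ ^ p)]
      refine amgm.trans (mul_le_mul_of_nonneg_right ?_ hsp.le)
      have c1 : σ ^ (2 * p) ≤ Real.exp (y ^ 2 / 4) := by
        rw [← hL0]; exact Real.exp_le_exp.2 (by linarith)
      have c2 := rp x (2 * p) hx0 (by linarith) hM
      have c3 : x ^ M ≤ 2 ^ M * |τ y| ^ M + 2 ^ M * |y| ^ M := by
        have : x ≤ |τ y| + |y| := abs_sub _ _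
        have hm : x ≤ 2 * max |τ y| |y| := by
          have := le_max_left |τ y| |y|; have := le_max_right |τ y| |y|; linarith
        calc x ^ M ≤ (2 * max |τ y| |y|) ^ M := pow_le_pow_left₀ hx0 hm M
          _ = 2 ^ M * (max |τ y| |y|) ^ M := by rw [mul_pow]
          _ ≤ _ := by
            rw [← mul_add]
            gcongr
            rcases max_choice |τ y| |y| with h | h <;> rw [h]
            · linarith [pow_nonneg (abs_nonneg y) M]
            · linarith [pow_nonneg (abs_nonneg (τ y)) M]
      have c4 : |y| ^ M ≤ C2 * Real.exp (y ^ 2 / 4) := by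
        refine le_trans (pow_le_pow_left₀ (abs_nonneg y) (by linarith) M) hC2e
      have c5 : 2 ^ M * |y| ^ M ≤ 2 ^ M * (C2 * Real.exp (y ^ 2 / 4)) := by gcongr
      have c6 : 0 ≤ D ^ M * 3 ^ (k * M) * C1 * Real.exp (y ^ 2 / 4) := by positivity
      rw [ha]
      nlinarith
  calc _ ≤ ∫⁻ y, ENNReal.ofReal ((a * Real.exp (y ^ 2 / 4) + 2 ^ M * |τ y| ^ M) * (1 / σ) ^ p) ∂(gaussianReal 0 1) :=
        lintegral_mono fun y => ENNReal.ofReal_le_ofReal (pt y)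
    _ = ENNReal.ofReal (∫ y, (a * Real.exp (y ^ 2 / 4) + 2 ^ M * |τ y| ^ M) * (1 / σ) ^ p ∂(gaussianReal 0 1)) := by
        exact (ofReal_integral_eq_lintegral_ofReal
          (((exp4_gauss.const_mul a).add (hτi.const_mul (2 ^ M))).mul_const ((1 / σ) ^ p))
          (Eventually.of_forall fun y => by simp only [Pi.zero_apply, Pi.add_apply]; positivity)).symm
    _ ≤ _ := by
        apply ENNReal.ofReal_le_ofReal
        rw [integral_mul_const]
        refine mul_le_mul_of_nonneg_right ?_ (by positivity)
        rw [integral_add (exp4_gauss.const_mul a) (hτi.const_mul _), integral_const_mul, integral_const_mul]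
        have : 2 ^ M * ∫ y, |τ y| ^ M ∂(gaussianReal 0 1) ≤ 2 ^ M * |A| := by
          gcongr; exact hτA.trans (le_abs_self A)
        linarith

end WCLT

end


section
namespace WCLT
variable {c : ℝ} {w : ℝ → ℝ} {ψ : ℝ → ℂ} {B : ℝ}

lemma root_bound (p C σ : ℝ) (hp : 1 ≤ p) (hC : 0 < C) (hσ : 0 < σ) :
    (ENNReal.ofReal (C * (1 / σ) ^ p)) ^ (1 / p) = ENNReal.ofReal (C ^ (1 / p) * (1 / σ)) := by
  rw [ENNReal.ofReal_rpow_of_nonneg (by positivity) (by positivity), Real.mul_rpow (by positivity) (by positivity),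
    ← Real.rpow_mul (by positivity), mul_one_div_cancel (by positivity), Real.rpow_one]

lemma Ker.noise (hk : Ker c w ψ B) (p : ℝ) (hp : 1 ≤ p) : ∃ C : ℝ, 0 < C ∧ ∀ (σ : ℝ) (lam : Measure ℝ),
    0 < σ → IsProbabilityMeasure lam → wassersteinDist p lam (lawT lam w σ) ≤ ENNReal.ofReal (C * (1 / σ)) := by
  obtain ⟨M, hM⟩ := exists_nat_ge p
  set I := ∫ y, |y| ^ M * w y with hI
  have hI0 : 0 ≤ I := integral_nonneg fun y => mul_nonneg (by positivity) (hk.nonneg y)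
  refine ⟨(1 + I) ^ (1 / p), by positivity, fun σ lam hσ hlam => ?_⟩
  have hnu := hk.nuS_prob hσ
  refine (wd_noise p lam (nuS w σ)).trans ?_
  rw [← root_bound p (1 + I) σ hp (by positivity) hσ]
  refine ENNReal.rpow_le_rpow ?_ (by positivity)
  have hint : Integrable (fun h => |h| ^ M) (nuS w σ) := by
    rw [hk.integrable_nuS hσ]
    refine (hk.wS_mom hσ M).1.congr (Eventually.of_forall fun h => ?_)
    simp [mul_comm]
  have hval : ∫ h, |h| ^ M ∂(nuS w σ) = I * (1 / σ) ^ M := by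
    rw [hk.integral_nuS hσ, ← (hk.wS_mom hσ M).2]
    congr 1; funext h; simp [mul_comm]
  have hint2 : Integrable (fun h => (1 + σ ^ M * |h| ^ M) * (1 / σ) ^ p) (nuS w σ) :=
    ((integrable_const (1 : ℝ)).add (hint.const_mul (σ ^ M))).mul_const _
  calc _ ≤ ∫⁻ h, ENNReal.ofReal ((1 + σ ^ M * |h| ^ M) * (1 / σ) ^ p) ∂(nuS w σ) := by
        refine lintegral_mono fun h => ENNReal.ofReal_le_ofReal ?_
        have e : |h| ^ p = (σ * |h|) ^ p * (1 / σ) ^ p := by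
          rw [← Real.mul_rpow (by positivity) (by positivity)]
          congr 1; field_simp
        rw [e, ← mul_pow]
        refine mul_le_mul_of_nonneg_right ?_ (by positivity)
        have hx : 0 ≤ σ * |h| := by positivity
        rcases le_total (σ * |h|) 1 with h1 | h1
        · have := Real.rpow_le_one hx h1 (by linarith : 0 ≤ p)
          have : 0 ≤ (σ * |h|) ^ M := by positivity
          linarith
        · have := Real.rpow_le_rpow_of_exponent_le h1 hM
          rw [Real.rpow_natCast] at this
          linarith
    _ = ENNReal.ofReal (∫ h, (1 + σ ^ M * |h| ^ M) * (1 / σ) ^ p ∂(nuS w σ)) :=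
        (ofReal_integral_eq_lintegral_ofReal hint2 (Eventually.of_forall fun h => by
          simp only [Pi.zero_apply]; positivity)).symm
    _ ≤ _ := by
        apply ENNReal.ofReal_le_ofReal
        rw [integral_mul_const, integral_add (integrable_const _) (hint.const_mul _), integral_const_mul, hval]
        refine le_of_eq ?_
        have : σ ^ M * (I * (1 / σ) ^ M) = I := by
          rw [one_div, inv_pow]; field_simp
        rw [this]; simp

lemma eventually_L (p D : ℝ) (hp : 1 ≤ p) (k : ℕ) :
    ∀ᶠ σ in atTop, D * (4 + Real.sqrt (8 * p * Real.log σ)) ^ k ≤ σ := by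
  have h1 := (Real.isLittleO_pow_log_id_atTop (n := k)).bound
    (c := 1 / ((|D| + 1) * (5 + 8 * p) ^ k)) (by positivity)
  filter_upwards [h1, eventually_ge_atTop (Real.exp 1)] with σ h2 h3
  have hσ : 0 < σ := lt_of_lt_of_le (Real.exp_pos 1) h3
  have hl : 1 ≤ Real.log σ := by rw [Real.le_log_iff_exp_le hσ]; exact h3
  set l := Real.log σ
  have hs : Real.sqrt (8 * p * l) ≤ 1 + 8 * p * l := by
    have := Real.sq_sqrt (show 0 ≤ 8 * p * l by positivity)
    nlinarith [sq_nonneg (Real.sqrt (8 * p * l) - 1), Real.sqrt_nonneg (8 * p * l)]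
  rw [Real.norm_of_nonneg (by positivity), id, Real.norm_of_nonneg hσ.le] at h2
  calc D * (4 + Real.sqrt (8 * p * l)) ^ k ≤ (|D| + 1) * ((5 + 8 * p) * l) ^ k := by
        have : 4 + Real.sqrt (8 * p * l) ≤ (5 + 8 * p) * l := by nlinarith
        have := le_abs_self D
        gcongr
        linarith
    _ = ((|D| + 1) * (5 + 8 * p) ^ k) * l ^ k := by rw [mul_pow]; ring
    _ ≤ ((|D| + 1) * (5 + 8 * p) ^ k) * (1 / ((|D| + 1) * (5 + 8 * p) ^ k) * σ) := by gcongr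
    _ = σ := by field_simp

lemma mom_bound (lam : Measure ℝ) [IsProbabilityMeasure lam] (k : ℕ)
    (h1 : Integrable (fun x => Real.exp x) lam) (h2 : Integrable (fun x => Real.exp (-x)) lam)
    (b1 : ∫ x, Real.exp x ∂lam ≤ Real.exp 1) (b2 : ∫ x, Real.exp (-x) ∂lam ≤ Real.exp 1) :
    Integrable (fun x => |x| ^ k) lam ∧ ∫ x, |x| ^ k ∂lam ≤ k.factorial * (2 * Real.exp 1) := by
  have pt : ∀ x : ℝ, |x| ^ k ≤ k.factorial * (Real.exp x + Real.exp (-x)) := by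
    intro x
    have := Real.pow_div_factorial_le_exp |x| (abs_nonneg x) k
    rw [div_le_iff₀ (by positivity)] at this
    have h : Real.exp |x| ≤ Real.exp x + Real.exp (-x) := by
      rcases abs_choice x with h | h <;> rw [h] <;> linarith [Real.exp_pos x, Real.exp_pos (-x)]
    nlinarith [(Nat.cast_pos (α := ℝ)).2 k.factorial_pos]
  have hi := (h1.add h2).const_mul (k.factorial : ℝ)
  have hi' : Integrable (fun x => |x| ^ k) lam :=
    hi.mono' (by fun_prop) (Eventually.of_forall fun x => by
      rw [Real.norm_of_nonneg (by positivity)]; exact pt x)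
  refine ⟨hi', (integral_mono hi' hi pt).trans ?_⟩
  have e : ∫ x, (k.factorial : ℝ) * ((fun x => Real.exp x) + fun x => Real.exp (-x)) x ∂lam =
      k.factorial * (∫ x, Real.exp x ∂lam + ∫ x, Real.exp (-x) ∂lam) := by
    rw [integral_const_mul, ← integral_add h1 h2]; rfl
  rw [e]
  gcongr; linarith

end WCLT

end


section
namespace WCLT

set_option maxHeartbeats 1000000 in
theorem part2 (K δ p : ℝ) (hK : 0 < K) (hδ : 0 < δ) (hp : 1 ≤ p) :
    ∃ Cp σ₀ : ℝ, 0 < Cp ∧ 1 ≤ σ₀ ∧ ∀ {Ω : Type*} [MeasurableSpace Ω] (μ : Measure Ω) [IsProbabilityMeasure μ]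
      (S : Ω → ℝ) (R σ : ℝ), Measurable S → (∀ᵐ ω ∂μ, |S ω| ≤ R) → σ₀ ≤ σ → ∫ ω, S ω ∂μ = 0 →
      ∫ ω, S ω ^ 2 ∂μ = σ ^ 2 → (∀ z : ℂ, ‖z‖ < δ → ∫ ω, Complex.exp (z * S ω) ∂μ ≠ 0) →
      (∀ θ : ℝ, |θ| < δ → ∫ ω, Real.exp (θ * S ω) ∂μ ≤ Real.exp (K * σ ^ 2)) →
      wassersteinDist p (μ.map (fun ω => S ω / σ)) (gaussianReal 0 1) ≤ ENNReal.ofReal (Cp * (1 / σ)) := by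
  obtain ⟨m, hm⟩ := exists_nat_ge (8 * p + 1)
  obtain ⟨M, hM⟩ := exists_nat_ge (2 * p)
  obtain ⟨c₀, C₀, hc₀, hc₀δ, hC₀, hexp⟩ := char_expand K δ hK hδ (m + 1)
  obtain ⟨w, ψ, B, k1, k2, k3, k4, k5, k6, k7, k8, k9⟩ := kernel_exists c₀ hc₀
  have hk : Ker c₀ w ψ B := ⟨k1, k2, k3, k4, k5, k6, k7, k8, k9⟩
  obtain ⟨C1, k, hC1, hD⟩ := hk.D_bound C₀ (m.factorial * (2 * Real.exp 1)) hC₀ m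
  obtain ⟨C2, hC2, hnoise⟩ := hk.noise p hp
  set Q := Real.sqrt (2 * Real.pi) * Real.exp 1 with hQ
  have hQ0 : 0 < Q := by positivity
  set C3 := C1 + C1 * Q with hC3
  have hC3p : 0 < C3 := by positivity
  set AT := 2 ^ M * ((M.factorial : ℝ) * (2 * Real.exp 1) + ∫ y, |y| ^ M * w y) with hAT
  obtain ⟨C4, hC4, hcoup⟩ := couple_Lp p hp M hM (2 * C3 * Real.exp 1 ^ 2) AT (by positivity) k
  obtain ⟨σ₁, hσ₁⟩ := eventually_atTop.1 (((eventually_L p 1 hp 2).and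
    (eventually_L p (2 * C3 * Real.exp 1 ^ 2) hp (k + 1))).and (eventually_ge_atTop (1 / c₀)))
  refine ⟨C2 + C4 ^ (1 / p), max 1 σ₁, by positivity, le_max_left _ _, ?_⟩
  intro Ω _ μ _ S R σ hS hSb hσ hmean hvar hnz hmgf
  have hσ1 : 1 ≤ σ := (le_max_left _ _).trans hσ
  have hσ0 : 0 < σ := by linarith
  obtain ⟨⟨hL2, hLk⟩, hcσ⟩ := hσ₁ σ ((le_max_right _ _).trans hσ)
  set L := Real.sqrt (8 * p * Real.log σ) with hL
  have hlog : 0 ≤ Real.log σ := Real.log_nonneg hσ1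
  have hL0 : 0 ≤ L := Real.sqrt_nonneg _
  have hLsq : L ^ 2 = 8 * p * Real.log σ := Real.sq_sqrt (by positivity)
  have hcσ1 : 1 ≤ c₀ * σ := by rw [div_le_iff₀ hc₀] at hcσ; linarith
  -- moment generating function
  have hbex : ∀ θ : ℝ, Integrable (fun ω => Real.exp (θ * S ω)) μ := by
    intro θ
    refine Integrable.of_bound (by fun_prop) (Real.exp (|θ| * R)) ?_
    filter_upwards [hSb] with ω hω
    rw [Real.norm_of_nonneg (Real.exp_pos _).le]
    refine Real.exp_le_exp.2 ((le_abs_self _).trans ?_)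
    rw [abs_mul]; gcongr
  have hint : ∀ x : ℝ, x ∈ interior (integrableExpSet S μ) := by
    have : integrableExpSet S μ = Set.univ := Set.eq_univ_of_forall hbex
    simp [this]
  set φ := complexMGF S μ with hφ
  have hd1 : ∀ z, HasDerivAt φ (∫ ω, S ω * Complex.exp (z * S ω) ∂μ) z := fun z =>
    hasDerivAt_complexMGF (hint _)
  have hder : deriv φ = fun z => ∫ ω, (S ω : ℂ) ^ 1 * Complex.exp (z * S ω) ∂μ := by
    funext z; rw [(hd1 z).deriv]; simp
  have hφ0 : φ 0 = 1 := by simp [hφ, complexMGF]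
  have hφ1 : deriv φ 0 = 0 := by
    rw [hder]; simp only [pow_one, zero_mul, Complex.exp_zero, mul_one]
    rw [integral_complex_ofReal, hmean]; simp
  have hφ2 : HasDerivAt (deriv φ) ((σ : ℂ) ^ 2) 0 := by
    rw [hder]
    have h := hasDerivAt_integral_pow_mul_exp (X := S) (μ := μ) (z := 0) (hint _) 1
    refine h.congr_deriv ?_
    simp only [zero_mul, Complex.exp_zero, mul_one]
    have : ∀ ω, (S ω : ℂ) ^ (1 + 1) = ((S ω ^ 2 : ℝ) : ℂ) := fun ω => by push_cast; ring
    simp only [this]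
    rw [integral_complex_ofReal, hvar]; simp
  have hφb : ∀ z, ‖z‖ < δ → ‖φ z‖ ≤ Real.exp (K * σ ^ 2) := by
    intro z hz
    refine (norm_complexMGF_le_mgf).trans ?_
    exact hmgf z.re ((Complex.abs_re_le_norm z).trans_lt hz)
  obtain ⟨b, hb, he, hmo⟩ := hexp σ φ hσ1 (fun z => (hd1 z).differentiableAt) hφ0 hφ1 hφ2 hnz hφb
  set X : Ω → ℝ := fun ω => S ω / σ with hX
  have hXm : Measurable X := hS.div_const σ
  set lam := μ.map X with hlam
  have hlamp : IsProbabilityMeasure lam := Measure.isProbabilityMeasure_map hXm.aemeasurable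
  -- moments
  have hre : ∀ u : ℝ, |u| ≤ c₀ * σ → Integrable (fun x => Real.exp (u * x)) lam ∧
      ∫ x, Real.exp (u * x) ∂lam ≤ Real.exp (u ^ 2) := by
    intro u hu
    have e : ∀ ω, Real.exp (u * X ω) = Real.exp (u / σ * S ω) := fun ω => by
      rw [hX]; congr 1; ring
    constructor
    · rw [hlam, integrable_map_measure (by fun_prop) hXm.aemeasurable]
      refine (hbex (u / σ)).congr (Eventually.of_forall fun ω => (e ω).symm)
    · rw [hlam, integral_map hXm.aemeasurable (by fun_prop)]
      simp only [e]
      have := hmo u hu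
      have e2 : φ (u / σ) = ((∫ ω, Real.exp (u / σ * S ω) ∂μ : ℝ) : ℂ) := by
        have := complexMGF_ofReal (X := S) (μ := μ) (u / σ)
        push_cast at this
        rw [hφ, this]; rfl
      rw [e2, Complex.norm_real] at this
      exact (le_abs_self _).trans this
  obtain ⟨i1, b1⟩ := hre 1 (by simpa using hcσ1)
  obtain ⟨i2, b2⟩ := hre (-1) (by simpa using hcσ1)
  simp only [one_mul, neg_mul, one_pow, even_two, Even.neg_pow] at i1 b1 i2 b2
  have hmom : ∀ k : ℕ, Integrable (fun x => |x| ^ k) lam ∧ ∫ x, |x| ^ k ∂lam ≤ k.factorial * (2 * Real.exp 1) :=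
    fun k => mom_bound lam k i1 i2 b1 b2
  -- char function expansion
  have hchar : ∀ u : ℝ, |u| ≤ c₀ * σ → ‖(∫ s : ℝ, Complex.exp (-(u * s) * Complex.I) ∂lam) -
        Complex.exp (-(u : ℂ) ^ 2 / 2) *
          (1 + ∑ j ∈ Finset.range (3 * (m + 1)), b j * (-u * Complex.I) ^ (j + 3))‖ ≤
          C₀ * (1 / σ) ^ (m + 1) * (|u| ^ (3 * (m + 1) + 3) * Real.exp (- u ^ 2 / 4)) := by
    intro u hu
    have := he (-u) (by rwa [abs_neg])
    have e3 : φ (((-u : ℝ) : ℂ) / σ * Complex.I) = ∫ s : ℝ, Complex.exp (-(u * s) * Complex.I) ∂lam := by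
      rw [hlam, integral_map hXm.aemeasurable (by fun_prop), hφ, complexMGF]
      congr 1; funext ω; congr 1; rw [hX]; push_cast; ring
    rw [e3] at this
    simpa using this
  have hDx := hD σ L lam b hσ1 hL0 (by
    refine le_trans ?_ hL2
    rw [one_mul]; gcongr; linarith) hlamp (hmom m).1 (hmom m).2 hb hchar
  have hT := hk.lawT_prob hσ0 lam
  have hDx' : ∀ x, |x| ≤ L + 1 → |cdf (lawT lam w σ) x - Phi x| ≤ C3 * (1 / σ) * (2 + |x|) ^ k * gphi x := by
    intro x hx
    refine (hDx x hx).trans ?_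
    have hg := gphi_pos x
    have s1 : (1 / σ) ^ m ≤ (1 / σ) * Real.exp (- L ^ 2) := by
      have : (1 / σ) * Real.exp (- L ^ 2) = Real.exp (-(8 * p + 1) * Real.log σ) := by
        rw [hLsq, one_div, ← Real.exp_log (inv_pos.2 hσ0), ← Real.exp_add, Real.log_inv]
        congr 1; ring
      rw [this, one_div, ← Real.exp_log (inv_pos.2 hσ0), ← Real.exp_nat_mul, Real.log_inv]
      refine Real.exp_le_exp.2 ?_
      nlinarith
    have s2 : Real.exp (- L ^ 2) ≤ Q * gphi x := by
      rw [gphi_eq, hQ]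
      have : Real.sqrt (2 * Real.pi) * Real.exp 1 * ((Real.sqrt (2 * Real.pi))⁻¹ * Real.exp (- x ^ 2 / 2)) =
          Real.exp (1 + - x ^ 2 / 2) := by
        rw [Real.exp_add]; field_simp
      rw [this]
      refine Real.exp_le_exp.2 ?_
      have : x ^ 2 ≤ (L + 1) ^ 2 := by rw [← sq_abs x]; exact pow_le_pow_left₀ (abs_nonneg x) hx 2
      nlinarith [sq_nonneg (L - 1)]
    have s3 : 1 ≤ (2 + |x|) ^ k := one_le_pow₀ (by linarith [abs_nonneg x])
    have s4 : (1 / σ) ^ m ≤ Q * ((1 / σ) * (2 + |x|) ^ k * gphi x) := by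
      calc (1 / σ) ^ m ≤ (1 / σ) * (Q * gphi x) := s1.trans (by gcongr)
        _ = Q * ((1 / σ) * 1 * gphi x) := by ring
        _ ≤ _ := by gcongr
    calc _ ≤ C1 * (1 / σ) * (2 + |x|) ^ k * gphi x + C1 * (Q * ((1 / σ) * (2 + |x|) ^ k * gphi x)) := by
          gcongr
      _ = _ := by rw [hC3]; ring
  obtain ⟨τ, hτm, hτF, hτ⟩ := quantile (lawT lam w σ)
  obtain ⟨it, bt⟩ := hk.T_mom hσ1 lam M (hmom M).1
  have hτi : Integrable (fun y => |τ y| ^ M) (gaussianReal 0 1) := by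
    rw [← hτF, integrable_map_measure (by fun_prop) hτm.aemeasurable] at it
    exact it
  have hτA : ∫ y, |τ y| ^ M ∂(gaussianReal 0 1) ≤ AT := by
    rw [← hτF, integral_map hτm.aemeasurable (by fun_prop)] at bt
    refine bt.trans ?_
    exact mul_le_mul_of_nonneg_left (add_le_add_left (hmom M).2 _) (by positivity)
  have hcp := hcoup σ L τ hσ1 hL0 hLsq hτm
    (fun y hy => couple_pt (lawT lam w σ) C3 σ L k hC3p hσ0 hDx' τ hτ hLk y hy) hτi hτA
  have w1 : wassersteinDist p (lawT lam w σ) (gaussianReal 0 1) ≤ ENNReal.ofReal (C4 ^ (1 / p) * (1 / σ)) := by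
    have h := wd_map_le (gaussianReal 0 1) p τ id hτm measurable_id
    rw [hτF, Measure.map_id] at h
    refine h.trans ?_
    rw [← root_bound p C4 σ hp hC4 hσ0]
    exact ENNReal.rpow_le_rpow hcp (by positivity)
  refine (wd_triangle p hp lam (lawT lam w σ) (gaussianReal 0 1)).trans ?_
  refine (add_le_add (hnoise σ lam hσ0 hlamp) w1).trans ?_
  rw [← ENNReal.ofReal_add (by positivity) (by positivity), add_mul]

lemma wd_finite (p : ℝ) (hp : 1 ≤ p) {Ω : Type*} [MeasurableSpace Ω] (μ : Measure Ω) [IsProbabilityMeasure μ]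
    (X : Ω → ℝ) (R : ℝ) (hX : Measurable X) (hR : ∀ᵐ ω ∂μ, |X ω| ≤ R) :
    wassersteinDist p (μ.map X) (gaussianReal 0 1) < ⊤ := by
  have key := wd_map_le (μ.prod (gaussianReal 0 1)) p (fun z => X z.1) (fun z => z.2) (by fun_prop) (by fun_prop)
  have e1 : (μ.prod (gaussianReal 0 1)).map (fun z => X z.1) = μ.map X := by
    have : (fun z : Ω × ℝ => X z.1) = X ∘ Prod.fst := rfl
    rw [this, ← Measure.map_map hX measurable_fst]; simp
  have e2 : (μ.prod (gaussianReal 0 1)).map (fun z => z.2) = gaussianReal 0 1 := by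
    change (μ.prod (gaussianReal 0 1)).map Prod.snd = _
    simp
  rw [e1, e2] at key
  refine key.trans_lt (ENNReal.rpow_lt_top_of_nonneg (by positivity) ?_)
  obtain ⟨M, hM⟩ := exists_nat_ge p
  obtain ⟨C, hC, h⟩ := polyexp M
  have hi : Integrable (fun z : Ω × ℝ => ((1 + |R|) ^ M * C) * Real.exp (z.2 ^ 2 / 4)) (μ.prod (gaussianReal 0 1)) :=
    (exp4_gauss.comp_snd μ).const_mul _
  refine ne_top_of_le_ne_top hi.lintegral_lt_top.ne ?_
  refine lintegral_mono_ae ?_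
  have hR' : ∀ᵐ z ∂(μ.prod (gaussianReal 0 1)), |X z.1| ≤ R :=
    Measure.quasiMeasurePreserving_fst.ae hR
  filter_upwards [hR'] with z hz
  refine ENNReal.ofReal_le_ofReal ?_
  have h1 : |X z.1 - z.2| ≤ (1 + |R|) * (1 + |z.2|) := by
    have := abs_sub (X z.1) z.2
    have := le_abs_self R
    nlinarith [abs_nonneg R, abs_nonneg z.2]
  have h2 : 1 ≤ (1 + |R|) * (1 + |z.2|) := by nlinarith [abs_nonneg R, abs_nonneg z.2, mul_nonneg (abs_nonneg R) (abs_nonneg z.2)]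
  calc |X z.1 - z.2| ^ p ≤ ((1 + |R|) * (1 + |z.2|)) ^ p := Real.rpow_le_rpow (abs_nonneg _) h1 (by linarith)
    _ ≤ ((1 + |R|) * (1 + |z.2|)) ^ (M : ℝ) := Real.rpow_le_rpow_of_exponent_le h2 hM
    _ = (1 + |R|) ^ M * (1 + |z.2|) ^ M := by rw [Real.rpow_natCast, mul_pow]
    _ ≤ (1 + |R|) ^ M * (C * Real.exp (z.2 ^ 2 / 4)) := by
        gcongr
        have := h z.2
        rw [neg_div, Real.exp_neg, ← div_eq_mul_inv, div_le_iff₀ (Real.exp_pos _)] at this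
        exact this
    _ = _ := by ring

end WCLT

end


section
namespace WCLT
variable {Ω : Type*} [mΩ : MeasurableSpace Ω] {𝒳 : ℕ → Type*} [∀ j, MeasurableSpace (𝒳 j)]
  {μ : Measure Ω} {X : ∀ j, Ω → 𝒳 j} {κ : ∀ j n, Kernel (𝒳 j) (𝒳 (j + n))}
  {𝕜 : Type*} [RCLike 𝕜]

lemma past_le (hX : ∀ j, Measurable (X j)) (j : ℕ) : pastSigma X j ≤ mΩ :=
  iSup₂_le fun i _ => (hX i).comap_le

lemma past_mono {i j : ℕ} (h : i ≤ j) : pastSigma X i ≤ pastSigma X j := by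
  refine iSup₂_le fun l hl => ?_
  have : l ∈ Finset.range (j + 1) := by simp only [Finset.mem_range] at *; omega
  exact le_iSup₂_of_le (f := fun l (_ : l ∈ Finset.range (j + 1)) => MeasurableSpace.comap (X l) inferInstance) l this le_rfl

lemma past_meas {i j : ℕ} (h : i ≤ j) : Measurable[pastSigma X j] (X i) := by
  have : MeasurableSpace.comap (X i) inferInstance ≤ pastSigma X j :=
    le_iSup₂_of_le (f := fun l (_ : l ∈ Finset.range (j + 1)) => MeasurableSpace.comap (X l) inferInstance) i
      (by simp only [Finset.mem_range]; omega) le_rfl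
  exact (comap_measurable (X i)).mono this le_rfl

lemma past_smeas {i j : ℕ} (h : i ≤ j) {g : 𝒳 i → 𝕜} (hg : Measurable g) :
    StronglyMeasurable[pastSigma X j] (fun ω => g (X i ω)) :=
  Measurable.stronglyMeasurable (hg.comp (past_meas h))

lemma bind_eq [IsProbabilityMeasure μ] (h : IsInhomMarkov μ X κ) (j n : ℕ) (B : Set Ω)
    (hB : MeasurableSet[pastSigma X j] B) :
    (μ.restrict B).map (X (j + n)) = ((μ.restrict B).map (X j)).bind (κ j n) := by
  have hle := past_le h.meas j
  have hB' := hle _ hB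
  have := h.isMarkovKernel j n
  ext Γ hΓ
  rw [Measure.bind_apply hΓ (Kernel.aemeasurable _), lintegral_map (Kernel.measurable_coe _ hΓ) (h.meas j),
    Measure.map_apply (h.meas _) hΓ]
  have h1 := setIntegral_condExp hle (μ := μ)
    (f := fun ω => Γ.indicator (fun _ => (1 : ℝ)) (X (j + n) ω)) (by
      have : (fun ω => Γ.indicator (fun _ => (1 : ℝ)) (X (j + n) ω)) = (X (j + n) ⁻¹' Γ).indicator (fun _ => (1 : ℝ)) := by
        rfl
      rw [this]
      exact (integrable_const (1 : ℝ)).indicator (h.meas _ hΓ)) hB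
  have h2 : ∫ ω in B, Γ.indicator (fun _ => (1 : ℝ)) (X (j + n) ω) ∂μ = (μ.restrict B).real (X (j + n) ⁻¹' Γ) := by
    have : (fun ω => Γ.indicator (fun _ => (1 : ℝ)) (X (j + n) ω)) = (X (j + n) ⁻¹' Γ).indicator 1 := by
      rfl
    rw [this, integral_indicator_one (h.meas _ hΓ)]
  have h3 : ∫ ω in B, (μ[fun ω => Γ.indicator (fun _ => (1 : ℝ)) (X (j + n) ω) | pastSigma X j]) ω ∂μ =
      ∫ ω in B, (κ j n (X j ω) Γ).toReal ∂μ :=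
    setIntegral_congr_ae hB' ((h.cond j n Γ hΓ).mono fun ω hω _ => hω)
  have hms : Measurable (fun ω => κ j n (X j ω) Γ) := (Kernel.measurable_coe _ hΓ).comp (h.meas j)
  rw [h3, h2, integral_toReal hms.aemeasurable
    (Eventually.of_forall fun ω => measure_lt_top _ _)] at h1
  rw [← ENNReal.toReal_eq_toReal_iff' (measure_ne_top _ _) ?_]
  · exact h1.symm
  · refine ne_top_of_le_ne_top (measure_ne_top (μ.restrict B) Set.univ) ?_
    calc _ ≤ ∫⁻ ω in B, 1 ∂μ := lintegral_mono fun ω => prob_le_one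
      _ = _ := by simp

lemma condExp_kernel [IsProbabilityMeasure μ] (h : IsInhomMarkov μ X κ) (j n : ℕ) (g : 𝒳 (j + n) → 𝕜)
    (hg : Measurable g) (R : ℝ) (hR : ∀ x, ‖g x‖ ≤ R) :
    μ[fun ω => g (X (j + n) ω) | pastSigma X j] =ᵐ[μ] fun ω => ∫ y, g y ∂(κ j n (X j ω)) := by
  have hle := past_le h.meas j
  have hmk := h.isMarkovKernel j n
  have hGm : StronglyMeasurable (fun x => ∫ y, g y ∂(κ j n x)) := hg.stronglyMeasurable.integral_kernel
  have hGb : ∀ x, ‖∫ y, g y ∂(κ j n x)‖ ≤ R := fun x => by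
    have := norm_integral_le_of_norm_le_const (μ := κ j n x) (Eventually.of_forall hR)
    simpa using this
  have hint : Integrable (fun ω => ∫ y, g y ∂(κ j n (X j ω))) μ :=
    Integrable.of_bound (hGm.comp_measurable (h.meas j)).aestronglyMeasurable R (Eventually.of_forall fun ω => hGb _)
  symm
  refine ae_eq_condExp_of_forall_setIntegral_eq hle
    (Integrable.of_bound (hg.comp (h.meas _)).aestronglyMeasurable R (Eventually.of_forall fun ω => hR _))
    (fun s _ _ => hint.integrableOn) (fun s hs _ => ?_)
    (past_smeas le_rfl hGm.measurable).aestronglyMeasurable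
  have e1 : ∫ ω in s, g (X (j + n) ω) ∂μ = ∫ y, g y ∂((μ.restrict s).map (X (j + n))) :=
    (integral_map (h.meas _).aemeasurable hg.aestronglyMeasurable).symm
  have e2 : ∫ ω in s, (∫ y, g y ∂(κ j n (X j ω))) ∂μ = ∫ x, (∫ y, g y ∂(κ j n x)) ∂((μ.restrict s).map (X j)) :=
    (integral_map (h.meas _).aemeasurable hGm.aestronglyMeasurable).symm
  rw [e1, e2, bind_eq h j n s hs]
  have := Kernel.integral_comp (κ := Kernel.const Unit ((μ.restrict s).map (X j))) (η := κ j n) (a := ())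
    (f := g) (by
      rw [Kernel.comp_apply, Kernel.const_apply]
      have : IsFiniteMeasure (((μ.restrict s).map (X j)).bind (κ j n)) := by
        rw [← bind_eq h j n s hs]; infer_instance
      exact Integrable.of_bound hg.aestronglyMeasurable R (Eventually.of_forall hR))
  rw [Kernel.comp_apply, Kernel.const_apply] at this
  exact this.symm

lemma contract {α : Type*} [MeasurableSpace α] (κx m : Measure α) [IsProbabilityMeasure κx] [IsProbabilityMeasure m]
    (γ : ℝ) (hγ : 0 < γ) (hγ1 : γ < 1) (hd : ∀ Γ, MeasurableSet Γ → ENNReal.ofReal γ * m Γ ≤ κx Γ)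
    (g : α → 𝕜) (hg : Measurable g) (c : 𝕜) (r : ℝ) (hr : ∀ x, ‖g x - c‖ ≤ r) :
    ‖∫ y, g y ∂κx - (c + (γ : 𝕜) * ∫ y, (g y - c) ∂m)‖ ≤ (1 - γ) * r := by
  set ν := ENNReal.ofReal γ • m with hν
  have hle : ν ≤ κx := by
    rw [Measure.le_iff]; intro s hs; simpa [hν] using hd s hs
  have hνf : IsFiniteMeasure ν := by
    constructor; simp [hν]
  set ρ := κx - ν with hρ
  have hsum : ρ + ν = κx := Measure.sub_add_cancel_of_le hle
  have hρf : IsFiniteMeasure ρ := by rw [hρ]; infer_instance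
  have hgc : Measurable (fun y => g y - c) := hg.sub_const c
  have hi : ∀ η : Measure α, IsFiniteMeasure η → Integrable (fun y => g y - c) η := fun η _ =>
    Integrable.of_bound hgc.aestronglyMeasurable r (Eventually.of_forall hr)
  have hgi : Integrable g κx := by
    have := (hi κx inferInstance).add (integrable_const c)
    refine this.congr (Eventually.of_forall fun y => by simp)
  have e1 : ∫ y, g y ∂κx = c + ∫ y, (g y - c) ∂κx := by
    rw [integral_sub hgi (integrable_const c)]; simp
  have e2 : ∫ y, (g y - c) ∂κx = ∫ y, (g y - c) ∂ρ + (γ : 𝕜) * ∫ y, (g y - c) ∂m := by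
    conv_lhs => rw [← hsum]
    rw [integral_add_measure (hi _ hρf) (hi _ hνf), hν, integral_smul_measure, ENNReal.toReal_ofReal hγ.le,
      RCLike.real_smul_eq_coe_mul]
  have hmass : ρ.real Set.univ = 1 - γ := by
    have : ρ.real Set.univ + ν.real Set.univ = 1 := by
      have h1 : (ρ + ν).real Set.univ = 1 := by rw [hsum]; simp
      rwa [measureReal_add_apply] at h1
    have h2 : ν.real Set.univ = γ := by
      rw [hν, measureReal_ennreal_smul_apply]; simp [ENNReal.toReal_ofReal hγ.le]
    linarith
  have e3 : ∫ y, g y ∂κx - (c + (γ : 𝕜) * ∫ y, (g y - c) ∂m) = ∫ y, (g y - c) ∂ρ := by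
    rw [e1, e2]; ring
  rw [e3]
  have := norm_integral_le_of_norm_le_const (μ := ρ) (Eventually.of_forall hr)
  rw [hmass] at this
  linarith

end WCLT

end


section
namespace WCLT
variable {Ω : Type*} [mΩ : MeasurableSpace Ω] {𝒳 : ℕ → Type*} [∀ j, MeasurableSpace (𝒳 j)]
  {μ : Measure Ω} {X : ∀ j, Ω → 𝒳 j} {κ : ∀ j n, Kernel (𝒳 j) (𝒳 (j + n))}
  {𝕜 : Type*} [RCLike 𝕜]

def Rep (μ : Measure Ω) (X : ∀ j, Ω → 𝒳 j) (j : ℕ) (Z : Ω → 𝕜) : Prop :=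
  Integrable Z μ ∧ ∃ (g : 𝒳 j → 𝕜) (R : ℝ), Measurable g ∧ (∀ x, ‖g x‖ ≤ R) ∧
    μ[Z | pastSigma X j] =ᵐ[μ] fun ω => g (X j ω)

structure Dob (μ : Measure Ω) (X : ∀ j, Ω → 𝒳 j) (κ : ∀ j n, Kernel (𝒳 j) (𝒳 (j + n))) (n₀ : ℕ) (γ : ℝ)
    (m : ∀ j, Measure (𝒳 j)) : Prop where
  mc : IsInhomMarkov μ X κ
  npos : 0 < n₀
  gpos : 0 < γ
  glt : γ < 1
  mprob : ∀ j, IsProbabilityMeasure (m j)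
  doe : ∀ j (x : 𝒳 j) (Γ : Set (𝒳 (j + n₀))), MeasurableSet Γ → ENNReal.ofReal γ * m (j + n₀) Γ ≤ κ j n₀ x Γ

lemma condExp_bdd [IsProbabilityMeasure μ] (F : MeasurableSpace Ω) (Z : Ω → 𝕜) (R : ℝ) (hR0 : 0 ≤ R)
    (h : ∀ᵐ ω ∂μ, ‖Z ω‖ ≤ R) : ∀ᵐ ω ∂μ, ‖(μ[Z | F]) ω‖ ≤ R := by
  have h1 := norm_condExp_le (m := F) (μ := μ) Z
  have h2 := ae_bdd_condExp_of_ae_bdd (m := F) (μ := μ) (R := ⟨R, hR0⟩) (f := fun ω => ‖Z ω‖)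
    (h.mono fun ω hω => by rw [abs_of_nonneg (norm_nonneg _)]; exact hω)
  filter_upwards [h1, h2] with ω a b
  exact a.trans ((le_abs_self _).trans b)

lemma condExp_pull [IsProbabilityMeasure μ] (F : MeasurableSpace Ω) (A Z : Ω → 𝕜)
    (hA : StronglyMeasurable[F] A) (hAZ : Integrable (fun ω => A ω * Z ω) μ) (hZ : Integrable Z μ) :
    μ[fun ω => A ω * Z ω | F] =ᵐ[μ] fun ω => A ω * (μ[Z | F]) ω :=
  condExp_bilin_of_stronglyMeasurable_left (ContinuousLinearMap.mul ℝ 𝕜) hA hAZ hZ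

lemma bdd_mul_int [IsProbabilityMeasure μ] {A Z : Ω → 𝕜} (hA : AEStronglyMeasurable A μ) (R : ℝ)
    (hR : ∀ᵐ ω ∂μ, ‖A ω‖ ≤ R) (hZ : Integrable Z μ) : Integrable (fun ω => A ω * Z ω) μ :=
  hZ.bdd_mul hA hR

lemma test_condExp {Ω : Type*} {F mΩ : MeasurableSpace Ω} {μ : Measure Ω} [IsProbabilityMeasure μ] (hF : F ≤ mΩ) (A Z : Ω → 𝕜)
    (hA : StronglyMeasurable[F] A) (R : ℝ) (hR : ∀ᵐ ω ∂μ, ‖A ω‖ ≤ R) (hZ : Integrable Z μ) :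
    ∫ ω, A ω * (μ[Z | F]) ω ∂μ = ∫ ω, A ω * Z ω ∂μ := by
  rw [← integral_condExp hF (f := fun ω => A ω * Z ω)]
  exact integral_congr_ae (condExp_pull F A Z hA
    (bdd_mul_int (hA.mono hF).aestronglyMeasurable R hR hZ) hZ).symm

lemma Rep.down [IsProbabilityMeasure μ] (h : IsInhomMarkov μ X κ) {j : ℕ} (n : ℕ) {Z : Ω → 𝕜}
    (hZ : Rep μ X (j + n) Z) : Rep μ X j Z := by
  obtain ⟨hi, g, R, hg, hR, he⟩ := hZ
  have hmk := h.isMarkovKernel j n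
  refine ⟨hi, fun x => ∫ y, g y ∂(κ j n x), R, (hg.stronglyMeasurable.integral_kernel).measurable, fun x => ?_, ?_⟩
  · have := norm_integral_le_of_norm_le_const (μ := κ j n x) (Eventually.of_forall hR)
    simpa using this
  · have h1 := condExp_condExp_of_le (μ := μ) (f := Z) (past_mono (X := X) (Nat.le_add_right j n)) (past_le h.meas (j + n))
    refine h1.symm.trans ((condExp_congr_ae he).trans ?_)
    exact condExp_kernel h j n g hg R hR

lemma Rep.add [IsProbabilityMeasure μ] {j : ℕ} {Z W : Ω → 𝕜} (hZ : Rep μ X j Z) (hW : Rep μ X j W) :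
    Rep μ X j (fun ω => Z ω + W ω) := by
  obtain ⟨hi, g, R, hg, hR, he⟩ := hZ
  obtain ⟨hi', g', R', hg', hR', he'⟩ := hW
  refine ⟨hi.add hi', fun x => g x + g' x, R + R', hg.add hg', fun x => (norm_add_le _ _).trans (add_le_add (hR x) (hR' x)), ?_⟩
  have := condExp_add hi hi' (pastSigma X j)
  refine this.trans ?_
  filter_upwards [he, he'] with ω a b
  rw [Pi.add_apply, a, b]

lemma Rep.mul [IsProbabilityMeasure μ] (hX : ∀ j, Measurable (X j)) {j : ℕ} {Z : Ω → 𝕜} (hZ : Rep μ X j Z) (q : 𝒳 j → 𝕜) (hq : Measurable q)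
    (Q : ℝ) (hQ : ∀ x, ‖q x‖ ≤ Q) : Rep μ X j (fun ω => q (X j ω) * Z ω) := by
  obtain ⟨hi, g, R, hg, hR, he⟩ := hZ
  have hint : Integrable (fun ω => q (X j ω) * Z ω) μ :=
    bdd_mul_int (hq.comp (hX j)).aestronglyMeasurable Q (Eventually.of_forall fun ω => hQ _) hi
  refine ⟨hint, fun x => q x * g x, Q * R, hq.mul hg, fun x => ?_, ?_⟩
  · rw [norm_mul]; exact mul_le_mul (hQ x) (hR x) (norm_nonneg _) ((norm_nonneg _).trans (hQ x))
  · refine (condExp_pull _ _ _ (past_smeas le_rfl hq) hint hi).trans ?_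
    filter_upwards [he] with ω a
    rw [a]

lemma Rep.one [IsProbabilityMeasure μ] (hX : ∀ j, Measurable (X j)) (j : ℕ) (c : 𝕜) : Rep μ X j (fun _ => c) := by
  refine ⟨integrable_const _, fun _ => c, ‖c‖, measurable_const, fun _ => le_rfl, ?_⟩
  rw [condExp_const (past_le hX j)]

lemma Rep.fn [IsProbabilityMeasure μ] (hX : ∀ j, Measurable (X j)) {j : ℕ} (q : 𝒳 j → 𝕜) (hq : Measurable q)
    (Q : ℝ) (hQ : ∀ x, ‖q x‖ ≤ Q) : Rep μ X j (fun ω => q (X j ω)) := by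
  have := (Rep.one (μ := μ) hX j (1 : 𝕜)).mul hX q hq Q hQ
  simpa using this

lemma Rep.bound [IsProbabilityMeasure μ] {j : ℕ} {Z : Ω → 𝕜} (hZ : Rep μ X j Z)
    (c : 𝕜) (r : ℝ) (hr : 0 ≤ r) (h : ∀ᵐ ω ∂μ, ‖(μ[Z | pastSigma X j]) ω - c‖ ≤ r) :
    ∃ g : 𝒳 j → 𝕜, Measurable g ∧ (∀ x, ‖g x - c‖ ≤ r) ∧ μ[Z | pastSigma X j] =ᵐ[μ] fun ω => g (X j ω) := by
  classical
  obtain ⟨hi, g, R, hg, hR, he⟩ := hZ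
  refine ⟨fun x => if ‖g x - c‖ ≤ r then g x else c, ?_, fun x => ?_, ?_⟩
  · exact Measurable.ite (measurableSet_le (by fun_prop) measurable_const) hg measurable_const
  · show ‖(if ‖g x - c‖ ≤ r then g x else c) - c‖ ≤ r
    split_ifs with h
    · exact h
    · simpa using hr
  · filter_upwards [he, h] with ω a b
    rw [a] at b
    rw [a, if_pos b]

lemma Rep.contract [IsProbabilityMeasure μ] {n₀ : ℕ} {γ : ℝ} {m : ∀ j, Measure (𝒳 j)}
    (hd : Dob μ X κ n₀ γ m) {j : ℕ} {Z : Ω → 𝕜} (hZ : Rep μ X (j + n₀) Z)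
    (c : 𝕜) (r : ℝ) (hr : 0 ≤ r) (h : ∀ᵐ ω ∂μ, ‖(μ[Z | pastSigma X (j + n₀)]) ω - c‖ ≤ r) :
    ∃ c' : 𝕜, ‖c' - c‖ ≤ γ * r ∧ ∀ᵐ ω ∂μ, ‖(μ[Z | pastSigma X j]) ω - c'‖ ≤ (1 - γ) * r := by
  obtain ⟨g, hg, hgr, he⟩ := hZ.bound c r hr h
  have hmk := hd.mc.isMarkovKernel j n₀
  have hmp := hd.mprob (j + n₀)
  refine ⟨c + (γ : 𝕜) * ∫ y, (g y - c) ∂(m (j + n₀)), ?_, ?_⟩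
  · rw [add_sub_cancel_left, norm_mul, RCLike.norm_ofReal, abs_of_pos hd.gpos]
    refine mul_le_mul_of_nonneg_left ?_ hd.gpos.le
    have := norm_integral_le_of_norm_le_const (μ := m (j + n₀)) (Eventually.of_forall hgr)
    simpa using this
  · have h1 := condExp_condExp_of_le (μ := μ) (f := Z) (past_mono (X := X) (Nat.le_add_right j n₀)) (past_le hd.mc.meas (j + n₀))
    have h2 := h1.symm.trans ((condExp_congr_ae he).trans
      (condExp_kernel hd.mc j n₀ g hg (r + ‖c‖) (fun x => by
        calc ‖g x‖ = ‖(g x - c) + c‖ := by simp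
          _ ≤ _ := (norm_add_le _ _).trans (add_le_add_left (hgr x) _))))
    filter_upwards [h2] with ω a
    rw [a]
    exact WCLT.contract (κ j n₀ (X j ω)) (m (j + n₀)) γ hd.gpos hd.glt (hd.doe j (X j ω)) g hg c r hgr

lemma osc [IsProbabilityMeasure μ] {n₀ : ℕ} {γ : ℝ} {m : ∀ j, Measure (𝒳 j)}
    (hd : Dob μ X κ n₀ γ m) (n : ℕ) (Y : ℕ → Ω → ℝ) (K : ℝ) (hK : 0 ≤ K) (hYi : ∀ l, Integrable (Y l) μ)
    (hY : ∀ l, ∀ᵐ ω ∂μ, |Y l ω| ≤ K) (hrep : ∀ i, Rep μ X i (fun ω => ∑ l ∈ Finset.Ico i n, Y l ω)) (i : ℕ) :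
    ∃ c : ℝ, ∀ᵐ ω ∂μ, ‖(μ[fun ω => ∑ l ∈ Finset.Ico i n, Y l ω | pastSigma X i]) ω - c‖ ≤ n₀ * K / γ := by
  have hg := hd.gpos
  have hblock : ∀ i k, k ≤ n₀ → ∀ᵐ ω ∂μ, ‖∑ l ∈ Finset.Ico i (i + k), Y l ω‖ ≤ n₀ * K := by
    intro i k hk
    filter_upwards [ae_all_iff.2 hY] with ω hω
    refine (norm_sum_le _ _).trans ?_
    calc ∑ l ∈ Finset.Ico i (i + k), ‖Y l ω‖ ≤ ∑ l ∈ Finset.Ico i (i + k), K := Finset.sum_le_sum fun l _ => hω l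
      _ = k * K := by simp
      _ ≤ n₀ * K := by gcongr
  induction' hs : n - i using Nat.strong_induction_on with s ih generalizing i
  by_cases hin : i + n₀ ≤ n
  · obtain ⟨c, hc⟩ := ih (n - (i + n₀)) (by have := hd.npos; omega) (i + n₀) rfl
    obtain ⟨c', -, hc'⟩ := (hrep (i + n₀)).contract hd c _ (by positivity) hc
    refine ⟨c', ?_⟩
    have e : (fun ω => ∑ l ∈ Finset.Ico i n, Y l ω) = (fun ω => ∑ l ∈ Finset.Ico i (i + n₀), Y l ω) +
        (fun ω => ∑ l ∈ Finset.Ico (i + n₀) n, Y l ω) := by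
      funext ω; rw [Pi.add_apply, Finset.sum_Ico_consecutive _ (by omega) hin]
    have hadd := condExp_add (μ := μ) (integrable_finsetSum (Finset.Ico i (i + n₀)) fun l _ => hYi l)
      (integrable_finsetSum (Finset.Ico (i + n₀) n) fun l _ => hYi l) (pastSigma X i)
    have hb := condExp_bdd (pastSigma X i) _ _ (by positivity) (hblock i n₀ le_rfl)
    rw [e]
    filter_upwards [hadd, hb, hc'] with ω a b d
    rw [a, Pi.add_apply, add_sub_assoc]
    refine (norm_add_le _ _).trans ((add_le_add b d).trans (le_of_eq ?_))
    field_simp; ring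
  · refine ⟨0, ?_⟩
    have e : (fun ω => ∑ l ∈ Finset.Ico i n, Y l ω) = (fun ω => ∑ l ∈ Finset.Ico i (i + (n - i)), Y l ω) := by
      funext ω
      by_cases h : i ≤ n
      · rw [Nat.add_sub_cancel' h]
      · rw [Finset.Ico_eq_empty (by omega), Finset.Ico_eq_empty (by omega)]
    rw [e]
    have hb := condExp_bdd (pastSigma X i) _ _ (by positivity) (hblock i (n - i) (by omega))
    filter_upwards [hb] with ω b
    rw [sub_zero]
    refine b.trans ?_
    rw [le_div_iff₀ hg]
    exact mul_le_of_le_one_right (by positivity) hd.glt.le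

end WCLT

end


section
namespace WCLT
variable {Ω : Type*} [mΩ : MeasurableSpace Ω] {𝒳 : ℕ → Type*} [∀ j, MeasurableSpace (𝒳 j)]
  {μ : Measure Ω} {X : ∀ j, Ω → 𝒳 j} {κ : ∀ j n, Kernel (𝒳 j) (𝒳 (j + n))}

lemma condExp_sub_const [IsProbabilityMeasure μ] {𝕜 : Type*} [RCLike 𝕜] (hX : ∀ j, Measurable (X j)) (j : ℕ) (Z : Ω → 𝕜) (c : 𝕜)
    (hZ : Integrable Z μ) :
    μ[fun ω => Z ω - c | pastSigma X j] =ᵐ[μ] fun ω => (μ[Z | pastSigma X j]) ω - c := by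
  have := condExp_sub hZ (integrable_const c (μ := μ)) (pastSigma X j)
  refine this.trans ?_
  rw [condExp_const (past_le hX j)]
  exact Eventually.of_forall fun ω => rfl

lemma block_sum_le (f : ∀ j, 𝒳 j → ℝ) (C : ℝ) (hC0 : 0 ≤ C) (hC : ∀ j x, |f j x| ≤ C) (i k n₀ : ℕ) (hk : k ≤ n₀) (ω : Ω) :
    |∑ l ∈ Finset.Ico i (i + k), f l (X l ω)| ≤ n₀ * C := by
  refine (Finset.abs_sum_le_sum_abs _ _).trans ?_
  calc ∑ l ∈ Finset.Ico i (i + k), |f l (X l ω)| ≤ ∑ l ∈ Finset.Ico i (i + k), C := Finset.sum_le_sum fun l _ => hC l _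
    _ = k * C := by simp
    _ ≤ n₀ * C := by gcongr

lemma rep_exp [IsProbabilityMeasure μ] (h : IsInhomMarkov μ X κ) (f : ∀ j, 𝒳 j → ℝ) (hf : ∀ j, Measurable (f j))
    (C : ℝ) (hC : ∀ j x, |f j x| ≤ C) (z : ℂ) (n j : ℕ) :
    Rep μ X j (fun ω => Complex.exp (z * ((∑ l ∈ Finset.Ico j n, f l (X l ω) : ℝ) : ℂ))) := by
  induction' hs : n - j with s ih generalizing j
  · have e : Finset.Ico j n = ∅ := Finset.Ico_eq_empty (by omega)
    simp only [e, Finset.sum_empty, Complex.ofReal_zero, mul_zero, Complex.exp_zero]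
    exact Rep.one h.meas j 1
  · have h1 := (ih (j + 1) (by omega)).down h (j := j) 1
    have h2 := h1.mul h.meas (fun x => Complex.exp (z * (f j x : ℂ))) (by have := hf j; fun_prop) (Real.exp (‖z‖ * C)) (fun x => by
      rw [Complex.norm_exp]
      refine Real.exp_le_exp.2 ((Complex.re_le_norm _).trans ?_)
      rw [norm_mul, Complex.norm_real]
      exact mul_le_mul_of_nonneg_left (hC j x) (norm_nonneg _))
    convert h2 using 2 with ω
    rw [← Complex.exp_add, Finset.sum_eq_sum_Ico_succ_bot (by omega)]
    push_cast
    ring_nf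

lemma exp_small (z : ℂ) (ξ b g : ℝ) (hξ : |ξ| ≤ b) (hz : ‖z‖ * b ≤ g / 12) (hg : g ≤ 1) :
    ‖Complex.exp (z * (ξ : ℂ)) - 1‖ ≤ g / 6 := by
  have h1 : ‖z * (ξ : ℂ)‖ ≤ g / 12 := by
    rw [norm_mul, Complex.norm_real]
    exact (mul_le_mul_of_nonneg_left hξ (norm_nonneg _)).trans hz
  refine (Complex.norm_exp_sub_one_le (h1.trans (by linarith))).trans (by linarith)

lemma nonvanish_aux [IsProbabilityMeasure μ] {n₀ : ℕ} {γ : ℝ} {m : ∀ j, Measure (𝒳 j)}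
    (hd : Dob μ X κ n₀ γ m) (f : ∀ j, 𝒳 j → ℝ) (hf : ∀ j, Measurable (f j))
    (C : ℝ) (hC0 : 0 ≤ C) (hC : ∀ j x, |f j x| ≤ C) (z : ℂ) (hz : ‖z‖ * (n₀ * C) ≤ γ / 12) (n j : ℕ) :
    ∃ c : ℂ, c ≠ 0 ∧ ∀ᵐ ω ∂μ, ‖(μ[fun ω => Complex.exp (z * ((∑ l ∈ Finset.Ico j n, f l (X l ω) : ℝ) : ℂ)) | pastSigma X j]) ω - c‖
      ≤ ‖c‖ / 2 := by
  have hg := hd.gpos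
  have hg1 := hd.glt
  have hX := hd.mc.meas
  induction' hs : n - j using Nat.strong_induction_on with s ih generalizing j
  by_cases hin : j + n₀ ≤ n
  · obtain ⟨c, hc0, hc⟩ := ih (n - (j + n₀)) (by have := hd.npos; omega) (j + n₀) rfl
    have hrep := rep_exp hd.mc f hf C hC z n (j + n₀)
    obtain ⟨c', hcc, hc'⟩ := hrep.contract hd c _ (by positivity) hc
    have hcp : 0 < ‖c‖ := norm_pos_iff.2 hc0
    have hn : (1 - γ / 2) * ‖c‖ ≤ ‖c'‖ := by
      have := norm_sub_norm_le c c'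
      rw [norm_sub_rev] at this
      nlinarith
    refine ⟨c', ?_, ?_⟩
    · rw [← norm_pos_iff]; refine lt_of_lt_of_le ?_ hn
      exact mul_pos (by linarith) hcp
    set Z : Ω → ℂ := fun ω => Complex.exp (z * ((∑ l ∈ Finset.Ico (j + n₀) n, f l (X l ω) : ℝ) : ℂ)) with hZ
    set A : Ω → ℂ := fun ω => Complex.exp (z * ((∑ l ∈ Finset.Ico j (j + n₀), f l (X l ω) : ℝ) : ℂ)) - 1 with hA
    have hAb : ∀ ω, ‖A ω‖ ≤ γ / 6 := fun ω => exp_small z _ _ γ (block_sum_le f C hC0 hC j n₀ n₀ le_rfl ω) hz hg1.le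
    have hAm : StronglyMeasurable[pastSigma X (j + n₀)] A := by
      apply Measurable.stronglyMeasurable
      have : Measurable[pastSigma X (j + n₀)] (fun ω => ∑ l ∈ Finset.Ico j (j + n₀), f l (X l ω)) := by
        refine Finset.measurable_fun_sum _ fun l hl => ?_
        have hl' := (Finset.mem_Ico.1 hl).2
        exact (hf l).comp (past_meas hl'.le)
      exact ((Complex.measurable_exp.comp ((Complex.measurable_ofReal.comp this).const_mul z)).sub_const 1)
    have hAZ : Integrable (fun ω => A ω * Z ω) μ :=
      bdd_mul_int (hAm.mono (past_le hX _)).aestronglyMeasurable (γ / 6) (Eventually.of_forall hAb) hrep.1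
    have e : (fun ω => Complex.exp (z * ((∑ l ∈ Finset.Ico j n, f l (X l ω) : ℝ) : ℂ))) = Z + (fun ω => A ω * Z ω) := by
      funext ω
      rw [Pi.add_apply, ← Finset.sum_Ico_consecutive _ (Nat.le_add_right j n₀) hin]
      simp only [hA, hZ]
      push_cast
      rw [mul_add, Complex.exp_add]; ring
    have hp := condExp_pull (pastSigma X (j + n₀)) A Z hAm hAZ hrep.1
    have hpb : ∀ᵐ ω ∂μ, ‖(μ[fun ω => A ω * Z ω | pastSigma X (j + n₀)]) ω‖ ≤ γ / 4 * ‖c‖ := by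
      filter_upwards [hp, hc] with ω a b
      rw [a, norm_mul]
      have h1 := hAb ω
      have h2 : ‖(μ[Z | pastSigma X (j + n₀)]) ω‖ ≤ 3 / 2 * ‖c‖ := by
        have := norm_sub_norm_le ((μ[Z | pastSigma X (j + n₀)]) ω) c
        linarith
      calc _ ≤ γ / 6 * (3 / 2 * ‖c‖) := mul_le_mul h1 h2 (norm_nonneg _) (by positivity)
        _ = _ := by ring
    have hb := condExp_bdd (pastSigma X j) _ _ (by positivity) hpb
    have htower := condExp_condExp_of_le (μ := μ) (f := fun ω => A ω * Z ω) (past_mono (X := X) (Nat.le_add_right j n₀)) (past_le hX (j + n₀))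
    have hadd := condExp_add (μ := μ) hrep.1 hAZ (pastSigma X j)
    rw [e]
    filter_upwards [hadd, hb, hc', htower] with ω a b d t
    rw [t] at b
    rw [a, Pi.add_apply, add_sub_right_comm]
    refine (norm_add_le _ _).trans ((add_le_add d b).trans ?_)
    nlinarith
  · refine ⟨1, one_ne_zero, ?_⟩
    have e : (fun ω => ∑ l ∈ Finset.Ico j n, f l (X l ω)) = (fun ω => ∑ l ∈ Finset.Ico j (j + (n - j)), f l (X l ω)) := by
      funext ω
      by_cases h : j ≤ n
      · rw [Nat.add_sub_cancel' h]
      · rw [Finset.Ico_eq_empty (by omega), Finset.Ico_eq_empty (by omega)]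
    have hrep := rep_exp hd.mc f hf C hC z n j
    have h1 := condExp_sub_const hX j _ 1 hrep.1
    have h2 := condExp_bdd (μ := μ) (pastSigma X j) (fun ω => Complex.exp (z * ((∑ l ∈ Finset.Ico j n, f l (X l ω) : ℝ) : ℂ)) - 1)
      (γ / 6) (by positivity) (Eventually.of_forall fun ω => by
        rw [congrFun e ω]
        exact exp_small z _ _ γ (block_sum_le f C hC0 hC j (n - j) n₀ (by omega) ω) hz hg1.le)
    filter_upwards [h1, h2] with ω a b
    rw [← a]
    refine b.trans ?_
    rw [norm_one]; linarith

lemma nonvanish [IsProbabilityMeasure μ] {n₀ : ℕ} {γ : ℝ} {m : ∀ j, Measure (𝒳 j)}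
    (hd : Dob μ X κ n₀ γ m) (f : ∀ j, 𝒳 j → ℝ) (hf : ∀ j, Measurable (f j))
    (C : ℝ) (hC0 : 0 ≤ C) (hC : ∀ j x, |f j x| ≤ C) (z : ℂ) (hz : ‖z‖ * (n₀ * C) ≤ γ / 12) (n : ℕ) (b : ℝ) :
    ∫ ω, Complex.exp (z * ((∑ l ∈ Finset.range n, f l (X l ω) - b : ℝ) : ℂ)) ∂μ ≠ 0 := by
  obtain ⟨c, hc0, hc⟩ := nonvanish_aux hd f hf C hC0 hC z hz n 0
  have hX := hd.mc.meas
  have hrep := rep_exp hd.mc f hf C hC z n 0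
  have h1 := condExp_sub_const hX 0 _ c hrep.1
  have h2 : ∀ᵐ ω ∂μ, ‖(μ[fun ω => Complex.exp (z * ((∑ l ∈ Finset.Ico 0 n, f l (X l ω) : ℝ) : ℂ)) - c | pastSigma X 0]) ω‖ ≤ ‖c‖ / 2 := by
    filter_upwards [h1, hc] with ω a b
    rw [a]; exact b
  have h3 := norm_integral_le_of_norm_le_const h2
  rw [integral_condExp (past_le hX 0), integral_sub hrep.1 (integrable_const _)] at h3
  simp only [Finset.range_eq_Ico]
  have e : (fun ω => Complex.exp (z * ((∑ l ∈ Finset.Ico 0 n, f l (X l ω) - b : ℝ) : ℂ))) =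
      fun ω => Complex.exp (- (z * b)) * Complex.exp (z * ((∑ l ∈ Finset.Ico 0 n, f l (X l ω) : ℝ) : ℂ)) := by
    funext ω
    rw [← Complex.exp_add]; push_cast; ring_nf
  rw [e, integral_const_mul]
  refine mul_ne_zero (Complex.exp_ne_zero _) fun h0 => ?_
  rw [h0] at h3
  have hcp : 0 < ‖c‖ := norm_pos_iff.2 hc0
  simp at h3
  linarith

end WCLT

end


section
namespace WCLT
variable {Ω : Type*} [mΩ : MeasurableSpace Ω] {𝒳 : ℕ → Type*} [∀ j, MeasurableSpace (𝒳 j)]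
  {μ : Measure Ω} {X : ∀ j, Ω → 𝒳 j} {κ : ∀ j n, Kernel (𝒳 j) (𝒳 (j + n))}

structure Mds (μ : Measure Ω) (X : ∀ j, Ω → 𝒳 j) (d : ℕ → Ω → ℝ) (B : ℝ) : Prop where
  sm : ∀ i, Measurable[pastSigma X (i + 1)] (d i)
  bd : ∀ i ω, |d i ω| ≤ B
  ce : ∀ i, μ[d i | pastSigma X i] =ᵐ[μ] fun _ => 0
  rep : ∀ n i, Rep μ X i (fun ω => ∑ l ∈ Finset.Ico i n, d l ω ^ 2)

lemma rep_sum [IsProbabilityMeasure μ] (h : IsInhomMarkov μ X κ) (f : ∀ j, 𝒳 j → ℝ) (hf : ∀ j, Measurable (f j))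
    (C : ℝ) (hC : ∀ j x, |f j x| ≤ C) (n j : ℕ) :
    Rep μ X j (fun ω => ∑ l ∈ Finset.Ico j n, f l (X l ω)) := by
  induction' hs : n - j with s ih generalizing j
  · have e : Finset.Ico j n = ∅ := Finset.Ico_eq_empty (by omega)
    simp only [e, Finset.sum_empty]
    exact Rep.one h.meas j 0
  · have h1 := (ih (j + 1) (by omega)).down h (j := j) 1
    have h2 := (Rep.fn (μ := μ) h.meas (f j) (hf j) C (hC j)).add h1
    convert h2 using 2 with ω
    rw [Finset.sum_eq_sum_Ico_succ_bot (by omega)]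

lemma rep_sq [IsProbabilityMeasure μ] (h : IsInhomMarkov μ X κ) (G : ∀ i, 𝒳 (i + 1) → ℝ) (q : ∀ i, 𝒳 i → ℝ)
    (hG : ∀ i, Measurable (G i)) (hq : ∀ i, Measurable (q i)) (R : ℕ → ℝ) (hGR : ∀ i x, |G i x| ≤ R i) (hqR : ∀ i x, |q i x| ≤ R i)
    (n j : ℕ) :
    Rep μ X j (fun ω => ∑ l ∈ Finset.Ico j n, (G l (X (l + 1) ω) - q l (X l ω)) ^ 2) := by
  induction' hs : n - j with s ih generalizing j
  · have e : Finset.Ico j n = ∅ := Finset.Ico_eq_empty (by omega)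
    simp only [e, Finset.sum_empty]
    exact Rep.one h.meas j 0
  · have h1 := (ih (j + 1) (by omega)).down h (j := j) 1
    have g1 := (Rep.fn (μ := μ) h.meas (G j) (hG j) (R j) (hGR j)).down h (j := j) 1
    have g2 := (Rep.fn (μ := μ) h.meas (fun x => G j x ^ 2) ((hG j).pow_const 2) (R j ^ 2) (fun x => by
      rw [norm_pow]; exact pow_le_pow_left₀ (norm_nonneg _) (hGR j x) 2)).down h (j := j) 1
    have g3 := g1.mul h.meas (fun x => -2 * q j x) ((hq j).const_mul _) (2 * R j) (fun x => by
      rw [norm_mul]; have := hqR j x; simp only [Real.norm_eq_abs]; norm_num; exact this)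
    have g4 := Rep.fn (μ := μ) h.meas (fun x => q j x ^ 2) ((hq j).pow_const 2) (R j ^ 2) (fun x => by
      rw [norm_pow]; exact pow_le_pow_left₀ (norm_nonneg _) (hqR j x) 2)
    convert ((g2.add g3).add g4).add h1 using 2 with ω
    rw [Finset.sum_eq_sum_Ico_succ_bot (by omega)]
    ring

lemma mdecomp [IsProbabilityMeasure μ] {n₀ : ℕ} {γ : ℝ} {m : ∀ j, Measure (𝒳 j)}
    (hd : Dob μ X κ n₀ γ m) (f : ∀ j, 𝒳 j → ℝ) (hf : ∀ j, Measurable (f j))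
    (C : ℝ) (hC0 : 0 ≤ C) (hC : ∀ j x, |f j x| ≤ C) (n : ℕ) :
    ∃ (a : Ω → ℝ) (d : ℕ → Ω → ℝ), Mds μ X d (2 * (n₀ * C / γ)) ∧ Measurable[pastSigma X 0] a ∧
      (∀ᵐ ω ∂μ, |a ω| ≤ 2 * (n₀ * C / γ)) ∧
      ∀ᵐ ω ∂μ, ∑ l ∈ Finset.range n, f l (X l ω) - ∫ ω, ∑ l ∈ Finset.range n, f l (X l ω) ∂μ
        = a ω + ∑ i ∈ Finset.range n, d i ω := by
  have hg := hd.gpos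
  have hX := hd.mc.meas
  set r := n₀ * C / γ with hr
  have hr0 : 0 ≤ r := by positivity
  set T : ℕ → Ω → ℝ := fun i ω => ∑ l ∈ Finset.Ico i n, f l (X l ω) with hT
  have hrep : ∀ i, Rep μ X i (T i) := rep_sum hd.mc f hf C hC n
  have hosc := osc hd n (fun l ω => f l (X l ω)) C hC0 (fun l => (Rep.fn (μ := μ) hX (f l) (hf l) C (hC l)).1)
    (fun l => Eventually.of_forall fun ω => hC l _) hrep
  choose c hc using hosc
  have hG := fun i => (hrep (i + 1)).bound (c (i + 1)) r hr0 (hc (i + 1))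
  choose G hGm hGb hGe using hG
  have hrep' : ∀ i, Rep μ X i (T (i + 1)) := fun i => (hrep (i + 1)).down hd.mc (j := i) 1
  have htow := fun i => condExp_condExp_of_le (μ := μ) (f := T (i + 1)) (past_mono (X := X) (Nat.le_add_right i 1)) (past_le hX (i + 1))
  have hq' : ∀ i, ∀ᵐ ω ∂μ, ‖(μ[T (i + 1) | pastSigma X i]) ω - c (i + 1)‖ ≤ r := by
    intro i
    have h1 := condExp_sub_const (μ := μ) hX i (μ[T (i + 1) | pastSigma X (i + 1)]) (c (i + 1)) integrable_condExp
    have hb : ∀ᵐ ω ∂μ, ‖(fun ω => (μ[T (i + 1) | pastSigma X (i + 1)]) ω - c (i + 1)) ω‖ ≤ r := hc (i + 1)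
    have h2 := condExp_bdd (pastSigma X i) _ r hr0 hb
    filter_upwards [h1, h2, htow i] with ω a b t
    rw [a, t] at b; exact b
  have hq := fun i => (hrep' i).bound (c (i + 1)) r hr0 (hq' i)
  choose q hqm hqb hqe using hq
  have key : ∀ (u v : ℝ), |u - v| ≤ r → |u| ≤ |v| + r := fun u v h => by
    have := abs_sub_abs_le_abs_sub u v; linarith
  refine ⟨fun ω => (μ[T 0 | pastSigma X 0]) ω - ∫ ω, ∑ l ∈ Finset.range n, f l (X l ω) ∂μ,
    fun i ω => G i (X (i + 1) ω) - q i (X i ω), ⟨?_, ?_, ?_, ?_⟩, ?_, ?_, ?_⟩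
  · intro i
    exact ((hGm i).comp (past_meas le_rfl)).sub ((hqm i).comp (past_meas (Nat.le_succ i)))
  · intro i ω
    have h1 := hGb i (X (i + 1) ω)
    have h2 := hqb i (X i ω)
    rw [Real.norm_eq_abs] at h1 h2
    rw [abs_le] at *
    constructor <;> linarith [h1.1, h1.2, h2.1, h2.2]
  · intro i
    have i1 := (Rep.fn (μ := μ) hX (G i) (hGm i) (|c (i + 1)| + r) (fun x => key _ _ (hGb i x))).1
    have i2 := (Rep.fn (μ := μ) hX (q i) (hqm i) (|c (i + 1)| + r) (fun x => key _ _ (hqb i x))).1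
    have h1 := condExp_sub i1 i2 (pastSigma X i)
    refine h1.trans ?_
    have h2 : μ[fun ω => q i (X i ω) | pastSigma X i] = fun ω => q i (X i ω) :=
      condExp_of_stronglyMeasurable (past_le hX i) (past_smeas le_rfl (hqm i)) i2
    have h3 := (condExp_congr_ae (m := pastSigma X i) (hGe i)).symm.trans (htow i)
    filter_upwards [h3, hqe i] with ω a b
    rw [Pi.sub_apply, a, b, h2, sub_self]
  · intro n i
    exact rep_sq hd.mc G q hGm hqm (fun i => |c (i + 1)| + r) (fun i x => key _ _ (hGb i x)) (fun i x => key _ _ (hqb i x)) n i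
  · exact (stronglyMeasurable_condExp.measurable).sub_const _
  · have e : ∫ ω, ∑ l ∈ Finset.range n, f l (X l ω) ∂μ = ∫ ω, T 0 ω ∂μ := by simp only [hT, Finset.range_eq_Ico]
    rw [e]
    have h1 := norm_integral_le_of_norm_le_const (hc 0)
    rw [integral_sub integrable_condExp (integrable_const _), integral_condExp (past_le hX 0)] at h1
    simp only [integral_const, probReal_univ, smul_eq_mul, one_mul, mul_one, Real.norm_eq_abs] at h1
    filter_upwards [hc 0] with ω h2
    rw [Real.norm_eq_abs] at h2
    have h1' : |∫ ω, T 0 ω ∂μ - c 0| ≤ r := h1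
    have h2' : |(μ[T 0 | pastSigma X 0]) ω - c 0| ≤ r := h2
    clear h1 h2
    rw [abs_le] at *
    constructor <;> linarith [h1'.1, h1'.2, h2'.1, h2'.2]
  · have hstep : ∀ i, i < n → μ[T i | pastSigma X i] =ᵐ[μ] fun ω => f i (X i ω) + q i (X i ω) := by
      intro i hi
      have i1 := (Rep.fn (μ := μ) hX (f i) (hf i) C (hC i)).1
      have e : T i = (fun ω => f i (X i ω)) + T (i + 1) := by
        funext ω; simp only [hT, Pi.add_apply]; rw [Finset.sum_eq_sum_Ico_succ_bot (by omega)]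
      rw [e]
      refine (condExp_add i1 (hrep (i + 1)).1 _).trans ?_
      have h2 : μ[fun ω => f i (X i ω) | pastSigma X i] = fun ω => f i (X i ω) :=
        condExp_of_stronglyMeasurable (past_le hX i) (past_smeas le_rfl (hf i)) i1
      filter_upwards [hqe i] with ω a
      rw [Pi.add_apply, h2, a]
    have hall : ∀ᵐ ω ∂μ, ∀ i, i < n → (μ[T i | pastSigma X i]) ω = f i (X i ω) + q i (X i ω) := by
      rw [ae_all_iff]; intro i
      by_cases hi : i < n
      · filter_upwards [hstep i hi] with ω a _ using a
      · exact Eventually.of_forall fun ω h => absurd h hi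
    have hn : μ[T n | pastSigma X n] = fun _ => 0 := by
      have : T n = fun _ => 0 := by funext ω; simp [hT]
      rw [this, condExp_const (past_le hX n)]
    filter_upwards [hall, ae_all_iff.2 hGe] with ω a b
    have h1 : ∀ i ∈ Finset.range n, G i (X (i + 1) ω) - q i (X i ω) =
        f i (X i ω) + ((μ[T (i + 1) | pastSigma X (i + 1)]) ω - (μ[T i | pastSigma X i]) ω) := by
      intro i hi
      rw [b i, a i (Finset.mem_range.1 hi)]; ring
    rw [Finset.sum_congr rfl h1, Finset.sum_add_distrib, Finset.sum_range_sub (fun i => (μ[T i | pastSigma X i]) ω), hn]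
    ring

end WCLT

end


section
namespace WCLT
variable {Ω : Type*} [mΩ : MeasurableSpace Ω] {𝒳 : ℕ → Type*} [∀ j, MeasurableSpace (𝒳 j)]
  {μ : Measure Ω} {X : ∀ j, Ω → 𝒳 j} {κ : ∀ j n, Kernel (𝒳 j) (𝒳 (j + n))}
  {d : ℕ → Ω → ℝ} {B : ℝ}

lemma int_bdd [IsProbabilityMeasure μ] {Z : Ω → ℝ} (hZ : Measurable Z) (R : ℝ) (h : ∀ᵐ ω ∂μ, |Z ω| ≤ R) : Integrable Z μ :=
  Integrable.of_bound hZ.aestronglyMeasurable R h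

lemma Mds.meas (hm : Mds μ X d B) (hX : ∀ j, Measurable (X j)) (i : ℕ) : Measurable (d i) :=
  (hm.sm i).mono (past_le hX (i + 1)) le_rfl

lemma Mds.smk (hm : Mds μ X d B) {i k : ℕ} (h : i < k) : Measurable[pastSigma X k] (d i) :=
  (hm.sm i).mono (past_mono h) le_rfl

lemma Mds.int [IsProbabilityMeasure μ] (hm : Mds μ X d B) (hX : ∀ j, Measurable (X j)) (i : ℕ) : Integrable (d i) μ :=
  int_bdd (hm.meas hX i) B (Eventually.of_forall (hm.bd i))

lemma Mds.sq_le (hm : Mds μ X d B) (i : ℕ) (ω : Ω) : d i ω ^ 2 ≤ B ^ 2 :=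
  sq_le_sq' (by have := abs_le.1 (hm.bd i ω); linarith [this.1]) (abs_le.1 (hm.bd i ω)).2

lemma Mds.intsq [IsProbabilityMeasure μ] (hm : Mds μ X d B) (hX : ∀ j, Measurable (X j)) (i : ℕ) : Integrable (fun ω => d i ω ^ 2) μ :=
  int_bdd ((hm.meas hX i).pow_const 2) (B ^ 2) (Eventually.of_forall fun ω => by
    rw [abs_of_nonneg (sq_nonneg _)]; exact hm.sq_le i ω)

/-- orthogonality -/
lemma Mds.orth [IsProbabilityMeasure μ] (hm : Mds μ X d B) (hX : ∀ j, Measurable (X j)) (i : ℕ) (A : Ω → ℝ)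
    (hA : Measurable[pastSigma X i] A) (R : ℝ) (hR : ∀ᵐ ω ∂μ, |A ω| ≤ R) : ∫ ω, A ω * d i ω ∂μ = 0 := by
  rw [← test_condExp (past_le hX i) A (d i) hA.stronglyMeasurable R hR (hm.int hX i)]
  rw [← integral_zero Ω ℝ (μ := μ)]
  refine integral_congr_ae ?_
  filter_upwards [hm.ce i] with ω h
  rw [h, mul_zero]

lemma Mds.sum_sq [IsProbabilityMeasure μ] (hm : Mds μ X d B) (hX : ∀ j, Measurable (X j)) (a : Ω → ℝ) (R : ℝ)
    (ha : Measurable[pastSigma X 0] a) (haR : ∀ᵐ ω ∂μ, |a ω| ≤ R) (n : ℕ) :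
    ∑ i ∈ Finset.range n, ∫ ω, d i ω ^ 2 ∂μ ≤ ∫ ω, (a ω + ∑ i ∈ Finset.range n, d i ω) ^ 2 ∂μ := by
  induction n with
  | zero => simp; exact integral_nonneg fun ω => sq_nonneg _
  | succ n ih =>
    have hUm : Measurable[pastSigma X n] (fun ω => a ω + ∑ i ∈ Finset.range n, d i ω) :=
      (ha.mono (past_mono (Nat.zero_le n)) le_rfl).add
        (Finset.measurable_fun_sum _ fun i hi => hm.smk (Finset.mem_range.1 hi))
    have hUb : ∀ᵐ ω ∂μ, |a ω + ∑ i ∈ Finset.range n, d i ω| ≤ R + n * B := by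
      filter_upwards [haR] with ω h
      refine (abs_add_le _ _).trans (add_le_add h ((Finset.abs_sum_le_sum_abs _ _).trans ?_))
      exact (Finset.sum_le_sum fun i _ => hm.bd i ω).trans (by simp)
    have ho := hm.orth hX n _ hUm _ hUb
    have hUm' := hUm.mono (past_le hX n) le_rfl
    have hi1 : Integrable (fun ω => (a ω + ∑ i ∈ Finset.range n, d i ω) ^ 2) μ :=
      int_bdd (hUm'.pow_const 2) ((R + n * B) ^ 2) (by
        filter_upwards [hUb] with ω h
        rw [abs_pow]; exact pow_le_pow_left₀ (abs_nonneg _) h 2)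
    have hi2 : Integrable (fun ω => (a ω + ∑ i ∈ Finset.range n, d i ω) * d n ω) μ :=
      bdd_mul_int hUm'.aestronglyMeasurable _ hUb (hm.int hX n)
    have e : ∀ ω, (a ω + ∑ i ∈ Finset.range (n + 1), d i ω) ^ 2 = (a ω + ∑ i ∈ Finset.range n, d i ω) ^ 2 +
        2 * ((a ω + ∑ i ∈ Finset.range n, d i ω) * d n ω) + d n ω ^ 2 := fun ω => by
      rw [Finset.sum_range_succ]; ring
    simp only [e]
    have hi3 : Integrable (fun ω => (a ω + ∑ i ∈ Finset.range n, d i ω) ^ 2 +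
        2 * ((a ω + ∑ i ∈ Finset.range n, d i ω) * d n ω)) μ := hi1.add (hi2.const_mul 2)
    rw [integral_add hi3 (hm.intsq hX n), integral_add hi1 (hi2.const_mul 2), integral_const_mul, ho,
      Finset.sum_range_succ]
    linarith

lemma exp_le_two (x : ℝ) (h0 : 0 ≤ x) (h1 : x ≤ 1) : Real.exp x ≤ 1 + 2 * x := by
  have := Real.abs_exp_sub_one_sub_id_le (x := x) (by rw [abs_of_nonneg h0]; exact h1)
  have := (abs_le.1 this).2
  nlinarith

lemma exp_sub_sq (x : ℝ) (h : |x| ≤ 1 / 2) : Real.exp (x - 2 * x ^ 2) ≤ 1 + x := by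
  have h1 := (abs_le.1 (Real.abs_exp_sub_one_sub_id_le (x := x) (by linarith))).2
  have h2 := Real.add_one_le_exp (2 * x ^ 2)
  rw [Real.exp_sub, div_le_iff₀ (Real.exp_pos _)]
  have h3 := abs_le.1 h
  have h4 : (1 + x) * (2 * x ^ 2 + 1) ≤ (1 + x) * Real.exp (2 * x ^ 2) := mul_le_mul_of_nonneg_left h2 (by linarith)
  nlinarith [mul_nonneg (sq_nonneg x) (by linarith : 0 ≤ 1 + 2 * x)]

/-- exponential supermartingale -/
lemma Mds.super [IsProbabilityMeasure μ] (hm : Mds μ X d B) (hX : ∀ j, Measurable (X j)) (t : ℝ) (ht : |t| * B ≤ 1 / 2) (n : ℕ) :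
    Integrable (fun ω => Real.exp (t * ∑ i ∈ Finset.range n, d i ω - 2 * t ^ 2 * ∑ i ∈ Finset.range n, d i ω ^ 2)) μ ∧
    ∫ ω, Real.exp (t * ∑ i ∈ Finset.range n, d i ω - 2 * t ^ 2 * ∑ i ∈ Finset.range n, d i ω ^ 2) ∂μ ≤ 1 := by
  have hNm : ∀ n, Measurable[pastSigma X n] (fun ω => Real.exp (t * ∑ i ∈ Finset.range n, d i ω - 2 * t ^ 2 * ∑ i ∈ Finset.range n, d i ω ^ 2)) := by
    intro n
    refine Real.measurable_exp.comp (((Finset.measurable_fun_sum _ fun i hi => hm.smk (Finset.mem_range.1 hi)).const_mul _).sub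
      ((Finset.measurable_fun_sum _ fun i hi => (hm.smk (Finset.mem_range.1 hi)).pow_const 2).const_mul _))
  have hNb : ∀ n, ∀ᵐ ω ∂μ, |Real.exp (t * ∑ i ∈ Finset.range n, d i ω - 2 * t ^ 2 * ∑ i ∈ Finset.range n, d i ω ^ 2)|
      ≤ Real.exp (|t| * (n * B)) := by
    intro n
    refine Eventually.of_forall fun ω => ?_
    rw [Real.abs_exp]
    refine Real.exp_le_exp.2 ?_
    have h1 : t * ∑ i ∈ Finset.range n, d i ω ≤ |t| * (n * B) := by
      refine (le_abs_self _).trans ?_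
      rw [abs_mul]
      refine mul_le_mul_of_nonneg_left ((Finset.abs_sum_le_sum_abs _ _).trans ?_) (abs_nonneg _)
      exact (Finset.sum_le_sum fun i _ => hm.bd i ω).trans (by simp)
    have h2 : 0 ≤ 2 * t ^ 2 * ∑ i ∈ Finset.range n, d i ω ^ 2 :=
      mul_nonneg (by positivity) (Finset.sum_nonneg fun i _ => sq_nonneg _)
    linarith
  have hint : ∀ n, Integrable (fun ω => Real.exp (t * ∑ i ∈ Finset.range n, d i ω - 2 * t ^ 2 * ∑ i ∈ Finset.range n, d i ω ^ 2)) μ :=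
    fun n => int_bdd ((hNm n).mono (past_le hX n) le_rfl) _ (hNb n)
  refine ⟨hint n, ?_⟩
  induction n with
  | zero => simp
  | succ n ih =>
    have ho := hm.orth hX n _ (hNm n) _ (hNb n)
    have hi2 := bdd_mul_int ((hNm n).mono (past_le hX n) le_rfl).aestronglyMeasurable _ (hNb n) (hm.int hX n)
    refine le_trans (integral_mono (hint (n + 1)) ((hint n).add (hi2.const_mul t)) fun ω => ?_) ?_
    · have h1 := exp_sub_sq (t * d n ω) (by
        rw [abs_mul]; exact (mul_le_mul_of_nonneg_left (hm.bd n ω) (abs_nonneg _)).trans ht)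
      simp only [Finset.sum_range_succ, Pi.add_apply]
      rw [show t * (∑ i ∈ Finset.range n, d i ω + d n ω) - 2 * t ^ 2 * (∑ i ∈ Finset.range n, d i ω ^ 2 + d n ω ^ 2) =
        (t * ∑ i ∈ Finset.range n, d i ω - 2 * t ^ 2 * ∑ i ∈ Finset.range n, d i ω ^ 2) + (t * d n ω - 2 * (t * d n ω) ^ 2) by ring,
        Real.exp_add]
      refine (mul_le_mul_of_nonneg_left h1 (Real.exp_pos _).le).trans (le_of_eq (by ring))
    · rw [integral_add' (hint n) (hi2.const_mul t), integral_const_mul, ho]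
      linarith

end WCLT

end


section
namespace WCLT
variable {Ω : Type*} [mΩ : MeasurableSpace Ω] {𝒳 : ℕ → Type*} [∀ j, MeasurableSpace (𝒳 j)]
  {μ : Measure Ω} {X : ∀ j, Ω → 𝒳 j} {κ : ∀ j n, Kernel (𝒳 j) (𝒳 (j + n))}
  {d : ℕ → Ω → ℝ} {B : ℝ}

lemma Mds.Vosc [IsProbabilityMeasure μ] {n₀ : ℕ} {γ : ℝ} {m : ∀ j, Measure (𝒳 j)}
    (hd : Dob μ X κ n₀ γ m) (hm : Mds μ X d B) (n i : ℕ) :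
    ∀ᵐ ω ∂μ, |(μ[fun ω => ∑ l ∈ Finset.Ico i n, d l ω ^ 2 | pastSigma X i]) ω -
      ∫ ω, ∑ l ∈ Finset.Ico i n, d l ω ^ 2 ∂μ| ≤ 2 * (n₀ * B ^ 2 / γ) := by
  have hX := hd.mc.meas
  obtain ⟨c, hc⟩ := osc hd n (fun l ω => d l ω ^ 2) (B ^ 2) (sq_nonneg B) (hm.intsq hX)
    (fun l => Eventually.of_forall fun ω => by
      rw [abs_of_nonneg (sq_nonneg _)]; exact hm.sq_le l ω) (hm.rep n) i
  have h1 := norm_integral_le_of_norm_le_const hc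
  rw [integral_sub integrable_condExp (integrable_const _), integral_condExp (past_le hX i)] at h1
  simp only [integral_const, probReal_univ, smul_eq_mul, one_mul, mul_one, Real.norm_eq_abs] at h1
  filter_upwards [hc] with ω h2
  rw [Real.norm_eq_abs] at h2
  have h1' := abs_le.1 h1
  have h2' := abs_le.1 h2
  rw [abs_le]
  constructor <;> linarith [h1'.1, h1'.2, h2'.1, h2'.2]

lemma Mds.expQ [IsProbabilityMeasure μ] {n₀ : ℕ} {γ : ℝ} {m : ∀ j, Measure (𝒳 j)}
    (hd : Dob μ X κ n₀ γ m) (hm : Mds μ X d B) (K s : ℝ) (hK0 : 0 < K) (hK : 2 * (n₀ * B ^ 2 / γ) ≤ K)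
    (hs0 : 0 ≤ s) (hs1 : s * B ^ 2 ≤ 1) (hs2 : 6 * K * s ≤ 1) (n : ℕ) :
    Integrable (fun ω => Real.exp (s * ∑ i ∈ Finset.range n, d i ω ^ 2)) μ ∧
    ∫ ω, Real.exp (s * ∑ i ∈ Finset.range n, d i ω ^ 2) ∂μ ≤ 3 * Real.exp ((∑ i ∈ Finset.range n, ∫ ω, d i ω ^ 2 ∂μ) / K) := by
  have hX := hd.mc.meas
  set A : ℕ → Ω → ℝ := fun k ω => Real.exp (s * ∑ i ∈ Finset.range k, d i ω ^ 2) with hA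
  set V : ℕ → Ω → ℝ := fun i ω => ∑ l ∈ Finset.Ico i n, d l ω ^ 2 with hV
  have hAm : ∀ k, Measurable[pastSigma X k] (A k) := by
    intro k
    exact Real.measurable_exp.comp
      ((Finset.measurable_fun_sum _ fun i hi => (hm.smk (Finset.mem_range.1 hi)).pow_const 2).const_mul _)
  have hA0 : ∀ k ω, 0 < A k ω := fun k ω => Real.exp_pos _
  have hAb : ∀ k ω, |A k ω| ≤ Real.exp (s * (k * B ^ 2)) := by
    intro k ω
    rw [Real.abs_exp]
    refine Real.exp_le_exp.2 (mul_le_mul_of_nonneg_left ?_ hs0)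
    exact (Finset.sum_le_sum fun i _ => hm.sq_le i ω).trans (by simp)
  have hAb' : ∀ k, ∀ᵐ ω ∂μ, |A k ω| ≤ Real.exp (s * (k * B ^ 2)) := fun k => Eventually.of_forall (hAb k)
  have hAM : ∀ k, Measurable (A k) := fun k => (hAm k).mono (past_le hX k) le_rfl
  have hAi : ∀ k, Integrable (A k) μ := fun k => int_bdd (hAM k) _ (hAb' k)
  have hVi : ∀ k, Integrable (V k) μ := fun k => (hm.rep n k).1
  set H : ℕ → Ω → ℝ := fun i ω => (μ[V i | pastSigma X i]) ω - ∫ ω, V i ω ∂μ + 2 * K with hH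
  have hHb : ∀ i, ∀ᵐ ω ∂μ, K ≤ H i ω ∧ H i ω ≤ 3 * K := by
    intro i
    filter_upwards [hm.Vosc hd n i] with ω h
    have h' := abs_le.1 h
    have e : H i ω = (μ[V i | pastSigma X i]) ω - ∫ ω, V i ω ∂μ + 2 * K := rfl
    rw [e]
    constructor <;> linarith [h'.1, h'.2]
  have hHi : ∀ i, Integrable (H i) μ := fun i => (integrable_condExp.sub (integrable_const _)).add (integrable_const _)
  have hAHi : ∀ k i, Integrable (fun ω => A k ω * H i ω) μ := fun k i =>
    bdd_mul_int (hAM k).aestronglyMeasurable _ (hAb' k) (hHi i)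
  have hAVi : ∀ k i, Integrable (fun ω => A k ω * V i ω) μ := fun k i =>
    bdd_mul_int (hAM k).aestronglyMeasurable _ (hAb' k) (hVi i)
  have hAdi : ∀ k i, Integrable (fun ω => A k ω * d i ω ^ 2) μ := fun k i =>
    bdd_mul_int (hAM k).aestronglyMeasurable _ (hAb' k) (hm.intsq hX i)
  have htest : ∀ k i, k ≤ i → ∫ ω, A k ω * H i ω ∂μ = ∫ ω, A k ω * V i ω ∂μ + (2 * K - ∫ ω, V i ω ∂μ) * ∫ ω, A k ω ∂μ := by
    intro k i hki
    rw [← test_condExp (past_le hX i) (A k) (V i) ((hAm k).mono (past_mono hki) le_rfl).stronglyMeasurable _ (hAb' k) (hVi i)]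
    rw [← integral_const_mul, ← integral_add (bdd_mul_int (hAM k).aestronglyMeasurable _ (hAb' k) integrable_condExp) ((hAi k).const_mul _)]
    refine integral_congr_ae (Eventually.of_forall fun ω => ?_)
    simp only [hH]; ring
  have hstep : ∀ i, i < n → ∫ ω, A (i + 1) ω * H (i + 1) ω ∂μ ≤ Real.exp ((∫ ω, d i ω ^ 2 ∂μ) / K) * ∫ ω, A i ω * H i ω ∂μ := by
    intro i hi
    have hVs : ∀ ω, V i ω = d i ω ^ 2 + V (i + 1) ω := fun ω => by
      simp only [hV]; rw [Finset.sum_eq_sum_Ico_succ_bot hi]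
    have h1 : ∫ ω, A (i + 1) ω * H (i + 1) ω ∂μ ≤ ∫ ω, (A i ω * H (i + 1) ω + A i ω * d i ω ^ 2) ∂μ := by
      refine integral_mono_ae (hAHi _ _) ((hAHi i (i + 1)).add (hAdi i i)) ?_
      filter_upwards [hHb (i + 1)] with ω hω
      have e1 : A (i + 1) ω = A i ω * Real.exp (s * d i ω ^ 2) := by
        simp only [hA, Finset.sum_range_succ, mul_add, Real.exp_add]
      have e2 := exp_le_two (s * d i ω ^ 2) (mul_nonneg hs0 (sq_nonneg _))
        ((mul_le_mul_of_nonneg_left (hm.sq_le i ω) hs0).trans hs1)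
      show A (i + 1) ω * H (i + 1) ω ≤ A i ω * H (i + 1) ω + A i ω * d i ω ^ 2
      rw [e1, mul_assoc, ← mul_add]
      refine mul_le_mul_of_nonneg_left ?_ (hA0 i ω).le
      have hHp : 0 ≤ H (i + 1) ω := hK0.le.trans hω.1
      have e3 := mul_le_mul_of_nonneg_right e2 hHp
      have e4 : 2 * (s * d i ω ^ 2) * H (i + 1) ω ≤ 2 * (s * d i ω ^ 2) * (3 * K) :=
        mul_le_mul_of_nonneg_left hω.2 (by positivity)
      have e5 : (6 * K * s) * d i ω ^ 2 ≤ 1 * d i ω ^ 2 := mul_le_mul_of_nonneg_right hs2 (sq_nonneg _)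
      linarith
    rw [integral_add (hAHi i (i + 1)) (hAdi i i), htest i (i + 1) (Nat.le_succ i)] at h1
    have h2 : ∫ ω, A i ω * V i ω ∂μ = ∫ ω, A i ω * d i ω ^ 2 ∂μ + ∫ ω, A i ω * V (i + 1) ω ∂μ := by
      rw [← integral_add (hAdi i i) (hAVi i (i + 1))]
      refine integral_congr_ae (Eventually.of_forall fun ω => ?_)
      simp only [hVs ω]; ring
    have h3 : ∫ ω, V i ω ∂μ = ∫ ω, d i ω ^ 2 ∂μ + ∫ ω, V (i + 1) ω ∂μ := by
      rw [← integral_add (hm.intsq hX i) (hVi (i + 1))]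
      exact integral_congr_ae (Eventually.of_forall hVs)
    have h4 := htest i i le_rfl
    have h5 : K * ∫ ω, A i ω ∂μ ≤ ∫ ω, A i ω * H i ω ∂μ := by
      rw [← integral_const_mul]
      refine integral_mono_ae ((hAi i).const_mul K) (hAHi i i) ?_
      filter_upwards [hHb i] with ω hω
      rw [mul_comm]
      exact mul_le_mul_of_nonneg_left hω.1 (hA0 i ω).le
    set e := ∫ ω, d i ω ^ 2 ∂μ with he
    have he0 : 0 ≤ e := integral_nonneg fun ω => sq_nonneg _
    set I := ∫ ω, A i ω * H i ω ∂μ with hI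
    have hI0 : 0 ≤ I := le_trans (mul_nonneg hK0.le (integral_nonneg fun ω => (hA0 i ω).le)) h5
    have h6 : ∫ ω, A (i + 1) ω * H (i + 1) ω ∂μ ≤ I + e * ∫ ω, A i ω ∂μ := by
      refine h1.trans (le_of_eq ?_)
      rw [h4, h2, h3]; ring
    have h7 : e * ∫ ω, A i ω ∂μ ≤ e / K * I := by
      rw [div_mul_eq_mul_div, le_div_iff₀ hK0]
      nlinarith
    have h8 := mul_le_mul_of_nonneg_right (Real.add_one_le_exp (e / K)) hI0
    linarith
  have hind : ∀ k, k ≤ n → ∫ ω, A k ω * H k ω ∂μ ≤ Real.exp ((∑ i ∈ Finset.range k, ∫ ω, d i ω ^ 2 ∂μ) / K) * (3 * K) := by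
    intro k
    induction k with
    | zero =>
      intro _
      simp only [Finset.range_zero, Finset.sum_empty, zero_div, Real.exp_zero, one_mul]
      have : ∫ ω, A 0 ω * H 0 ω ∂μ ≤ ∫ ω, 3 * K ∂μ := by
        refine integral_mono_ae (hAHi 0 0) (integrable_const _) ?_
        filter_upwards [hHb 0] with ω hω
        simp only [hA, Finset.range_zero, Finset.sum_empty, mul_zero, Real.exp_zero, one_mul]
        exact hω.2
      simpa using this
    | succ k ih =>
      intro hk
      refine (hstep k hk).trans ((mul_le_mul_of_nonneg_left (ih (by omega)) (Real.exp_pos _).le).trans (le_of_eq ?_))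
      rw [← mul_assoc, ← Real.exp_add, Finset.sum_range_succ, add_div, add_comm (_ / K)]
  refine ⟨hAi n, ?_⟩
  have h5 : K * ∫ ω, A n ω ∂μ ≤ ∫ ω, A n ω * H n ω ∂μ := by
    rw [← integral_const_mul]
    refine integral_mono_ae ((hAi n).const_mul K) (hAHi n n) ?_
    filter_upwards [hHb n] with ω hω
    rw [mul_comm]
    exact mul_le_mul_of_nonneg_left hω.1 (hA0 n ω).le
  have h6 := h5.trans (hind n le_rfl)
  rw [mul_comm K, ← mul_assoc, mul_comm _ (3 : ℝ)] at h6
  exact le_of_mul_le_mul_right h6 hK0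

lemma Mds.mgf [IsProbabilityMeasure μ] {n₀ : ℕ} {γ : ℝ} {m : ∀ j, Measure (𝒳 j)}
    (hd : Dob μ X κ n₀ γ m) (hm : Mds μ X d B) (K s θ : ℝ) (hK0 : 0 < K) (hK : 2 * (n₀ * B ^ 2 / γ) ≤ K)
    (hs1 : s * B ^ 2 ≤ 1) (hs2 : 6 * K * s ≤ 1) (hθ : 8 * θ ^ 2 ≤ s) (hθB : 2 * |θ| * B ≤ 1 / 2) (n : ℕ) :
    ∫ ω, Real.exp (θ * ∑ i ∈ Finset.range n, d i ω) ∂μ ≤ 2 * Real.exp ((∑ i ∈ Finset.range n, ∫ ω, d i ω ^ 2 ∂μ) / K) := by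
  have hX := hd.mc.meas
  obtain ⟨i1, b1⟩ := hm.expQ hd K s hK0 hK (le_trans (by positivity) hθ) hs1 hs2 n
  obtain ⟨i2, b2⟩ := hm.super hX (2 * θ) (by rw [abs_mul, abs_two]; exact hθB) n
  have h0 : (1 : ℝ) ≤ Real.exp ((∑ i ∈ Finset.range n, ∫ ω, d i ω ^ 2 ∂μ) / K) := by
    apply Real.one_le_exp
    exact div_nonneg (Finset.sum_nonneg fun i _ => integral_nonneg fun ω => sq_nonneg _) hK0.le
  have hpt : ∀ ω, Real.exp (θ * ∑ i ∈ Finset.range n, d i ω) ≤ (1 / 2) * (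
      Real.exp (2 * θ * ∑ i ∈ Finset.range n, d i ω - 2 * (2 * θ) ^ 2 * ∑ i ∈ Finset.range n, d i ω ^ 2) +
      Real.exp (s * ∑ i ∈ Finset.range n, d i ω ^ 2)) := by
    intro ω
    set M := ∑ i ∈ Finset.range n, d i ω
    set Q := ∑ i ∈ Finset.range n, d i ω ^ 2 with hQ
    have hQ0 : 0 ≤ Q := Finset.sum_nonneg fun i _ => sq_nonneg _
    have e1 : Real.exp (8 * θ ^ 2 * Q) ≤ Real.exp (s * Q) := Real.exp_le_exp.2 (mul_le_mul_of_nonneg_right hθ hQ0)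
    have e2 : Real.exp (θ * M) = Real.exp (θ * M - 4 * θ ^ 2 * Q) * Real.exp (4 * θ ^ 2 * Q) := by
      rw [← Real.exp_add]; ring_nf
    have e3 : Real.exp (2 * θ * M - 2 * (2 * θ) ^ 2 * Q) = Real.exp (θ * M - 4 * θ ^ 2 * Q) ^ 2 := by
      rw [← Real.exp_nat_mul]; push_cast; ring_nf
    have e4 : Real.exp (8 * θ ^ 2 * Q) = Real.exp (4 * θ ^ 2 * Q) ^ 2 := by
      rw [← Real.exp_nat_mul]; push_cast; ring_nf
    rw [e2, e3]
    nlinarith [sq_nonneg (Real.exp (θ * M - 4 * θ ^ 2 * Q) - Real.exp (4 * θ ^ 2 * Q))]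
  have h1 := integral_mono_of_nonneg (μ := μ) (Eventually.of_forall fun ω => (Real.exp_pos _).le)
    ((i2.add i1).const_mul (1 / 2)) (Eventually.of_forall hpt)
  refine h1.trans ?_
  rw [integral_const_mul, integral_add' i2 i1]
  linarith

end WCLT

end


section
namespace WCLT
variable {Ω : Type*} [mΩ : MeasurableSpace Ω] {𝒳 : ℕ → Type*} [∀ j, MeasurableSpace (𝒳 j)]
  {μ : Measure Ω} {X : ∀ j, Ω → 𝒳 j} {κ : ∀ j n, Kernel (𝒳 j) (𝒳 (j + n))}

lemma mgf_bound [IsProbabilityMeasure μ] {n₀ : ℕ} {γ : ℝ} {m : ∀ j, Measure (𝒳 j)}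
    (hd : Dob μ X κ n₀ γ m) (f : ∀ j, 𝒳 j → ℝ) (hf : ∀ j, Measurable (f j))
    (C : ℝ) (hC0 : 0 ≤ C) (hC : ∀ j x, |f j x| ≤ C) :
    ∃ δ K : ℝ, 0 < δ ∧ 0 < K ∧ (∀ z : ℂ, ‖z‖ < δ → ‖z‖ * (n₀ * C) ≤ γ / 12) ∧
      ∀ (n : ℕ) (b σ θ : ℝ), 1 ≤ σ → b = ∫ ω, ∑ l ∈ Finset.range n, f l (X l ω) ∂μ →
        ∫ ω, (∑ l ∈ Finset.range n, f l (X l ω) - b) ^ 2 ∂μ = σ ^ 2 → |θ| < δ →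
        ∫ ω, Real.exp (θ * (∑ l ∈ Finset.range n, f l (X l ω) - b)) ∂μ ≤ Real.exp (K * σ ^ 2) := by
  have hg := hd.gpos
  have hX := hd.mc.meas
  obtain ⟨B, hB⟩ : ∃ B, B = 2 * (n₀ * C / γ) := ⟨_, rfl⟩
  have hB0 : 0 ≤ B := by rw [hB]; positivity
  obtain ⟨K, hK⟩ : ∃ K, K = 2 * (n₀ * B ^ 2 / γ) + 1 := ⟨_, rfl⟩
  have hK0 : 0 < K := by rw [hK]; positivity
  obtain ⟨s, hs⟩ : ∃ s, s = 1 / (6 * K + B ^ 2 + 1) := ⟨_, rfl⟩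
  have hD : 0 < 6 * K + B ^ 2 + 1 := by positivity
  have hs0 : 0 < s := by rw [hs]; positivity
  have hsD : s * (6 * K + B ^ 2 + 1) = 1 := by rw [hs]; field_simp
  have hsK : 0 < s * K := mul_pos hs0 hK0
  have hsB : 0 ≤ s * B ^ 2 := by positivity
  obtain ⟨δ, hδ⟩ : ∃ δ, δ = min (γ / (12 * (n₀ * C + 1))) (min (1 / (4 * (B + 1))) (s / 8)) := ⟨_, rfl⟩
  have hd1 : δ ≤ γ / (12 * (n₀ * C + 1)) := by rw [hδ]; exact min_le_left _ _
  have hd2 : δ ≤ 1 / (4 * (B + 1)) := by rw [hδ]; exact (min_le_right _ _).trans (min_le_left _ _)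
  have hd3 : δ ≤ s / 8 := by rw [hδ]; exact (min_le_right _ _).trans (min_le_right _ _)
  have hδ0 : 0 < δ := by
    rw [hδ]; refine lt_min (by positivity) (lt_min (by positivity) (by positivity))
  refine ⟨δ, δ * B + 1 + 1 / K, hδ0, by positivity, ?_, ?_⟩
  · intro z hz
    have h1 := hz.le.trans hd1
    rw [le_div_iff₀ (by positivity)] at h1
    have := norm_nonneg z
    linarith
  · intro n b σ θ hσ hb hvar hθ
    obtain ⟨a, d, hm, ham, hab, hdec⟩ := mdecomp hd f hf C hC0 hC n
    rw [← hB] at hm hab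
    rw [← hb] at hdec
    have hQ := hm.sum_sq hX a B ham hab n
    have e1 : ∫ ω, (a ω + ∑ i ∈ Finset.range n, d i ω) ^ 2 ∂μ = σ ^ 2 := by
      rw [← hvar]
      refine integral_congr_ae ?_
      filter_upwards [hdec] with ω h
      rw [h]
    rw [e1] at hQ
    have hth0 := abs_nonneg θ
    have hmgf := hm.mgf hd K s θ hK0 (by rw [hK]; linarith) (by nlinarith) (by nlinarith)
      (by rw [← sq_abs]; nlinarith) (by
        have h1 := hθ.le.trans hd2
        rw [le_div_iff₀ (by positivity)] at h1
        nlinarith) n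
    have hint : Integrable (fun ω => Real.exp (δ * B) * Real.exp (θ * ∑ i ∈ Finset.range n, d i ω)) μ := by
      refine Integrable.const_mul (int_bdd ?_ (Real.exp (|θ| * (n * B))) (Eventually.of_forall fun ω => ?_)) _
      · exact Real.measurable_exp.comp ((Finset.measurable_fun_sum _ fun i _ => hm.meas hX i).const_mul _)
      · rw [Real.abs_exp]
        refine Real.exp_le_exp.2 ((le_abs_self _).trans ?_)
        rw [abs_mul]
        refine mul_le_mul_of_nonneg_left ((Finset.abs_sum_le_sum_abs _ _).trans ?_) (abs_nonneg _)
        exact (Finset.sum_le_sum fun i _ => hm.bd i ω).trans (by simp)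
    have h1 : ∫ ω, Real.exp (θ * (∑ l ∈ Finset.range n, f l (X l ω) - b)) ∂μ ≤
        ∫ ω, Real.exp (δ * B) * Real.exp (θ * ∑ i ∈ Finset.range n, d i ω) ∂μ := by
      refine integral_mono_of_nonneg (Eventually.of_forall fun ω => (Real.exp_pos _).le) hint ?_
      filter_upwards [hdec, hab] with ω h1 h2
      show Real.exp (θ * (∑ l ∈ Finset.range n, f l (X l ω) - b)) ≤ _
      rw [h1, mul_add, Real.exp_add]
      refine mul_le_mul_of_nonneg_right (Real.exp_le_exp.2 ((le_abs_self _).trans ?_)) (Real.exp_pos _).le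
      rw [abs_mul]
      exact mul_le_mul hθ.le h2 (abs_nonneg _) hδ0.le
    rw [integral_const_mul] at h1
    refine h1.trans ((mul_le_mul_of_nonneg_left hmgf (Real.exp_pos _).le).trans ?_)
    have h2 : (2 : ℝ) ≤ Real.exp 1 := by have := Real.add_one_le_exp (1 : ℝ); linarith
    calc Real.exp (δ * B) * (2 * Real.exp ((∑ i ∈ Finset.range n, ∫ ω, d i ω ^ 2 ∂μ) / K))
        ≤ Real.exp (δ * B) * (Real.exp 1 * Real.exp (σ ^ 2 / K)) := by gcongr
      _ = Real.exp (δ * B + 1 + σ ^ 2 / K) := by rw [← Real.exp_add, ← Real.exp_add]; ring_nf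
      _ ≤ _ := by
        refine Real.exp_le_exp.2 ?_
        have : (1 : ℝ) ≤ σ ^ 2 := one_le_pow₀ hσ
        have h3 : (δ * B + 1) * 1 ≤ (δ * B + 1) * σ ^ 2 := mul_le_mul_of_nonneg_left this (by positivity)
        rw [add_mul _ (1 / K), div_mul_eq_mul_div, one_mul]
        linarith

end WCLT

namespace WCLT
theorem main_thm {Ω : Type*} [MeasurableSpace Ω] {𝒳 : ℕ → Type*} [∀ j, MeasurableSpace (𝒳 j)]
    (μ : Measure Ω) [IsProbabilityMeasure μ]
    (X : ∀ j, Ω → 𝒳 j) (κ : ∀ j n, Kernel (𝒳 j) (𝒳 (j + n)))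
    (hMarkov : IsInhomMarkov μ X κ)
    (n₀ : ℕ) (hn₀ : 0 < n₀) (γ : ℝ) (hγ : γ ∈ Set.Ioo (0 : ℝ) 1)
    (m : ∀ j, Measure (𝒳 j)) (hm : ∀ j, IsProbabilityMeasure (m j))
    (hDoeblin : ∀ j (x : 𝒳 j) (Γ : Set (𝒳 (j + n₀))), MeasurableSet Γ →
      ENNReal.ofReal γ * m (j + n₀) Γ ≤ κ j n₀ x Γ)
    (f : ∀ j, 𝒳 j → ℝ) (hfmeas : ∀ j, Measurable (f j))
    (C : ℝ) (hbdd : ∀ j, ∀ᵐ ω ∂μ, |f j (X j ω)| ≤ C)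
    (S : ℕ → Ω → ℝ) (hS : ∀ n ω, S n ω = ∑ j ∈ Finset.range n, f j (X j ω))
    (σs : ℕ → ℝ) (hσ : ∀ n, σs n = Real.sqrt (variance (S n) μ))
    (hσ_top : Tendsto σs atTop atTop) :
    ∀ p : ℝ, 1 ≤ p → ∃ Cp : ℝ, 0 < Cp ∧ ∀ n : ℕ,
      wassersteinDist p
          (μ.map (fun ω => (S n ω - ∫ ω', S n ω' ∂μ) / σs n))
          (gaussianReal 0 1)
        ≤ ENNReal.ofReal Cp / ENNReal.ofReal (σs n) := by
  intro p hp
  have hd : Dob μ X κ n₀ γ m := ⟨hMarkov, hn₀, hγ.1, hγ.2, hm, hDoeblin⟩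
  have hX := hMarkov.meas
  set g : ∀ j, 𝒳 j → ℝ := fun j x => max (-|C|) (min |C| (f j x)) with hg
  have hgm : ∀ j, Measurable (g j) := fun j => measurable_const.max (measurable_const.min (hfmeas j))
  have hgC : ∀ j x, |g j x| ≤ |C| := fun j x =>
    abs_le.2 ⟨le_max_left _ _, max_le (by linarith [abs_nonneg C]) (min_le_left _ _)⟩
  have hfg : ∀ᵐ ω ∂μ, ∀ j, f j (X j ω) = g j (X j ω) := by
    filter_upwards [ae_all_iff.2 hbdd] with ω h j
    have h1 := abs_le.1 ((h j).trans (le_abs_self C))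
    simp only [hg]
    rw [min_eq_right h1.2, max_eq_right h1.1]
  have hSg : ∀ n, ∀ᵐ ω ∂μ, S n ω = ∑ l ∈ Finset.range n, g l (X l ω) := fun n => by
    filter_upwards [hfg] with ω h
    rw [hS]; exact Finset.sum_congr rfl fun l _ => h l
  have hSm : ∀ n, Measurable (S n) := fun n => by
    have : S n = fun ω => ∑ j ∈ Finset.range n, f j (X j ω) := funext (hS n)
    rw [this]
    exact Finset.measurable_fun_sum _ fun l _ => (hfmeas l).comp (hX l)
  have hSb : ∀ n, ∀ᵐ ω ∂μ, |S n ω| ≤ n * |C| := fun n => by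
    filter_upwards [hSg n] with ω h
    rw [h]
    exact (Finset.abs_sum_le_sum_abs _ _).trans ((Finset.sum_le_sum fun i _ => hgC i _).trans (by simp))
  have hSi : ∀ n, Integrable (S n) μ := fun n => int_bdd (hSm n) _ (hSb n)
  set E : ℕ → ℝ := fun n => ∫ ω', S n ω' ∂μ with hE
  have hEg : ∀ n, E n = ∫ ω, ∑ l ∈ Finset.range n, g l (X l ω) ∂μ := fun n => integral_congr_ae (hSg n)
  have hcb : ∀ n, ∀ᵐ ω ∂μ, |S n ω - E n| ≤ n * |C| + |E n| := fun n => by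
    filter_upwards [hSb n] with ω h
    exact (abs_sub _ _).trans (by linarith)
  have hσ0 : ∀ n, 0 ≤ σs n := fun n => by rw [hσ]; exact Real.sqrt_nonneg _
  have hvar : ∀ n, ∫ ω, (S n ω - E n) ^ 2 ∂μ = σs n ^ 2 := fun n => by
    rw [hσ, Real.sq_sqrt (variance_nonneg _ _), variance_eq_integral (hSm n).aemeasurable]
  obtain ⟨δ, K, hδ, hK, hz, hmgf⟩ := mgf_bound hd g hgm |C| (abs_nonneg C) hgC
  obtain ⟨C0, σ₀, hC0, hσ₀, H⟩ := part2 K δ p hK hδ hp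
  have hbig : ∀ n, σ₀ ≤ σs n → wassersteinDist p (μ.map (fun ω => (S n ω - E n) / σs n)) (gaussianReal 0 1)
      ≤ ENNReal.ofReal (C0 * (1 / σs n)) := by
    intro n hn
    refine H μ (fun ω => S n ω - E n) (n * |C| + |E n|) (σs n) ((hSm n).sub_const _) (hcb n) hn ?_ (hvar n) ?_ ?_
    · rw [integral_sub (hSi n) (integrable_const _)]; simp [hE]
    · intro z hzδ
      have := nonvanish hd g hgm |C| (abs_nonneg C) hgC z (hz z hzδ) n (E n)
      rw [integral_congr_ae (g := fun ω => Complex.exp (z * ((∑ l ∈ Finset.range n, g l (X l ω) - E n : ℝ) : ℂ)))]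
      · exact this
      · filter_upwards [hSg n] with ω h
        rw [h]
    · intro θ hθ
      have := hmgf n (E n) (σs n) θ (hσ₀.trans hn) (hEg n) (by
        rw [← hvar n]
        refine integral_congr_ae ?_
        filter_upwards [hSg n] with ω h
        rw [h]) hθ
      refine le_trans (le_of_eq (integral_congr_ae ?_)) this
      filter_upwards [hSg n] with ω h
      rw [h]
  obtain ⟨N, hN⟩ := (eventually_atTop.1 (hσ_top.eventually_ge_atTop σ₀))
  set W : ℕ → ℝ≥0∞ := fun n => wassersteinDist p (μ.map (fun ω => (S n ω - E n) / σs n)) (gaussianReal 0 1) with hW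
  have hsum : 0 ≤ ∑ n ∈ Finset.range N, (W n).toReal * σs n :=
    Finset.sum_nonneg fun n _ => mul_nonneg ENNReal.toReal_nonneg (hσ0 n)
  refine ⟨C0 + ∑ n ∈ Finset.range N, (W n).toReal * σs n, by linarith, fun n => ?_⟩
  show W n ≤ _
  rcases (hσ0 n).eq_or_lt with h0 | h0
  · rw [← h0, ENNReal.ofReal_zero, ENNReal.div_zero]
    · exact le_top
    · simp only [ne_eq, ENNReal.ofReal_eq_zero, not_le]; linarith
  rw [← ENNReal.ofReal_div_of_pos h0]
  by_cases hn : σ₀ ≤ σs n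
  · refine (hbig n hn).trans (ENNReal.ofReal_le_ofReal ?_)
    rw [mul_one_div]
    exact div_le_div_of_nonneg_right (by linarith) h0.le
  · have hnN : n < N := by
      by_contra h
      exact hn (hN n (not_lt.1 h))
    have hfin : W n < ⊤ := by
      refine wd_finite p hp μ (fun ω => (S n ω - E n) / σs n) ((n * |C| + |E n|) / σs n) (((hSm n).sub_const _).div_const _) ?_
      filter_upwards [hcb n] with ω h
      rw [abs_div, abs_of_pos h0]
      exact div_le_div_of_nonneg_right h h0.le
    rw [← ENNReal.ofReal_toReal hfin.ne]
    refine ENNReal.ofReal_le_ofReal ?_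
    rw [le_div_iff₀ h0]
    have := Finset.single_le_sum (f := fun n => (W n).toReal * σs n)
      (fun i _ => mul_nonneg ENNReal.toReal_nonneg (hσ0 i)) (Finset.mem_range.2 hnN)
    linarith

end WCLT

end

/-- **Theorem (Wasserstein CLT rates, Doeblin case).**
If `σ_n → ∞` then for every `1 ≤ p < ∞` one has `W_p(dF_n, dΦ) = O(σ_n⁻¹)`, where `dF_n`
is the law of `(S_n − E[S_n])/σ_n` and `dΦ` is the standard normal law. -/
theorem wasserstein_CLT_rate_doeblin
    (μ : Measure Ω) [IsProbabilityMeasure μ]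
    (X : ∀ j, Ω → 𝒳 j) (κ : ∀ j n, Kernel (𝒳 j) (𝒳 (j + n)))
    (hMarkov : IsInhomMarkov μ X κ)
    (n₀ : ℕ) (hn₀ : 0 < n₀) (γ : ℝ) (hγ : γ ∈ Set.Ioo (0 : ℝ) 1)
    (m : ∀ j, Measure (𝒳 j)) (hm : ∀ j, IsProbabilityMeasure (m j))
    (hDoeblin : ∀ j (x : 𝒳 j) (Γ : Set (𝒳 (j + n₀))), MeasurableSet Γ →
      ENNReal.ofReal γ * m (j + n₀) Γ ≤ κ j n₀ x Γ)
    (f : ∀ j, 𝒳 j → ℝ) (hfmeas : ∀ j, Measurable (f j))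
    (C : ℝ) (hbdd : ∀ j, ∀ᵐ ω ∂μ, |f j (X j ω)| ≤ C)
    (S : ℕ → Ω → ℝ) (hS : ∀ n ω, S n ω = ∑ j ∈ Finset.range n, f j (X j ω))
    (σs : ℕ → ℝ) (hσ : ∀ n, σs n = Real.sqrt (variance (S n) μ))
    (hσ_top : Tendsto σs atTop atTop) :
    ∀ p : ℝ, 1 ≤ p → ∃ Cp : ℝ, 0 < Cp ∧ ∀ n : ℕ,
      wassersteinDist p
          (μ.map (fun ω => (S n ω - ∫ ω', S n ω' ∂μ) / σs n))
          (gaussianReal 0 1)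
        ≤ ENNReal.ofReal Cp / ENNReal.ofReal (σs n) := by
  exact WCLT.main_thm μ X κ hMarkov n₀ hn₀ γ hγ m hm hDoeblin f hfmeas C hbdd S hS σs hσ hσ_top

end
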